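/- Let f be the bilinear RFIF from the bilinear RFIF setup, with scaling factors steady and having uniform sums {γ_rt} under a compatible partition B={B_r}_{r=1}^m, and suppose the matrix G=(γ_rt) is irreducible. Then: (1) if {1,...,m} is non-degenerate and ρ(G)>K, the box dimension of Γf exists and equals 1 + log ρ(G)/log K; (2) otherwise, the box dimension of Γf exists and equals 2. -/

import Mathlib

/- Bilinear recurrent fractal interpolation surfaces on [0,1]² (Liang–Ruan,
   "Construction and box dimension of recurrent fractal interpolation surfaces"). -/

noncomputable section
open Set Filter

namespace RFIS

/-- The grid point `x_i = i / N` (also used for `y_j = j / N`). -/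
def xg (N i : ℕ) : ℝ := (i : ℝ) / (N : ℝ)

/-- The interval `I_i = [x_{i-1}, x_i]` (also `J_j`). -/
def Ii (N i : ℕ) : Set ℝ := Icc (xg N (i - 1)) (xg N i)

/-- The unit square `[0,1]²`. -/
def sq : Set (ℝ × ℝ) := Icc (0 : ℝ) 1 ×ˢ Icc (0 : ℝ) 1

/-- The cell `D_{ij} = I_i × J_j`. -/
def Dij (N i j : ℕ) : Set (ℝ × ℝ) := Ii N i ×ˢ Ii N j

/-- The point `x'_i = x_{px i}` chosen from the grid. -/
def xp (N : ℕ) (px : ℕ → ℕ) (i : ℕ) : ℝ := xg N (px i)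

/-- The interval `I'_i`, with endpoints `x'_{i-1}` and `x'_i`. -/
def Ii' (N : ℕ) (px : ℕ → ℕ) (i : ℕ) : Set ℝ := uIcc (xp N px (i - 1)) (xp N px i)

/-- The domain `D'_{ij} = I'_i × J'_j`. -/
def Dij' (N : ℕ) (px py : ℕ → ℕ) (i j : ℕ) : Set (ℝ × ℝ) := Ii' N px i ×ˢ Ii' N py j

/-- The affine map `u_i : I'_i → I_i` with `u_i(x'_{i-1}) = x_{i-1}` and `u_i(x'_i) = x_i`
(also used for `v_j`). -/
def usub (N : ℕ) (px : ℕ → ℕ) (i : ℕ) (t : ℝ) : ℝ :=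
  xg N (i - 1) + (t - xp N px (i - 1)) * ((xg N i - xg N (i - 1)) / (xp N px i - xp N px (i - 1)))

/-- `F` is bilinear on `E`: of the form `a + b x + c y + d x y` on `E`. -/
def IsBilinearOn (F : ℝ × ℝ → ℝ) (E : Set (ℝ × ℝ)) : Prop :=
  ∃ a b c d : ℝ, ∀ p ∈ E, F p = a + b * p.1 + c * p.2 + d * p.1 * p.2

/-- The bilinear RFIF setup on `[0,1]²`: data `z_{ij}` on the uniform `N × N` grid
(`M = N`, `x_i = y_i = i/N`), vertical scaling factors `s_{ij}` with `|s_{ij}| < 1`,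
the points `x'_i = x_{px i}`, `y'_j = y_{py j}` with `|I'_i| = K |I_i|`, `|J'_j| = K |J_j|`
and the domains `D'_{ij}` pairwise equal or with disjoint interiors; the functions `S`, `h`
bilinear on each cell with the prescribed grid values, the bilinear functions `g_{ij}` with
corner values `z'`, and the bilinear RFIF `f`: the continuous function interpolating the
data and satisfying `f(u_i x, v_j y) = S(u_i x, v_j y)(f(x,y) − g_{ij}(x,y)) + h(u_i x, v_j y)`
on each `D'_{ij}`. -/
structure Setup where
  N : ℕ
  K : ℕ
  hN : 2 ≤ N
  hK : 2 ≤ K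
  px : ℕ → ℕ
  py : ℕ → ℕ
  hpx : ∀ i ≤ N, px i ≤ N
  hpy : ∀ j ≤ N, py j ≤ N
  hKx : ∀ i, 1 ≤ i → i ≤ N → |xp N px i - xp N px (i - 1)| = (K : ℝ) * (xg N i - xg N (i - 1))
  hKy : ∀ j, 1 ≤ j → j ≤ N → |xp N py j - xp N py (j - 1)| = (K : ℝ) * (xg N j - xg N (j - 1))
  hdisj : ∀ i₁ j₁ i₂ j₂, 1 ≤ i₁ → i₁ ≤ N → 1 ≤ j₁ → j₁ ≤ N → 1 ≤ i₂ → i₂ ≤ N → 1 ≤ j₂ → j₂ ≤ N →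
    Dij' N px py i₁ j₁ = Dij' N px py i₂ j₂ ∨
      interior (Dij' N px py i₁ j₁) ∩ interior (Dij' N px py i₂ j₂) = ∅
  z : ℕ → ℕ → ℝ
  s : ℕ → ℕ → ℝ
  hs : ∀ i ≤ N, ∀ j ≤ N, |s i j| < 1
  S : ℝ × ℝ → ℝ
  hScont : ContinuousOn S sq
  hSbil : ∀ i j, 1 ≤ i → i ≤ N → 1 ≤ j → j ≤ N → IsBilinearOn S (Dij N i j)
  hSval : ∀ i ≤ N, ∀ j ≤ N, S (xg N i, xg N j) = s i j
  h : ℝ × ℝ → ℝ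
  hhcont : ContinuousOn h sq
  hhbil : ∀ i j, 1 ≤ i → i ≤ N → 1 ≤ j → j ≤ N → IsBilinearOn h (Dij N i j)
  hhval : ∀ i ≤ N, ∀ j ≤ N, h (xg N i, xg N j) = z i j
  g : ℕ → ℕ → ℝ × ℝ → ℝ
  hgbil : ∀ i j, 1 ≤ i → i ≤ N → 1 ≤ j → j ≤ N → IsBilinearOn (g i j) (Dij' N px py i j)
  hgval : ∀ i j, 1 ≤ i → i ≤ N → 1 ≤ j → j ≤ N →
    ∀ k ∈ ({i - 1, i} : Set ℕ), ∀ l ∈ ({j - 1, j} : Set ℕ),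
      g i j (xp N px k, xp N py l) = z (px k) (py l)
  f : ℝ × ℝ → ℝ
  hfcont : ContinuousOn f sq
  hfval : ∀ i ≤ N, ∀ j ≤ N, f (xg N i, xg N j) = z i j
  hfeq : ∀ i j, 1 ≤ i → i ≤ N → 1 ≤ j → j ≤ N → ∀ p ∈ Dij' N px py i j,
    f (usub N px i p.1, usub N py j p.2)
      = S (usub N px i p.1, usub N py j p.2) * (f p - g i j p)
        + h (usub N px i p.1, usub N py j p.2)

/-- The oscillation `O(f, E) = sup {f(x') − f(x'') : x', x'' ∈ E}`. -/
def Osc (f : ℝ × ℝ → ℝ) (E : Set (ℝ × ℝ)) : ℝ :=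
  sSup {d : ℝ | ∃ p ∈ E, ∃ q ∈ E, d = f p - f q}

/-- The dyadic-type square `Dⁿ_{kl} = [(k-1)/(KⁿN), k/(KⁿN)] × [(l-1)/(KⁿN), l/(KⁿN)]`. -/
def Dn (N K n k l : ℕ) : Set (ℝ × ℝ) :=
  Icc (((k : ℝ) - 1) / ((K : ℝ) ^ n * (N : ℝ))) ((k : ℝ) / ((K : ℝ) ^ n * (N : ℝ))) ×ˢ
    Icc (((l : ℝ) - 1) / ((K : ℝ) ^ n * (N : ℝ))) ((l : ℝ) / ((K : ℝ) ^ n * (N : ℝ)))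

open Classical in
/-- `O(f, n, U) = Σ { O(f, Dⁿ_{kl}) : Dⁿ_{kl} ⊆ U }`. -/
def OscSum (f : ℝ × ℝ → ℝ) (N K n : ℕ) (U : Set (ℝ × ℝ)) : ℝ :=
  ∑ k ∈ Finset.Icc 1 (K ^ n * N), ∑ l ∈ Finset.Icc 1 (K ^ n * N),
    if Dn N K n k l ⊆ U then Osc f (Dn N K n k l) else 0

/-- The `ε`-coordinate cube `∏_{i=1}^3 [k_i ε, (k_i+1) ε]` in `ℝ³`. -/
def cube (ε : ℝ) (k : ℤ × ℤ × ℤ) : Set (ℝ × ℝ × ℝ) :=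
  Icc ((k.1 : ℝ) * ε) (((k.1 : ℝ) + 1) * ε) ×ˢ
    Icc ((k.2.1 : ℝ) * ε) (((k.2.1 : ℝ) + 1) * ε) ×ˢ
      Icc ((k.2.2 : ℝ) * ε) (((k.2.2 : ℝ) + 1) * ε)

/-- `N_E(ε)`: the number of `ε`-coordinate cubes intersecting `E`. -/
def Ncubes (E : Set (ℝ × ℝ × ℝ)) (ε : ℝ) : ℕ :=
  {k : ℤ × ℤ × ℤ | (cube ε k ∩ E).Nonempty}.ncard

/-- `log N_E(ε) / log (1/ε)`. -/
def boxRatio (E : Set (ℝ × ℝ × ℝ)) (ε : ℝ) : ℝ :=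
  Real.log (Ncubes E ε) / Real.log (1 / ε)

/-- The upper box dimension `lim sup_{ε→0+} log N_E(ε) / log (1/ε)`. -/
def upperBoxDim (E : Set (ℝ × ℝ × ℝ)) : ℝ :=
  limsup (boxRatio E) (nhdsWithin 0 (Ioi 0))

/-- The lower box dimension `lim inf_{ε→0+} log N_E(ε) / log (1/ε)`. -/
def lowerBoxDim (E : Set (ℝ × ℝ × ℝ)) : ℝ :=
  liminf (boxRatio E) (nhdsWithin 0 (Ioi 0))

/-- The box dimension of `E` exists and equals `d`. -/
def HasBoxDim (E : Set (ℝ × ℝ × ℝ)) (d : ℝ) : Prop :=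
  Tendsto (boxRatio E) (nhdsWithin 0 (Ioi 0)) (nhds d)

/-- The graph `Γ f|_E = {(x, y, f(x,y)) : (x,y) ∈ E}`. -/
def graphOn (f : ℝ × ℝ → ℝ) (E : Set (ℝ × ℝ)) : Set (ℝ × ℝ × ℝ) :=
  (fun p : ℝ × ℝ => (p.1, p.2, f p)) '' E

/-- `B` is a partition of `[0,1]²`: nonempty sets covering `[0,1]²` with pairwise
disjoint interiors. -/
def IsPartition (m : ℕ) (B : Fin m → Set (ℝ × ℝ)) : Prop :=
  (∀ r, (B r).Nonempty) ∧ (⋃ r, B r) = sq ∧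
    ∀ r t, r ≠ t → interior (B r) ∩ interior (B t) = ∅

/-- The partition `B` is compatible with `{D_{ij}, D'_{ij}}`: every `D_{ij}` lies in some
`B_r` and every `D'_{ij}` in some `B_t`; and whenever some `(i,j)` has `D_{ij} ⊆ B_r` and
`D'_{ij} ⊆ B_t`, then `B_t = ⋃ {D'_{kl} : D_{kl} ⊆ B_r, D'_{kl} ⊆ B_t}`. -/
def IsCompatible (st : Setup) {m : ℕ} (B : Fin m → Set (ℝ × ℝ)) : Prop :=
  (∀ i j, 1 ≤ i → i ≤ st.N → 1 ≤ j → j ≤ st.N →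
    (∃ r, Dij st.N i j ⊆ B r) ∧ (∃ t, Dij' st.N st.px st.py i j ⊆ B t)) ∧
  (∀ r t : Fin m,
    (∃ i j, 1 ≤ i ∧ i ≤ st.N ∧ 1 ≤ j ∧ j ≤ st.N ∧
      Dij st.N i j ⊆ B r ∧ Dij' st.N st.px st.py i j ⊆ B t) →
    B t = ⋃ (k : ℕ) (l : ℕ)
      (_ : 1 ≤ k ∧ k ≤ st.N ∧ 1 ≤ l ∧ l ≤ st.N ∧
        Dij st.N k l ⊆ B r ∧ Dij' st.N st.px st.py k l ⊆ B t),
      Dij' st.N st.px st.py k l)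

/-- The index set `Σ_N × Σ_N = {1,…,N}²`. -/
def idxS (N : ℕ) : Finset (ℕ × ℕ) := Finset.Icc 1 N ×ˢ Finset.Icc 1 N

open Classical in
/-- `Λ_r = {(i,j) : D_{ij} ⊆ B_r}`. -/
def Lam (st : Setup) {m : ℕ} (B : Fin m → Set (ℝ × ℝ)) (r : Fin m) : Finset (ℕ × ℕ) :=
  (idxS st.N).filter fun ij => Dij st.N ij.1 ij.2 ⊆ B r

open Classical in
/-- `Λ'_t = {(i,j) : D'_{ij} ⊆ B_t}`. -/
def Lam' (st : Setup) {m : ℕ} (B : Fin m → Set (ℝ × ℝ)) (t : Fin m) : Finset (ℕ × ℕ) :=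
  (idxS st.N).filter fun ij => Dij' st.N st.px st.py ij.1 ij.2 ⊆ B t

/-- The rectangle `[x_α, x_{α+K}] × [y_β, y_{β+K}]`. -/
def rect (N K α β : ℕ) : Set (ℝ × ℝ) :=
  Icc (xg N α) (xg N (α + K)) ×ˢ Icc (xg N β) (xg N (β + K))

open Classical in
/-- `Λ_r(α,β) = {(i,j) ∈ Λ_r : D'_{ij} = [x_α, x_{α+K}] × [y_β, y_{β+K}]}`. -/
def LamAB (st : Setup) {m : ℕ} (B : Fin m → Set (ℝ × ℝ)) (r : Fin m) (α β : ℕ) :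
    Finset (ℕ × ℕ) :=
  (Lam st B r).filter fun ij => Dij' st.N st.px st.py ij.1 ij.2 = rect st.N st.K α β

/-- The vertical scaling factors are steady: for each cell, the four corner factors are
all nonnegative or all nonpositive. -/
def Steady (st : Setup) : Prop :=
  ∀ i j, 1 ≤ i → i ≤ st.N → 1 ≤ j → j ≤ st.N →
    (0 ≤ st.s (i - 1) (j - 1) ∧ 0 ≤ st.s (i - 1) j ∧ 0 ≤ st.s i (j - 1) ∧ 0 ≤ st.s i j) ∨
    (st.s (i - 1) (j - 1) ≤ 0 ∧ st.s (i - 1) j ≤ 0 ∧ st.s i (j - 1) ≤ 0 ∧ st.s i j ≤ 0)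

/-- The sum `Σ_{(i,j) ∈ Λ_r(α,β)} |S(u_i(x_a), v_j(y_b))|`. -/
def cSum (st : Setup) {m : ℕ} (B : Fin m → Set (ℝ × ℝ)) (r : Fin m) (α β a b : ℕ) : ℝ :=
  ∑ ij ∈ LamAB st B r α β,
    |st.S (usub st.N st.px ij.1 (xg st.N a), usub st.N st.py ij.2 (xg st.N b))|

/-- The vertical scaling factors have uniform sums `γ_{rt}` under the partition `B`:
whenever `Λ_r ∩ Λ'_t ≠ ∅` and `[x_α, x_{α+K}] × [y_β, y_{β+K}] ∈ {D'_{ij} : (i,j) ∈ Λ_r ∩ Λ'_t}`,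
the four corner sums `Σ_{(i,j) ∈ Λ_r(α,β)} |S(u_i(x_a), v_j(y_b))|`,
`(a,b) ∈ {α, α+K} × {β, β+K}`, all equal `γ_{rt}`. -/
def HasUniformSums (st : Setup) {m : ℕ} (B : Fin m → Set (ℝ × ℝ))
    (γ : Fin m → Fin m → ℝ) : Prop :=
  ∀ r t : Fin m, (Lam st B r ∩ Lam' st B t).Nonempty →
    ∀ α β : ℕ, α + st.K ≤ st.N → β + st.K ≤ st.N →
      (∃ ij ∈ Lam st B r ∩ Lam' st B t,
        Dij' st.N st.px st.py ij.1 ij.2 = rect st.N st.K α β) →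
      cSum st B r α β α β = γ r t ∧ cSum st B r α β (α + st.K) β = γ r t ∧
      cSum st B r α β α (β + st.K) = γ r t ∧ cSum st B r α β (α + st.K) (β + st.K) = γ r t

/-- `γ_{rt} = 0` whenever `Λ_r ∩ Λ'_t = ∅`. -/
def GammaZero (st : Setup) {m : ℕ} (B : Fin m → Set (ℝ × ℝ))
    (γ : Fin m → Fin m → ℝ) : Prop :=
  ∀ r t : Fin m, Lam st B r ∩ Lam' st B t = ∅ → γ r t = 0

/-- There is an `n`-path (for some `n ≥ 1`) from `t` to `r` in the matrix `γ`:
a sequence `i_0 = t, …, i_n = r` with `γ_{i_k, i_{k-1}} > 0` for `k = 1, …, n`. -/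
def IsPathFrom {m : ℕ} (γ : Fin m → Fin m → ℝ) (t r : Fin m) : Prop :=
  ∃ n : ℕ, 1 ≤ n ∧ ∃ c : ℕ → Fin m, c 0 = t ∧ c n = r ∧
    ∀ k, 1 ≤ k → k ≤ n → 0 < γ (c k) (c (k - 1))

/-- `r ∼ t`: there are paths both from `r` to `t` and from `t` to `r`. -/
def Conn {m : ℕ} (γ : Fin m → Fin m → ℝ) (r t : Fin m) : Prop :=
  IsPathFrom γ r t ∧ IsPathFrom γ t r

/-- A connected subset: `r ∼ t` for all `r, t ∈ V`. -/
def IsConnSet {m : ℕ} (γ : Fin m → Fin m → ℝ) (V : Finset (Fin m)) : Prop :=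
  ∀ r ∈ V, ∀ t ∈ V, Conn γ r t

/-- A connected component: a maximal (nonempty) connected subset. -/
def IsConnComp {m : ℕ} (γ : Fin m → Fin m → ℝ) (V : Finset (Fin m)) : Prop :=
  V.Nonempty ∧ IsConnSet γ V ∧ ∀ W : Finset (Fin m), IsConnSet γ W → V ⊆ W → W = V

/-- The spectral radius of a real square matrix: the largest modulus of a (complex)
eigenvalue. -/
def specRad {n : Type*} [Fintype n] [DecidableEq n] (A : Matrix n n ℝ) : ℝ :=
  sSup {x : ℝ | ∃ μ ∈ spectrum ℂ (A.map (algebraMap ℝ ℂ)), x = ‖μ‖}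

/-- The submatrix `G|_V` of `G = (γ_{rt})` indexed by a subset `V`. -/
def subMat {m : ℕ} (γ : Fin m → Fin m → ℝ) (V : Finset (Fin m)) :
    Matrix {x // x ∈ V} {x // x ∈ V} ℝ :=
  fun a b => γ a.1 b.1

/-- `(k,l)` is an ancestor of `(i,j)`: there is a chain `(i,j) = (i_0,j_0), …, (i_n,j_n) = (k,l)`
in `Σ_N × Σ_N` with `D_{i_τ j_τ} ⊆ D'_{i_{τ-1} j_{τ-1}}` for all `τ`. -/
def Ancestor (st : Setup) (i j k l : ℕ) : Prop :=
  ∃ n : ℕ, 1 ≤ n ∧ ∃ c : ℕ → ℕ × ℕ,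
    c 0 = (i, j) ∧ c n = (k, l) ∧
    (∀ τ ≤ n, 1 ≤ (c τ).1 ∧ (c τ).1 ≤ st.N ∧ 1 ≤ (c τ).2 ∧ (c τ).2 ≤ st.N) ∧
    ∀ τ, 1 ≤ τ → τ ≤ n →
      Dij st.N (c τ).1 (c τ).2 ⊆ Dij' st.N st.px st.py (c (τ - 1)).1 (c (τ - 1)).2

/-- `A(i,j) = {(i,j)} ∪ {ancestors of (i,j)}`. -/
def AncSet (st : Setup) (i j : ℕ) : Set (ℕ × ℕ) :=
  {(i, j)} ∪ {kl | Ancestor st i j kl.1 kl.2}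

/-- The pair `(i,j)` is degenerate: every `(k,l) ∈ A(i,j)` has all four vertical scaling
corner factors zero, or `z_{pq} = g_{kl}(x_p, y_q)` for all grid points `(x_p, y_q) ∈ D'_{kl}`. -/
def DegenPair (st : Setup) (i j : ℕ) : Prop :=
  ∀ kl ∈ AncSet st i j,
    (st.s (kl.1 - 1) (kl.2 - 1) = 0 ∧ st.s (kl.1 - 1) kl.2 = 0 ∧
      st.s kl.1 (kl.2 - 1) = 0 ∧ st.s kl.1 kl.2 = 0) ∨
    (∀ p ≤ st.N, ∀ q ≤ st.N, (xg st.N p, xg st.N q) ∈ Dij' st.N st.px st.py kl.1 kl.2 →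
      st.z p q = st.g kl.1 kl.2 (xg st.N p, xg st.N q))

/-- The index `r` is degenerate: every `(i,j) ∈ Λ_r` is degenerate. -/
def DegenIdx (st : Setup) {m : ℕ} (B : Fin m → Set (ℝ × ℝ)) (r : Fin m) : Prop :=
  ∀ ij ∈ Lam st B r, DegenPair st ij.1 ij.2

/-- A set `V` of indices is degenerate: every `r ∈ V` is degenerate. -/
def DegenComp (st : Setup) {m : ℕ} (B : Fin m → Set (ℝ × ℝ)) (V : Finset (Fin m)) : Prop :=
  ∀ r ∈ V, DegenIdx st B r

end RFIS

namespace RFIS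

/-! ### One-dimensional facts -/

/-- the level-`n` one-dimensional cell (0-based index). -/
def c1 (N K n a : ℕ) : Set ℝ :=
  Icc ((a : ℝ) / ((K : ℝ) ^ n * N)) (((a : ℝ) + 1) / ((K : ℝ) ^ n * N))

/-- the level-`n` two-dimensional cell (0-based indices). -/
def cell (N K n a b : ℕ) : Set (ℝ × ℝ) := c1 N K n a ×ˢ c1 N K n b

/-- the left endpoint index of `I'_{i+1}`. -/
def al (p : ℕ → ℕ) (i : ℕ) : ℕ := min (p i) (p (i + 1))

/-- level-`0` cell `c` lies in `I'_{i+1}`. -/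
def Inn (K : ℕ) (p : ℕ → ℕ) (i c : ℕ) : Prop := al p i ≤ c ∧ c < al p i + K

instance (K : ℕ) (p : ℕ → ℕ) (i c : ℕ) : Decidable (Inn K p i c) := by
  unfold Inn; infer_instance

/-- index of the image of a level-`n` cell. -/
def kap (K : ℕ) (p : ℕ → ℕ) (n i a : ℕ) : ℕ :=
  if p i ≤ p (i + 1) then i * K ^ (n + 1) + (a - al p i * K ^ n)
  else i * K ^ (n + 1) + (K ^ (n + 1) - 1 - (a - al p i * K ^ n))

/-- one-dimensional hypotheses. -/
structure H1 (N K : ℕ) (p : ℕ → ℕ) : Prop where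
  hN : 0 < N
  hK : 2 ≤ K
  hp : ∀ i ≤ N, p i ≤ N
  hs : ∀ i < N, p (i + 1) = p i + K ∨ p i = p (i + 1) + K

theorem H1.mk' {N K : ℕ} {p : ℕ → ℕ} (hN : 2 ≤ N) (hK : 2 ≤ K) (hp : ∀ i ≤ N, p i ≤ N)
    (h : ∀ i, 1 ≤ i → i ≤ N → |xp N p i - xp N p (i - 1)| = (K : ℝ) * (xg N i - xg N (i - 1))) :
    H1 N K p := by
  refine ⟨by omega, hK, hp, fun i hi => ?_⟩
  have := h (i + 1) (by omega) (by omega)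
  have hN' : (0 : ℝ) < N := by exact_mod_cast (by omega : 0 < N)
  simp only [Nat.add_sub_cancel, xp, xg] at this
  rw [← sub_div, ← sub_div, abs_div, abs_of_pos hN', ← mul_div_assoc,
    div_left_inj' hN'.ne'] at this
  push_cast at this
  have h2 : |(p (i + 1) : ℝ) - p i| = K := by rw [this]; ring
  rcases abs_eq (by positivity : (0 : ℝ) ≤ K) |>.1 h2 with h3 | h3
  · left
    have : (p (i + 1) : ℝ) = p i + K := by linarith
    exact_mod_cast this
  · right
    have : (p i : ℝ) = p (i + 1) + K := by linarith
    exact_mod_cast this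

section oneD
variable {N K : ℕ} {p : ℕ → ℕ}

theorem H1.alK (H : H1 N K p) {i : ℕ} (hi : i < N) : al p i + K ≤ N := by
  have := H.hs i hi
  have h1 := H.hp i hi.le
  have h2 := H.hp (i + 1) hi
  unfold al; omega

theorem H1.Npos (H : H1 N K p) : (0 : ℝ) < N := by exact_mod_cast H.hN
theorem H1.Kpos (H : H1 N K p) : (0 : ℝ) < K := by
  have := H.hK; exact_mod_cast (by omega : 0 < K)
theorem H1.Dpos (H : H1 N K p) (n : ℕ) : (0 : ℝ) < (K : ℝ) ^ n * N :=
  mul_pos (pow_pos H.Kpos n) H.Npos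

theorem usub_lerp (N : ℕ) (p : ℕ → ℕ) (i : ℕ) (x y s : ℝ) :
    usub N p i (x + s * (y - x)) = usub N p i x + s * (usub N p i y - usub N p i x) := by
  unfold usub; ring

theorem H1.usub_eq (H : H1 N K p) {i : ℕ} (hi : i < N) (t : ℝ) :
    usub N p (i + 1) t = if p i ≤ p (i + 1) then (i : ℝ) / N + (t - al p i / N) / K
      else ((i : ℝ) + 1) / N - (t - al p i / N) / K := by
  have hN := H.Npos
  have hK := H.Kpos
  have hK2 := H.hK
  simp only [usub, xp, xg, Nat.add_sub_cancel]
  rcases H.hs i hi with h | h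
  · have h1 : al p i = p i := by unfold al; omega
    rw [if_pos (by omega), h1, h]
    push_cast
    have : ((p i : ℝ) + K) / N - p i / N = K / N := by ring
    rw [this]; field_simp; ring
  · have h1 : al p i = p (i + 1) := by unfold al; omega
    rw [if_neg (by omega), h1, h]
    push_cast
    have : (p (i + 1) : ℝ) / N - (p (i + 1) + K) / N = - (K / N) := by ring
    rw [this]; field_simp; ring

theorem H1.Inn_iff (H : H1 N K p) {i n a : ℕ} :
    Inn K p i (a / K ^ n) ↔ al p i * K ^ n ≤ a ∧ a < al p i * K ^ n + K ^ (n + 1) := by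
  have hK := H.hK
  have : 0 < K ^ n := by positivity
  unfold Inn
  rw [Nat.le_div_iff_mul_le this, Nat.div_lt_iff_lt_mul this, pow_succ]
  rw [show al p i * K ^ n + K ^ n * K = (al p i + K) * K ^ n by ring]

theorem H1.kap_lt (H : H1 N K p) {i n a : ℕ} (h : Inn K p i (a / K ^ n)) :
    i * K ^ (n + 1) ≤ kap K p n i a ∧ kap K p n i a < (i + 1) * K ^ (n + 1) := by
  rw [H.Inn_iff] at h
  have hK := H.hK
  have : 0 < K ^ (n + 1) := by positivity
  unfold kap
  rw [add_mul, one_mul]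
  split_ifs <;> omega

theorem H1.kap_div (H : H1 N K p) {i n a : ℕ} (h : Inn K p i (a / K ^ n)) :
    kap K p n i a / K ^ (n + 1) = i := by
  have := H.kap_lt h
  exact Nat.div_eq_of_lt_le (by omega) (by simpa using this.2)

/-- endpoints of cells are mapped to endpoints of cells. -/
theorem H1.usub_end (H : H1 N K p) {i n a : ℕ} (hi : i < N) (h : Inn K p i (a / K ^ n)) :
    (usub N p (i + 1) ((a : ℝ) / ((K : ℝ) ^ n * N)) =
        (kap K p n i a : ℝ) / ((K : ℝ) ^ (n + 1) * N) ∧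
      usub N p (i + 1) (((a : ℝ) + 1) / ((K : ℝ) ^ n * N)) =
        ((kap K p n i a : ℝ) + 1) / ((K : ℝ) ^ (n + 1) * N)) ∨
    (usub N p (i + 1) ((a : ℝ) / ((K : ℝ) ^ n * N)) =
        ((kap K p n i a : ℝ) + 1) / ((K : ℝ) ^ (n + 1) * N) ∧
      usub N p (i + 1) (((a : ℝ) + 1) / ((K : ℝ) ^ n * N)) =
        (kap K p n i a : ℝ) / ((K : ℝ) ^ (n + 1) * N)) := by
  have hN := H.Npos
  have hK := H.Kpos
  rw [H.Inn_iff] at h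
  rw [H.usub_eq hi, H.usub_eq hi]
  by_cases hc : p i ≤ p (i + 1)
  · left
    have : (kap K p n i a : ℝ) = i * K ^ (n + 1) + (a - al p i * K ^ n) := by
      rw [kap, if_pos hc]
      push_cast [Nat.cast_sub h.1]; ring
    rw [if_pos hc, if_pos hc, this]
    constructor
    · field_simp; ring
    · field_simp; ring
  · right
    have : (kap K p n i a : ℝ) = i * K ^ (n + 1) + (K ^ (n + 1) - 1 - (a - al p i * K ^ n)) := by
      rw [kap, if_neg hc]
      have h1 : 1 ≤ K ^ (n + 1) := Nat.one_le_pow _ _ (by have := H.hK; omega)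
      rw [Nat.cast_add, Nat.cast_sub (by omega), Nat.cast_sub h1, Nat.cast_sub h.1]
      push_cast; ring
    rw [if_neg hc, if_neg hc, this]
    constructor
    · field_simp; ring
    · field_simp; ring

theorem mem_Icc_lerp {x y q : ℝ} (hxy : x ≤ y) (hq : q ∈ Icc x y) :
    ∃ s ∈ Icc (0 : ℝ) 1, q = x + s * (y - x) := by
  rcases hxy.eq_or_lt with rfl | h
  · exact ⟨0, by simp, by have := hq.1; have := hq.2; simp; linarith⟩
  · have h' : 0 < y - x := by linarith
    refine ⟨(q - x) / (y - x), ⟨div_nonneg (by linarith [hq.1]) h'.le, ?_⟩, ?_⟩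
    · rw [div_le_one h']; linarith [hq.2]
    · field_simp; ring

theorem lerp_mem_Icc {x y s : ℝ} (hxy : x ≤ y) (hs : s ∈ Icc (0 : ℝ) 1) :
    x + s * (y - x) ∈ Icc x y := by
  constructor
  · nlinarith [hs.1]
  · nlinarith [hs.2]

theorem c1_le (H : H1 N K p) (n a : ℕ) :
    (a : ℝ) / ((K : ℝ) ^ n * N) ≤ ((a : ℝ) + 1) / ((K : ℝ) ^ n * N) := by
  have := H.Dpos n
  gcongr; linarith

theorem H1.usub_surj (H : H1 N K p) {i n a : ℕ} (hi : i < N) (h : Inn K p i (a / K ^ n))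
    {q : ℝ} (hq : q ∈ c1 N K (n + 1) (kap K p n i a)) :
    ∃ x ∈ c1 N K n a, usub N p (i + 1) x = q := by
  obtain ⟨s, hs, rfl⟩ := mem_Icc_lerp (c1_le H _ _) hq
  rcases H.usub_end hi h with ⟨h1, h2⟩ | ⟨h1, h2⟩
  · refine ⟨_, lerp_mem_Icc (c1_le H n a) hs, ?_⟩
    rw [usub_lerp, h1, h2]
  · refine ⟨_, lerp_mem_Icc (s := 1 - s) (c1_le H n a) ⟨by linarith [hs.2], by linarith [hs.1]⟩, ?_⟩
    rw [usub_lerp, h1, h2]; ring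

theorem H1.usub_maps (H : H1 N K p) {i n a : ℕ} (hi : i < N) (h : Inn K p i (a / K ^ n))
    {x : ℝ} (hx : x ∈ c1 N K n a) :
    usub N p (i + 1) x ∈ c1 N K (n + 1) (kap K p n i a) := by
  obtain ⟨s, hs, rfl⟩ := mem_Icc_lerp (c1_le H _ _) hx
  rw [usub_lerp]
  rcases H.usub_end hi h with ⟨h1, h2⟩ | ⟨h1, h2⟩
  · rw [h1, h2]
    exact lerp_mem_Icc (c1_le H _ _) hs
  · rw [h1, h2]
    have := lerp_mem_Icc (s := 1 - s) (c1_le H (n + 1) (kap K p n i a))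
      ⟨by linarith [hs.2], by linarith [hs.1]⟩
    unfold c1
    convert this using 1; ring

/-- a level-`n` cell lies in its level-`0` parent -/
theorem c1_subset_parent (H : H1 N K p) (n a : ℕ) : c1 N K n a ⊆ c1 N K 0 (a / K ^ n) := by
  have hN := H.Npos
  have hK := H.Kpos
  have hK2 := H.hK
  have hp : 0 < K ^ n := by positivity
  have h1 : a / K ^ n * K ^ n ≤ a := Nat.div_mul_le_self _ _
  have h2 : a + 1 ≤ (a / K ^ n + 1) * K ^ n := by
    have := Nat.lt_div_mul_add hp (a := a)
    rw [add_mul, one_mul]; omega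
  have h1' : ((a / K ^ n : ℕ) : ℝ) * (K : ℝ) ^ n ≤ a := by exact_mod_cast h1
  have h2' : (a : ℝ) + 1 ≤ (((a / K ^ n : ℕ) : ℝ) + 1) * (K : ℝ) ^ n := by exact_mod_cast h2
  apply Icc_subset_Icc
  · rw [pow_zero, one_mul, div_le_div_iff₀ hN (H.Dpos n)]
    nlinarith
  · rw [pow_zero, one_mul, div_le_div_iff₀ (H.Dpos n) hN]
    nlinarith

theorem c1_zero_eq (N K i : ℕ) : c1 N K 0 i = Ii N (i + 1) := by
  simp [c1, Ii, xg]

/-- `I'_{i+1}` as an interval. -/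
theorem H1.Ii'_eq (H : H1 N K p) {i : ℕ} (hi : i < N) :
    Ii' N p (i + 1) = Icc (xg N (al p i)) (xg N (al p i + K)) := by
  have hN := H.Npos
  simp only [Ii', xp, Nat.add_sub_cancel]
  rcases H.hs i hi with h | h
  · have h1 : al p i = p i := by unfold al; omega
    rw [h1, h, uIcc_of_le]
    unfold xg; push_cast; gcongr; linarith [H.Kpos]
  · have h1 : al p i = p (i + 1) := by unfold al; omega
    rw [h1, h, uIcc_of_ge]
    unfold xg; push_cast; gcongr; linarith [H.Kpos]

theorem c1_zero_subset (H : H1 N K p) {i c : ℕ} (hi : i < N) (h : Inn K p i c) :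
    c1 N K 0 c ⊆ Ii' N p (i + 1) := by
  have hN := H.Npos
  rw [H.Ii'_eq hi]
  have h1 : (al p i : ℝ) ≤ c := by exact_mod_cast h.1
  have h2 : (c : ℝ) + 1 ≤ al p i + K := by exact_mod_cast h.2
  apply Icc_subset_Icc
  · unfold xg; simp only [pow_zero, one_mul]; gcongr
  · unfold xg; simp only [pow_zero, one_mul]; push_cast; gcongr

/-- midpoint of a level-0 cell -/
def mid (N c : ℕ) : ℝ := ((c : ℝ) + 1 / 2) / N

theorem mid_iff (H : H1 N K p) {c a b : ℕ} :
    mid N c ∈ Icc (xg N a) (xg N b) ↔ a ≤ c ∧ c < b := by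
  have hN := H.Npos
  simp only [mid, xg, mem_Icc, div_le_div_iff_of_pos_right hN]
  constructor
  · rintro ⟨h1, h2⟩
    constructor
    · have : (a : ℝ) < c + 1 := by linarith
      have : a < c + 1 := by exact_mod_cast this
      omega
    · have : (c : ℝ) < b := by linarith
      exact_mod_cast this
  · rintro ⟨h1, h2⟩
    have h1 : (a : ℝ) ≤ c := by exact_mod_cast h1
    have h2 : (c : ℝ) + 1 ≤ b := by exact_mod_cast h2
    constructor <;> linarith

theorem mid_iff_Ioo (H : H1 N K p) {c a b : ℕ} :
    mid N c ∈ Ioo (xg N a) (xg N b) ↔ a ≤ c ∧ c < b := by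
  have hN := H.Npos
  constructor
  · intro h
    exact (mid_iff H).1 (Ioo_subset_Icc_self h)
  · rintro ⟨h1, h2⟩
    simp only [mid, xg, mem_Ioo, div_lt_div_iff_of_pos_right hN]
    have h1 : (a : ℝ) ≤ c := by exact_mod_cast h1
    have h2 : (c : ℝ) + 1 ≤ b := by exact_mod_cast h2
    constructor <;> linarith

theorem sum_range_mul_aux (A Bn : ℕ) (F : ℕ → ℝ) :
    ∑ a ∈ Finset.range (A * Bn), F a =
      ∑ i ∈ Finset.range A, ∑ x ∈ Finset.range Bn, F (i * Bn + x) := by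
  induction A with
  | zero => simp
  | succ A ih =>
    rw [add_mul, one_mul, Finset.sum_range_add, ih, Finset.sum_range_succ]

theorem H1.sum_eq (H : H1 N K p) (n : ℕ) (F : ℕ → ℕ → ℝ) :
    ∑ a ∈ Finset.range (K ^ (n + 1) * N), F a (a / K ^ (n + 1)) =
      ∑ i ∈ Finset.range N, ∑ a ∈ Finset.range (K ^ n * N),
        if Inn K p i (a / K ^ n) then F (kap K p n i a) i else 0 := by
  have hK := H.hK
  have hpos : 0 < K ^ (n + 1) := by positivity
  rw [mul_comm, sum_range_mul_aux]
  refine Finset.sum_congr rfl fun i hi => ?_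
  rw [Finset.mem_range] at hi
  have hal := H.alK hi
  have hle : al p i * K ^ n + K ^ (n + 1) ≤ K ^ n * N := by
    calc al p i * K ^ n + K ^ (n + 1) = K ^ n * (al p i + K) := by ring
      _ ≤ _ := Nat.mul_le_mul_left _ hal
  rw [← Finset.sum_filter]
  have hd : ∀ x < K ^ (n + 1), (i * K ^ (n + 1) + x) / K ^ (n + 1) = i := fun x hx => by
    rw [mul_comm, Nat.mul_add_div hpos, Nat.div_eq_of_lt hx, add_zero]
  have hf : ∀ a, a ∈ (Finset.range (K ^ n * N)).filter (fun a => Inn K p i (a / K ^ n)) ↔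
      al p i * K ^ n ≤ a ∧ a < al p i * K ^ n + K ^ (n + 1) := by
    intro a
    rw [Finset.mem_filter, Finset.mem_range, H.Inn_iff]
    constructor
    · exact fun h => h.2
    · exact fun h => ⟨by omega, h⟩
  by_cases hc : p i ≤ p (i + 1)
  · refine Finset.sum_nbij' (fun x => al p i * K ^ n + x) (fun a => a - al p i * K ^ n)
      ?_ ?_ ?_ ?_ ?_
    · intro x hx; rw [Finset.mem_range] at hx; rw [hf]; omega
    · intro a ha; rw [hf] at ha; rw [Finset.mem_range]; omega
    · intro x hx; simp
    · intro a ha; rw [hf] at ha; show _ + (_ - _) = _; omega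
    · intro x hx
      rw [Finset.mem_range] at hx
      rw [hd x hx, kap, if_pos hc]; simp
  · refine Finset.sum_nbij' (fun x => al p i * K ^ n + (K ^ (n + 1) - 1 - x))
      (fun a => K ^ (n + 1) - 1 - (a - al p i * K ^ n)) ?_ ?_ ?_ ?_ ?_
    · intro x hx; rw [Finset.mem_range] at hx; rw [hf]; omega
    · intro a ha; rw [hf] at ha; rw [Finset.mem_range]; omega
    · intro x hx; rw [Finset.mem_range] at hx
      show _ - 1 - (_ + _ - _) = _
      omega
    · intro a ha; rw [hf] at ha
      show _ + (_ - 1 - (_ - 1 - (_ - _))) = _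
      omega
    · intro x hx
      rw [Finset.mem_range] at hx
      rw [hd x hx, kap, if_neg hc]
      congr 2
      omega
end oneD

/-! ### Bilinear functions -/

/-- blend of the four corner values -/
def bl (F : ℝ × ℝ → ℝ) (x0 x1 y0 y1 s t : ℝ) : ℝ :=
  (1 - s) * (1 - t) * F (x0, y0) + s * (1 - t) * F (x1, y0) + (1 - s) * t * F (x0, y1)
    + s * t * F (x1, y1)

theorem bil_blend {F : ℝ × ℝ → ℝ} {X Y : Set ℝ} (hF : IsBilinearOn F (X ×ˢ Y))
    {x0 x1 y0 y1 s t : ℝ} (hx0 : x0 ∈ X) (hx1 : x1 ∈ X) (hy0 : y0 ∈ Y) (hy1 : y1 ∈ Y)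
    (hx : x0 + s * (x1 - x0) ∈ X) (hy : y0 + t * (y1 - y0) ∈ Y) :
    F (x0 + s * (x1 - x0), y0 + t * (y1 - y0)) = bl F x0 x1 y0 y1 s t := by
  obtain ⟨a, b, c, d, h⟩ := hF
  unfold bl
  rw [h _ ⟨hx, hy⟩, h _ ⟨hx0, hy0⟩, h _ ⟨hx1, hy0⟩, h _ ⟨hx0, hy1⟩, h _ ⟨hx1, hy1⟩]
  ring

theorem bl_nonneg {F : ℝ × ℝ → ℝ} {x0 x1 y0 y1 s t : ℝ} (hs : s ∈ Icc (0 : ℝ) 1)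
    (ht : t ∈ Icc (0 : ℝ) 1) (h1 : 0 ≤ F (x0, y0)) (h2 : 0 ≤ F (x1, y0)) (h3 : 0 ≤ F (x0, y1))
    (h4 : 0 ≤ F (x1, y1)) : 0 ≤ bl F x0 x1 y0 y1 s t := by
  have := hs.1
  have := ht.1
  have : 0 ≤ 1 - s := by linarith [hs.2]
  have : 0 ≤ 1 - t := by linarith [ht.2]
  unfold bl; positivity

theorem bil_lip {F : ℝ × ℝ → ℝ} {E : Set (ℝ × ℝ)} (hF : IsBilinearOn F E) (hE : E ⊆ sq) :
    ∃ L : ℝ, 0 ≤ L ∧ ∀ p ∈ E, ∀ q ∈ E, ∀ δ : ℝ, |p.1 - q.1| ≤ δ → |p.2 - q.2| ≤ δ →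
      |F p - F q| ≤ L * δ := by
  obtain ⟨a, b, c, d, h⟩ := hF
  refine ⟨|b| + |c| + 2 * |d|, by positivity, fun p hp q hq δ h1 h2 => ?_⟩
  rw [h p hp, h q hq]
  have hp1 := hE hp
  have hq1 := hE hq
  have e : a + b * p.1 + c * p.2 + d * p.1 * p.2 - (a + b * q.1 + c * q.2 + d * q.1 * q.2) =
    b * (p.1 - q.1) + c * (p.2 - q.2) + d * ((p.1 - q.1) * p.2 + q.1 * (p.2 - q.2)) := by ring
  rw [e]
  have a1 : |p.2| ≤ 1 := abs_le.2 ⟨by linarith [hp1.2.1], hp1.2.2⟩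
  have a2 : |q.1| ≤ 1 := abs_le.2 ⟨by linarith [hq1.1.1], hq1.1.2⟩
  have hδ : 0 ≤ δ := (abs_nonneg _).trans h1
  have e3 : |(p.1 - q.1) * p.2 + q.1 * (p.2 - q.2)| ≤ 2 * δ := by
    refine (abs_add_le _ _).trans ?_
    rw [abs_mul, abs_mul]
    nlinarith [mul_le_mul h1 a1 (abs_nonneg _) hδ, mul_le_mul a2 h2 (abs_nonneg _) zero_le_one]
  calc _ ≤ |b * (p.1 - q.1)| + |c * (p.2 - q.2)|
        + |d * ((p.1 - q.1) * p.2 + q.1 * (p.2 - q.2))| :=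
        (abs_add_le _ _).trans (add_le_add (abs_add_le _ _) le_rfl)
    _ ≤ |b| * δ + |c| * δ + |d| * (2 * δ) := by
        rw [abs_mul, abs_mul, abs_mul]; gcongr
    _ = _ := by ring

/-! ### Basic facts on the setup -/

theorem Setup.Hx (st : Setup) : H1 st.N st.K st.px := H1.mk' st.hN st.hK st.hpx st.hKx
theorem Setup.Hy (st : Setup) : H1 st.N st.K st.py := H1.mk' st.hN st.hK st.hpy st.hKy

/-- the map `(u_{i+1}, v_{j+1})`. -/
def Setup.U (st : Setup) (i j : ℕ) (p : ℝ × ℝ) : ℝ × ℝ :=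
  (usub st.N st.px (i + 1) p.1, usub st.N st.py (j + 1) p.2)

/-- 0-based `D`. -/
def Setup.D (st : Setup) (i j : ℕ) : Set (ℝ × ℝ) := Dij st.N (i + 1) (j + 1)
/-- 0-based `D'`. -/
def Setup.D' (st : Setup) (i j : ℕ) : Set (ℝ × ℝ) := Dij' st.N st.px st.py (i + 1) (j + 1)

theorem Setup.D_eq (st : Setup) (i j : ℕ) : st.D i j = cell st.N st.K 0 i j := by
  simp [Setup.D, Dij, cell, c1_zero_eq]

theorem H1.xg_le {N K : ℕ} {p : ℕ → ℕ} (H : H1 N K p) {a b : ℕ} (h : a ≤ b) :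
    xg N a ≤ xg N b := by
  have := H.Npos
  unfold xg; gcongr

theorem H1.xg_lt {N K : ℕ} {p : ℕ → ℕ} (H : H1 N K p) {a b : ℕ} (h : a < b) :
    xg N a < xg N b := by
  have := H.Npos
  unfold xg; gcongr

theorem H1.xg_mem {N K : ℕ} {p : ℕ → ℕ} (H : H1 N K p) {a : ℕ} (h : a ≤ N) :
    xg N a ∈ Icc (0 : ℝ) 1 := by
  have := H.Npos
  unfold xg
  refine ⟨by positivity, ?_⟩
  rw [div_le_one this]; exact_mod_cast h

theorem H1.usub_Ii {N K : ℕ} {p : ℕ → ℕ} (H : H1 N K p) {i : ℕ} (hi : i < N) {x : ℝ}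
    (hx : x ∈ Ii' N p (i + 1)) : usub N p (i + 1) x ∈ Ii N (i + 1) := by
  have hN := H.Npos
  have hK := H.Kpos
  rw [H.Ii'_eq hi] at hx
  have h1 : 0 ≤ (x - al p i / N) / K := div_nonneg (by have := hx.1; unfold xg at this; linarith) hK.le
  have h2 : (x - al p i / N) / K ≤ 1 / N := by
    have := hx.2
    unfold xg at this
    push_cast at this
    rw [div_le_iff₀ hK]
    have e : 1 / (N : ℝ) * K = (al p i + K) / N - al p i / N := by ring
    rw [e]; linarith
  rw [H.usub_eq hi]
  simp only [Ii, xg, Nat.add_sub_cancel, mem_Icc]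
  push_cast
  have e : ((i : ℝ) + 1) / N = i / N + 1 / N := by ring
  rw [e]
  split_ifs
  · constructor <;> linarith
  · constructor <;> linarith

section
variable (st : Setup)

theorem Setup.U_mem {i j : ℕ} (hi : i < st.N) (hj : j < st.N) {p : ℝ × ℝ} (hp : p ∈ st.D' i j) :
    st.U i j p ∈ st.D i j :=
  ⟨st.Hx.usub_Ii hi hp.1, st.Hy.usub_Ii hj hp.2⟩

theorem Setup.D'_eq {i j : ℕ} (hi : i < st.N) (hj : j < st.N) :
    st.D' i j = rect st.N st.K (al st.px i) (al st.py j) := by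
  simp only [Setup.D', Dij', rect, st.Hx.Ii'_eq hi, st.Hy.Ii'_eq hj]

theorem Setup.D_sub_sq {i j : ℕ} (hi : i < st.N) (hj : j < st.N) : st.D i j ⊆ sq := by
  have h := st.Hx
  refine prod_mono (Icc_subset_Icc ?_ ?_) (Icc_subset_Icc ?_ ?_)
  · exact (h.xg_mem (by omega)).1
  · exact (h.xg_mem (by omega)).2
  · exact (h.xg_mem (by omega)).1
  · exact (h.xg_mem (by omega)).2

theorem Setup.D'_sub_sq {i j : ℕ} (hi : i < st.N) (hj : j < st.N) : st.D' i j ⊆ sq := by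
  rw [st.D'_eq hi hj]
  have h := st.Hx
  have h1 := st.Hx.alK hi
  have h2 := st.Hy.alK hj
  refine prod_mono (Icc_subset_Icc ?_ ?_) (Icc_subset_Icc ?_ ?_)
  · exact (h.xg_mem (by omega)).1
  · exact (h.xg_mem (by omega)).2
  · exact (h.xg_mem (by omega)).1
  · exact (h.xg_mem (by omega)).2

/-- points of `D` via the blend -/
theorem Setup.D_blend {F : ℝ × ℝ → ℝ} {i j : ℕ} 
    (hF : IsBilinearOn F (st.D i j)) {q : ℝ × ℝ} (hq : q ∈ st.D i j) :
    ∃ s ∈ Icc (0 : ℝ) 1, ∃ t ∈ Icc (0 : ℝ) 1,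
      q = (xg st.N i + s * (xg st.N (i + 1) - xg st.N i),
        xg st.N j + t * (xg st.N (j + 1) - xg st.N j)) ∧
      F q = bl F (xg st.N i) (xg st.N (i + 1)) (xg st.N j) (xg st.N (j + 1)) s t := by
  have hx := st.Hx.xg_le (Nat.le_add_right i 1)
  have hy := st.Hx.xg_le (Nat.le_add_right j 1)
  obtain ⟨s, hs, e1⟩ := mem_Icc_lerp hx hq.1
  obtain ⟨t, ht, e2⟩ := mem_Icc_lerp hy hq.2
  have e : q = (xg st.N i + s * (xg st.N (i + 1) - xg st.N i),
        xg st.N j + t * (xg st.N (j + 1) - xg st.N j)) := Prod.ext e1 e2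
  refine ⟨s, hs, t, ht, e, ?_⟩
  rw [e]
  exact bil_blend hF (left_mem_Icc.2 hx) (right_mem_Icc.2 hx) (left_mem_Icc.2 hy)
    (right_mem_Icc.2 hy) (lerp_mem_Icc hx hs) (lerp_mem_Icc hy ht)

theorem Setup.hSbil' {i j : ℕ} (hi : i < st.N) (hj : j < st.N) : IsBilinearOn st.S (st.D i j) :=
  st.hSbil _ _ (by omega) (by omega) (by omega) (by omega)
theorem Setup.hhbil' {i j : ℕ} (hi : i < st.N) (hj : j < st.N) : IsBilinearOn st.h (st.D i j) :=
  st.hhbil _ _ (by omega) (by omega) (by omega) (by omega)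

/-- sign of `S` on a cell. -/
theorem Setup.sign (hst : Steady st) {i j : ℕ} (hi : i < st.N) (hj : j < st.N) :
    ∃ σ : ℝ, |σ| = 1 ∧ ∀ q ∈ st.D i j, |st.S q| = σ * st.S q := by
  have hc := hst (i + 1) (j + 1) (by omega) (by omega) (by omega) (by omega)
  simp only [Nat.add_sub_cancel] at hc
  have v1 := st.hSval i (by omega) j (by omega)
  have v2 := st.hSval (i + 1) (by omega) j (by omega)
  have v3 := st.hSval i (by omega) (j + 1) (by omega)
  have v4 := st.hSval (i + 1) (by omega) (j + 1) (by omega)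
  rcases hc with ⟨h1, h2, h3, h4⟩ | ⟨h1, h2, h3, h4⟩
  · refine ⟨1, by simp, fun q hq => ?_⟩
    obtain ⟨s, hs, t, ht, -, e⟩ := st.D_blend (st.hSbil' hi hj) hq
    rw [abs_of_nonneg, one_mul]
    rw [e]
    apply bl_nonneg hs ht <;> simp [*]
  · refine ⟨-1, by simp, fun q hq => ?_⟩
    obtain ⟨s, hs, t, ht, -, e⟩ := st.D_blend (st.hSbil' hi hj) hq
    rw [abs_of_nonpos, neg_one_mul]
    rw [e]
    have := bl_nonneg (F := fun p => - st.S p) (x0 := xg st.N i) (x1 := xg st.N (i + 1))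
      (y0 := xg st.N j) (y1 := xg st.N (j + 1)) hs ht (by simp [*]) (by simp [*]) (by simp [*])
      (by simp [*])
    unfold bl at this ⊢
    linarith

theorem Setup.S_lt_one {q : ℝ × ℝ} {i j : ℕ} (hi : i < st.N) (hj : j < st.N) (hq : q ∈ st.D i j) :
    |st.S q| < 1 := by
  have v1 := st.hSval i (by omega) j (by omega)
  have v2 := st.hSval (i + 1) (by omega) j (by omega)
  have v3 := st.hSval i (by omega) (j + 1) (by omega)
  have v4 := st.hSval (i + 1) (by omega) (j + 1) (by omega)
  have w1 := abs_lt.1 (st.hs i (by omega) j (by omega))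
  have w2 := abs_lt.1 (st.hs (i + 1) (by omega) j (by omega))
  have w3 := abs_lt.1 (st.hs i (by omega) (j + 1) (by omega))
  have w4 := abs_lt.1 (st.hs (i + 1) (by omega) (j + 1) (by omega))
  obtain ⟨s, hs, t, ht, -, e⟩ := st.D_blend (st.hSbil' hi hj) hq
  unfold bl at e
  rw [v1, v2, v3, v4] at e
  have hs1 : 0 ≤ s := hs.1
  have hs2 : 0 ≤ 1 - s := by linarith [hs.2]
  have ht1 : 0 ≤ t := ht.1
  have ht2 : 0 ≤ 1 - t := by linarith [ht.2]
  have p1 := mul_nonneg hs2 ht2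
  have p2 := mul_nonneg hs1 ht2
  have p3 := mul_nonneg hs2 ht1
  have p4 := mul_nonneg hs1 ht1
  have hsum : (1 - s) * (1 - t) + s * (1 - t) + (1 - s) * t + s * t = 1 := by ring
  generalize (1 - s) * (1 - t) = a1 at *
  generalize s * (1 - t) = a2 at *
  generalize (1 - s) * t = a3 at *
  generalize s * t = a4 at *
  obtain ⟨M, hM, m1, m2, m3, m4⟩ : ∃ M < 1, |st.s i j| ≤ M ∧ |st.s (i + 1) j| ≤ M ∧
      |st.s i (j + 1)| ≤ M ∧ |st.s (i + 1) (j + 1)| ≤ M := by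
    refine ⟨max (max |st.s i j| |st.s (i + 1) j|) (max |st.s i (j + 1)| |st.s (i + 1) (j + 1)|),
      ?_, ?_, ?_, ?_, ?_⟩
    · simp only [max_lt_iff, abs_lt]; exact ⟨⟨w1, w2⟩, w3, w4⟩
    all_goals simp
  rw [e]
  refine lt_of_le_of_lt ?_ hM
  rw [abs_le] at m1 m2 m3 m4 ⊢
  constructor
  · calc -M = -M * (a1 + a2 + a3 + a4) := by rw [hsum]; ring
      _ = a1 * -M + a2 * -M + a3 * -M + a4 * -M := by ring
      _ ≤ _ := by gcongr <;> [exact m1.1; exact m2.1; exact m3.1; exact m4.1]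
  · calc _ ≤ a1 * M + a2 * M + a3 * M + a4 * M := by
          gcongr <;> [exact m1.2; exact m2.2; exact m3.2; exact m4.2]
      _ = M * (a1 + a2 + a3 + a4) := by ring
      _ = M := by rw [hsum, mul_one]

/-! ### classes of cells and the key sum -/

/-- `cl` gives the class of each level-0 cell. -/
def IsCl {m : ℕ} (B : Fin m → Set (ℝ × ℝ)) (cl : ℕ → ℕ → Fin m) : Prop :=
  ∀ i < st.N, ∀ j < st.N, ∀ r, st.D i j ⊆ B r ↔ cl i j = r

theorem mid_mem_interior {a b c d i j : ℕ} (h1 : a ≤ i ∧ i < b) (h2 : c ≤ j ∧ j < d) :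
    (mid st.N i, mid st.N j) ∈
      interior (Icc (xg st.N a) (xg st.N b) ×ˢ Icc (xg st.N c) (xg st.N d)) := by
  rw [interior_prod_eq, interior_Icc, interior_Icc]
  exact ⟨(mid_iff_Ioo st.Hx).2 h1, (mid_iff_Ioo st.Hx).2 h2⟩

theorem mid_mem_interior_D (i j : ℕ) :
    (mid st.N i, mid st.N j) ∈ interior (st.D i j) := by
  exact mid_mem_interior st (by omega) (by omega)

theorem exists_cl {m : ℕ} {B : Fin m → Set (ℝ × ℝ)} (hpart : IsPartition m B)
    (hcomp : IsCompatible st B) : ∃ cl, IsCl st B cl := by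
  have hm : Nonempty (Fin m) := by
    obtain ⟨⟨r, -⟩, -⟩ := hcomp.1 1 1 le_rfl (by have := st.hN; omega) le_rfl
      (by have := st.hN; omega)
    exact ⟨r⟩
  have : ∀ i j, ∃ r, i < st.N → j < st.N → st.D i j ⊆ B r := by
    intro i j
    by_cases h : i < st.N ∧ j < st.N
    · obtain ⟨⟨r, hr⟩, -⟩ := hcomp.1 (i + 1) (j + 1) (by omega) (by omega) (by omega) (by omega)
      exact ⟨r, fun _ _ => hr⟩
    · exact ⟨hm.some, fun h1 h2 => absurd ⟨h1, h2⟩ h⟩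
  choose cl hcl using this
  refine ⟨cl, fun i hi j hj r => ⟨fun h => ?_, fun h => h ▸ hcl i j hi hj⟩⟩
  by_contra hne
  have := hpart.2.2 _ _ hne
  have h1 := interior_mono (hcl i j hi hj) (mid_mem_interior_D st i j)
  have h2 := interior_mono h (mid_mem_interior_D st i j)
  exact (Set.eq_empty_iff_forall_notMem.1 this _) ⟨h1, h2⟩

theorem Inn_iff_mid {i j c d : ℕ} (hi : i < st.N) (hj : j < st.N) :
    (mid st.N c, mid st.N d) ∈ st.D' i j ↔ Inn st.K st.px i c ∧ Inn st.K st.py j d := by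
  rw [st.D'_eq hi hj, rect, mem_prod]
  simp only
  rw [mid_iff st.Hx, mid_iff st.Hx]; rfl

theorem Inn_D'_eq {i j i' j' c d : ℕ} (hi : i < st.N) (hj : j < st.N) (hi' : i' < st.N)
    (hj' : j' < st.N) (h1 : Inn st.K st.px i c) (h2 : Inn st.K st.py j d)
    (h1' : Inn st.K st.px i' c) (h2' : Inn st.K st.py j' d) : st.D' i j = st.D' i' j' := by
  rcases st.hdisj (i + 1) (j + 1) (i' + 1) (j' + 1) (by omega) (by omega) (by omega) (by omega)
    (by omega) (by omega) (by omega) (by omega) with h | h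
  · exact h
  · exfalso
    have a1 : (mid st.N c, mid st.N d) ∈ interior (st.D' i j) := by
      rw [st.D'_eq hi hj]; exact mid_mem_interior st h1 h2
    have a2 : (mid st.N c, mid st.N d) ∈ interior (st.D' i' j') := by
      rw [st.D'_eq hi' hj']; exact mid_mem_interior st h1' h2'
    exact (Set.eq_empty_iff_forall_notMem.1 h _) ⟨a1, a2⟩

theorem cell_sub_D' {i j c d : ℕ} (hi : i < st.N) (hj : j < st.N)
    (h1 : Inn st.K st.px i c) (h2 : Inn st.K st.py j d) : cell st.N st.K 0 c d ⊆ st.D' i j :=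
  prod_mono (c1_zero_subset st.Hx hi h1) (c1_zero_subset st.Hy hj h2)

theorem mem_Lam {m : ℕ} {B : Fin m → Set (ℝ × ℝ)} {r : Fin m} {i j : ℕ} :
    (i + 1, j + 1) ∈ Lam st B r ↔ (i < st.N ∧ j < st.N) ∧ st.D i j ⊆ B r := by
  simp only [Lam, idxS, Finset.mem_filter, Finset.mem_product, Finset.mem_Icc, Setup.D]
  refine and_congr_left' ?_
  omega

theorem mem_Lam' {m : ℕ} {B : Fin m → Set (ℝ × ℝ)} {r : Fin m} {i j : ℕ} :
    (i + 1, j + 1) ∈ Lam' st B r ↔ (i < st.N ∧ j < st.N) ∧ st.D' i j ⊆ B r := by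
  simp only [Lam', idxS, Finset.mem_filter, Finset.mem_product, Finset.mem_Icc, Setup.D']
  refine and_congr_left' ?_
  omega

theorem Lam_pos {m : ℕ} {B : Fin m → Set (ℝ × ℝ)} {r : Fin m} {ij : ℕ × ℕ}
    (h : ij ∈ Lam st B r) : ∃ i j, ij = (i + 1, j + 1) := by
  simp only [Lam, idxS, Finset.mem_filter, Finset.mem_product, Finset.mem_Icc] at h
  exact ⟨ij.1 - 1, ij.2 - 1, by ext <;> simp <;> omega⟩

/-- the sum over `Λ_r(α,β)` at a point of the rectangle -/
theorem LamAB_sum {m : ℕ} {B : Fin m → Set (ℝ × ℝ)} {γ : Fin m → Fin m → ℝ}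
    (hst : Steady st) (hus : HasUniformSums st B γ) {r t : Fin m} {k l : ℕ} (hk : k < st.N)
    (hl : l < st.N) (hm : (k + 1, l + 1) ∈ Lam st B r ∩ Lam' st B t)
    {p : ℝ × ℝ} (hp : p ∈ st.D' k l) :
    ∑ ij ∈ LamAB st B r (al st.px k) (al st.py l),
      |st.S (usub st.N st.px ij.1 p.1, usub st.N st.py ij.2 p.2)| = γ r t := by
  obtain ⟨g1, g2, g3, g4⟩ := hus r t ⟨_, hm⟩ (al st.px k) (al st.py l) (st.Hx.alK hk)
    (st.Hy.alK hl) ⟨_, hm, st.D'_eq hk hl⟩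
  rw [st.D'_eq hk hl] at hp
  have hx := st.Hx.xg_le (Nat.le_add_right (al st.px k) st.K)
  have hy := st.Hx.xg_le (Nat.le_add_right (al st.py l) st.K)
  obtain ⟨s, hs, e1⟩ := mem_Icc_lerp hx hp.1
  obtain ⟨t', ht, e2⟩ := mem_Icc_lerp hy hp.2
  have key : ∀ ij ∈ LamAB st B r (al st.px k) (al st.py l),
      |st.S (usub st.N st.px ij.1 p.1, usub st.N st.py ij.2 p.2)| =
      bl (fun p => |st.S (usub st.N st.px ij.1 p.1, usub st.N st.py ij.2 p.2)|)
        (xg st.N (al st.px k)) (xg st.N (al st.px k + st.K))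
        (xg st.N (al st.py l)) (xg st.N (al st.py l + st.K)) s t' := by
    intro ij hij
    simp only [LamAB, Finset.mem_filter] at hij
    obtain ⟨hij, hD⟩ := hij
    obtain ⟨i, j, rfl⟩ := Lam_pos st hij
    obtain ⟨⟨hi, hj⟩, -⟩ := (mem_Lam st).1 hij
    change st.D' i j = _ at hD
    obtain ⟨σ, -, hσ⟩ := st.sign hst hi hj
    have hmem : ∀ x ∈ Icc (xg st.N (al st.px k)) (xg st.N (al st.px k + st.K)),
        ∀ y ∈ Icc (xg st.N (al st.py l)) (xg st.N (al st.py l + st.K)),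
        (usub st.N st.px (i + 1) x, usub st.N st.py (j + 1) y) ∈ st.D i j := fun x hx y hy =>
      st.U_mem hi hj (p := (x, y)) (by rw [hD]; exact ⟨hx, hy⟩)
    have lx := left_mem_Icc.2 hx
    have rx := right_mem_Icc.2 hx
    have ly := left_mem_Icc.2 hy
    have ry := right_mem_Icc.2 hy
    have hm1 := hmem _ hp.1 _ hp.2
    simp only [bl]
    rw [hσ _ hm1, hσ _ (hmem _ lx _ ly), hσ _ (hmem _ lx _ ry), hσ _ (hmem _ rx _ ly),
      hσ _ (hmem _ rx _ ry)]
    rw [e1, e2, usub_lerp, usub_lerp] at hm1 ⊢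
    rw [bil_blend (st.hSbil' hi hj) (hmem _ lx _ ly).1 (hmem _ rx _ ly).1 (hmem _ lx _ ly).2
      (hmem _ lx _ ry).2 hm1.1 hm1.2]
    unfold bl; ring
  rw [Finset.sum_congr rfl key]
  simp only [bl, Finset.sum_add_distrib, ← Finset.mul_sum]
  unfold cSum at g1 g2 g3 g4
  simp only [g1, g2, g3, g4]
  ring

open Classical in
theorem key_sum {m : ℕ} {B : Fin m → Set (ℝ × ℝ)} {γ : Fin m → Fin m → ℝ}
    (hcomp : IsCompatible st B) (hst : Steady st) (hus : HasUniformSums st B γ)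
    (hγ0 : GammaZero st B γ) {cl : ℕ → ℕ → Fin m} (hcl : IsCl st B cl) (r : Fin m) {c d : ℕ}
    (hc : c < st.N) (hd : d < st.N) {p : ℝ × ℝ} (hp : p ∈ cell st.N st.K 0 c d) :
    (∑ ij ∈ (Finset.range st.N ×ˢ Finset.range st.N).filter (fun ij =>
        cl ij.1 ij.2 = r ∧ Inn st.K st.px ij.1 c ∧ Inn st.K st.py ij.2 d),
      |st.S (st.U ij.1 ij.2 p)|) = γ r (cl c d) := by
  have hin : ∀ i j, i < st.N → j < st.N → cl i j = r → Inn st.K st.px i c →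
      Inn st.K st.py j d → (i + 1, j + 1) ∈ Lam st B r ∩ Lam' st B (cl c d) := by
    intro i j hi hj h1 h2 h3
    rw [Finset.mem_inter, mem_Lam, mem_Lam']
    refine ⟨⟨⟨hi, hj⟩, (hcl i hi j hj r).2 h1⟩, ⟨hi, hj⟩, ?_⟩
    obtain ⟨-, t', ht'⟩ := hcomp.1 (i + 1) (j + 1) (by omega) (by omega) (by omega) (by omega)
    have := (cell_sub_D' st hi hj h2 h3).trans ht'
    rw [← st.D_eq] at this
    rw [(hcl c hc d hd _).1 this]
    exact ht'
  by_cases hne : Lam st B r ∩ Lam' st B (cl c d) = ∅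
  · rw [hγ0 _ _ hne, Finset.filter_eq_empty_iff.2, Finset.sum_empty]
    rintro ⟨i, j⟩ hij ⟨h1, h2, h3⟩
    simp only [Finset.mem_product, Finset.mem_range] at hij
    have := hin i j hij.1 hij.2 h1 h2 h3
    rw [hne] at this
    exact absurd this (Finset.notMem_empty _)
  · obtain ⟨ij, hij⟩ := Finset.nonempty_iff_ne_empty.2 hne
    obtain ⟨i, j, rfl⟩ := Lam_pos st (Finset.mem_inter.1 hij).1
    rw [Finset.mem_inter, mem_Lam, mem_Lam'] at hij
    have hB := hcomp.2 r (cl c d) ⟨i + 1, j + 1, by omega, by omega, by omega, by omega,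
      hij.1.2, hij.2.2⟩
    have hmid : (mid st.N c, mid st.N d) ∈ B (cl c d) :=
      (hcl c hc d hd _).2 rfl (interior_subset (mid_mem_interior_D st c d))
    rw [hB] at hmid
    simp only [mem_iUnion] at hmid
    obtain ⟨k, l, ⟨hk1, hk2, hl1, hl2, hkr, hkt⟩, hmid⟩ := hmid
    obtain ⟨k, rfl⟩ : ∃ k', k = k' + 1 := ⟨k - 1, by omega⟩
    obtain ⟨l, rfl⟩ : ∃ k', l = k' + 1 := ⟨l - 1, by omega⟩
    have hk : k < st.N := by omega
    have hl : l < st.N := by omega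
    obtain ⟨ik, il⟩ := (Inn_iff_mid st hk hl).1 hmid
    have hmem : (k + 1, l + 1) ∈ Lam st B r ∩ Lam' st B (cl c d) := by
      rw [Finset.mem_inter, mem_Lam, mem_Lam']; exact ⟨⟨⟨hk, hl⟩, hkr⟩, ⟨hk, hl⟩, hkt⟩
    rw [← LamAB_sum st hst hus hk hl hmem (cell_sub_D' st hk hl ik il hp)]
    refine Finset.sum_nbij' (fun ij => (ij.1 + 1, ij.2 + 1)) (fun ij => (ij.1 - 1, ij.2 - 1))
      ?_ ?_ ?_ ?_ ?_
    · rintro ⟨i, j⟩ h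
      simp only [Finset.mem_filter, Finset.mem_product, Finset.mem_range] at h
      obtain ⟨⟨hi, hj⟩, h1, h2, h3⟩ := h
      simp only [LamAB, Finset.mem_filter, mem_Lam]
      refine ⟨⟨⟨hi, hj⟩, (hcl i hi j hj r).2 h1⟩, ?_⟩
      rw [← st.D'_eq hk hl]
      exact Inn_D'_eq st hi hj hk hl h2 h3 ik il
    · intro ij h
      simp only [LamAB, Finset.mem_filter] at h
      obtain ⟨h, hD⟩ := h
      obtain ⟨i, j, rfl⟩ := Lam_pos st h
      rw [mem_Lam] at h
      obtain ⟨⟨hi, hj⟩, h⟩ := h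
      simp only [Nat.add_sub_cancel, Finset.mem_filter, Finset.mem_product, Finset.mem_range]
      refine ⟨⟨hi, hj⟩, (hcl i hi j hj r).1 h, ?_⟩
      rw [← Inn_iff_mid st hi hj]
      rw [← st.D'_eq hk hl] at hD
      change _ ∈ Dij' _ _ _ _ _
      rw [hD]; exact hmid
    · rintro ⟨i, j⟩ -; simp
    · intro ij h
      simp only [LamAB, Finset.mem_filter] at h
      obtain ⟨i, j, rfl⟩ := Lam_pos st h.1
      simp
    · rintro ⟨i, j⟩ -; rfl

open Classical in
theorem gamma_nonneg {m : ℕ} {B : Fin m → Set (ℝ × ℝ)} {γ : Fin m → Fin m → ℝ}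
    (hus : HasUniformSums st B γ) (hγ0 : GammaZero st B γ) (r t : Fin m) : 0 ≤ γ r t := by
  by_cases hne : Lam st B r ∩ Lam' st B t = ∅
  · rw [hγ0 _ _ hne]
  · obtain ⟨ij, hij⟩ := Finset.nonempty_iff_ne_empty.2 hne
    obtain ⟨k, l, rfl⟩ := Lam_pos st (Finset.mem_inter.1 hij).1
    obtain ⟨⟨hk, hl⟩, -⟩ := (mem_Lam st).1 (Finset.mem_inter.1 hij).1
    have := (hus r t ⟨_, hij⟩ (al st.px k) (al st.py l) (st.Hx.alK hk)
      (st.Hy.alK hl) ⟨_, hij, st.D'_eq hk hl⟩).1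
    rw [← this]
    exact Finset.sum_nonneg fun _ _ => abs_nonneg _
end

/-! ### The combinatorial core and the recurrences -/

open Classical in
/-- pairs `(i,j)` of class `r` whose `D'` contains the level-0 cell `(c,d)`. -/
def prs (st : Setup) {m : ℕ} (cl : ℕ → ℕ → Fin m) (r : Fin m) (c d : ℕ) : Finset (ℕ × ℕ) :=
  (Finset.range st.N ×ˢ Finset.range st.N).filter (fun ij =>
        cl ij.1 ij.2 = r ∧ Inn st.K st.px ij.1 c ∧ Inn st.K st.py ij.2 d)

/-- everything needed from the partition. -/
structure Core (st : Setup) {m : ℕ} (γ : Fin m → Fin m → ℝ) (cl : ℕ → ℕ → Fin m) : Prop where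
  steady : Steady st
  key : ∀ r : Fin m, ∀ c < st.N, ∀ d < st.N, ∀ p ∈ cell st.N st.K 0 c d,
    ∑ ij ∈ prs st cl r c d, |st.S (st.U ij.1 ij.2 p)| = γ r (cl c d)
  nonneg : ∀ r t, 0 ≤ γ r t

section core
variable {st : Setup} {m : ℕ} {γ : Fin m → Fin m → ℝ} {cl : ℕ → ℕ → Fin m}

theorem mem_prs {r : Fin m} {c d : ℕ} {ij : ℕ × ℕ} : ij ∈ prs st cl r c d ↔
    (ij.1 < st.N ∧ ij.2 < st.N) ∧ cl ij.1 ij.2 = r ∧ Inn st.K st.px ij.1 c ∧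
      Inn st.K st.py ij.2 d := by
  simp [prs]

theorem prs_card (r : Fin m) (c d : ℕ) : (prs st cl r c d).card ≤ st.N ^ 2 := by
  refine (Finset.card_filter_le _ _).trans ?_
  simp [pow_two]

/-- level-`n` sum of a cell functional over class `r`. -/
def Sm (st : Setup) (cl : ℕ → ℕ → Fin m) (Q : ℕ → ℕ → ℕ → ℝ) (n : ℕ) (r : Fin m) : ℝ :=
  ∑ a ∈ Finset.range (st.K ^ n * st.N), ∑ b ∈ Finset.range (st.K ^ n * st.N),
    if cl (a / st.K ^ n) (b / st.K ^ n) = r then Q n a b else 0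

/-- total level-`n` sum. -/
def Tot (st : Setup) (Q : ℕ → ℕ → ℕ → ℝ) (n : ℕ) : ℝ :=
  ∑ a ∈ Finset.range (st.K ^ n * st.N), ∑ b ∈ Finset.range (st.K ^ n * st.N), Q n a b

theorem Sm_tot (Q : ℕ → ℕ → ℕ → ℝ) (n : ℕ) : ∑ r, Sm st cl Q n r = Tot st Q n := by
  unfold Sm Tot
  rw [Finset.sum_comm]
  refine Finset.sum_congr rfl fun a _ => ?_
  rw [Finset.sum_comm]
  refine Finset.sum_congr rfl fun b _ => ?_
  simp

theorem Sm_gamma (Q : ℕ → ℕ → ℕ → ℝ) (n : ℕ) (r : Fin m) :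
    ∑ a ∈ Finset.range (st.K ^ n * st.N), ∑ b ∈ Finset.range (st.K ^ n * st.N),
      γ r (cl (a / st.K ^ n) (b / st.K ^ n)) * Q n a b = ∑ t, γ r t * Sm st cl Q n t := by
  unfold Sm
  simp_rw [Finset.mul_sum]
  symm
  rw [Finset.sum_comm]
  refine Finset.sum_congr rfl fun a _ => ?_
  rw [Finset.sum_comm]
  refine Finset.sum_congr rfl fun b _ => ?_
  simp

theorem Sm_succ (Q : ℕ → ℕ → ℕ → ℝ) (n : ℕ) (r : Fin m) :
    Sm st cl Q (n + 1) r = ∑ a ∈ Finset.range (st.K ^ n * st.N),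
      ∑ b ∈ Finset.range (st.K ^ n * st.N), ∑ ij ∈ prs st cl r (a / st.K ^ n) (b / st.K ^ n),
        Q (n + 1) (kap st.K st.px n ij.1 a) (kap st.K st.py n ij.2 b) := by
  unfold Sm
  rw [st.Hx.sum_eq n (fun a i => ∑ b ∈ Finset.range (st.K ^ (n + 1) * st.N),
    if cl i (b / st.K ^ (n + 1)) = r then Q (n + 1) a b else 0)]
  rw [Finset.sum_comm]
  refine Finset.sum_congr rfl fun a _ => ?_
  have : ∀ i, ∑ b ∈ Finset.range (st.K ^ (n + 1) * st.N),
      (if cl i (b / st.K ^ (n + 1)) = r then Q (n + 1) (kap st.K st.px n i a) b else 0) =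
      ∑ j ∈ Finset.range st.N, ∑ b ∈ Finset.range (st.K ^ n * st.N),
        if Inn st.K st.py j (b / st.K ^ n) then
          (if cl i j = r then Q (n + 1) (kap st.K st.px n i a) (kap st.K st.py n j b) else 0)
        else 0 := fun i =>
    st.Hy.sum_eq n (fun b j => if cl i j = r then Q (n + 1) (kap st.K st.px n i a) b else 0)
  simp_rw [this]
  have h2 : ∀ b, ∑ ij ∈ prs st cl r (a / st.K ^ n) (b / st.K ^ n),
        Q (n + 1) (kap st.K st.px n ij.1 a) (kap st.K st.py n ij.2 b) =
      ∑ i ∈ Finset.range st.N, ∑ j ∈ Finset.range st.N,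
        if Inn st.K st.px i (a / st.K ^ n) then if Inn st.K st.py j (b / st.K ^ n) then
          (if cl i j = r then Q (n + 1) (kap st.K st.px n i a) (kap st.K st.py n j b) else 0)
        else 0 else 0 := by
    intro b
    rw [prs, Finset.sum_filter, Finset.sum_product]
    refine Finset.sum_congr rfl fun i _ => Finset.sum_congr rfl fun j _ => ?_
    simp only
    split_ifs <;> first | rfl | (exfalso; tauto)
  simp_rw [h2]
  rw [Finset.sum_comm (s := Finset.range (st.K ^ n * st.N))]
  refine Finset.sum_congr rfl fun i _ => ?_
  split_ifs with h
  · rw [Finset.sum_comm]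
  · simp

/-! #### oscillation -/

theorem f_bdd (st : Setup) : ∃ M : ℝ, 0 ≤ M ∧ ∀ p ∈ sq, |st.f p| ≤ M := by
  have hc : IsCompact sq := isCompact_Icc.prod isCompact_Icc
  obtain ⟨M, hM⟩ := hc.exists_bound_of_continuousOn st.hfcont
  exact ⟨max M 0, le_max_right _ _, fun p hp => (hM p hp).trans (le_max_left _ _)⟩

theorem le_Osc {E : Set (ℝ × ℝ)} (hE : E ⊆ sq) {p q : ℝ × ℝ} (hp : p ∈ E) (hq : q ∈ E) :
    st.f p - st.f q ≤ Osc st.f E := by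
  obtain ⟨M, -, hM⟩ := f_bdd st
  refine le_csSup ⟨M + M, ?_⟩ ⟨p, hp, q, hq, rfl⟩
  rintro d ⟨p, hp, q, hq, rfl⟩
  have h1 := abs_le.1 (hM p (hE hp))
  have h2 := abs_le.1 (hM q (hE hq))
  linarith

theorem abs_le_Osc {E : Set (ℝ × ℝ)} (hE : E ⊆ sq) {p q : ℝ × ℝ} (hp : p ∈ E) (hq : q ∈ E) :
    |st.f p - st.f q| ≤ Osc st.f E := by
  rw [abs_le]
  constructor
  · linarith [le_Osc (st := st) hE hq hp]
  · exact le_Osc hE hp hq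

theorem Osc_le {f : ℝ × ℝ → ℝ} {E : Set (ℝ × ℝ)} (hne : E.Nonempty) {C : ℝ}
    (h : ∀ p ∈ E, ∀ q ∈ E, f p - f q ≤ C) : Osc f E ≤ C := by
  obtain ⟨x, hx⟩ := hne
  refine csSup_le ⟨_, x, hx, x, hx, rfl⟩ ?_
  rintro d ⟨p, hp, q, hq, rfl⟩
  exact h p hp q hq

theorem Osc_nonneg {E : Set (ℝ × ℝ)} (hE : E ⊆ sq) (hne : E.Nonempty) : 0 ≤ Osc st.f E := by
  obtain ⟨x, hx⟩ := hne
  simpa using le_Osc hE hx hx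

theorem par_lt {n a : ℕ} (ha : a < st.K ^ n * st.N) : a / st.K ^ n < st.N :=
  Nat.div_lt_of_lt_mul ha

theorem cell_sub_par (n a b : ℕ) :
    cell st.N st.K n a b ⊆ cell st.N st.K 0 (a / st.K ^ n) (b / st.K ^ n) :=
  prod_mono (c1_subset_parent st.Hx n a) (c1_subset_parent st.Hx n b)

theorem cell_sub_D (n a b : ℕ) : cell st.N st.K n a b ⊆ st.D (a / st.K ^ n) (b / st.K ^ n) := by
  rw [st.D_eq]; exact cell_sub_par n a b

theorem cell_sub_sq {n a b : ℕ} (ha : a < st.K ^ n * st.N) (hb : b < st.K ^ n * st.N) :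
    cell st.N st.K n a b ⊆ sq :=
  (cell_sub_D n a b).trans (st.D_sub_sq (par_lt ha) (par_lt hb))

/-- the lower left corner -/
def crn (st : Setup) (n a b : ℕ) : ℝ × ℝ :=
  ((a : ℝ) / ((st.K : ℝ) ^ n * st.N), (b : ℝ) / ((st.K : ℝ) ^ n * st.N))

theorem crn_mem (n a b : ℕ) : crn st n a b ∈ cell st.N st.K n a b :=
  ⟨left_mem_Icc.2 (c1_le st.Hx n a), left_mem_Icc.2 (c1_le st.Hx n b)⟩

/-- the oscillation functional -/
def oscQ (st : Setup) (n a b : ℕ) : ℝ := Osc st.f (cell st.N st.K n a b)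

theorem oscQ_nonneg {n a b : ℕ} (ha : a < st.K ^ n * st.N) (hb : b < st.K ^ n * st.N) :
    0 ≤ oscQ st n a b := Osc_nonneg (cell_sub_sq ha hb) ⟨_, crn_mem n a b⟩

/-- mesh size -/
def dl (st : Setup) (n : ℕ) : ℝ := 1 / ((st.K : ℝ) ^ n * st.N)

theorem dl_pos (n : ℕ) : 0 < dl st n := by
  have := st.Hx.Dpos n
  unfold dl; positivity

theorem dl_succ_le (n : ℕ) : dl st (n + 1) ≤ dl st n := by
  have h1 := st.Hx.Dpos n
  have hK : (1 : ℝ) ≤ st.K := by exact_mod_cast (by have := st.hK; omega)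
  unfold dl
  apply one_div_le_one_div_of_le h1
  have := st.Hx.Npos
  have : (st.K : ℝ) ^ n ≤ st.K ^ (n + 1) := pow_le_pow_right₀ hK (by omega)
  gcongr

theorem c1_dist {n a : ℕ} {x y : ℝ} (hx : x ∈ c1 st.N st.K n a) (hy : y ∈ c1 st.N st.K n a) :
    |x - y| ≤ dl st n := by
  have e : ((a : ℝ) + 1) / ((st.K : ℝ) ^ n * st.N) = a / ((st.K : ℝ) ^ n * st.N) + dl st n := by
    unfold dl; ring
  have h1 := hx.1
  have h2 := hx.2
  have h3 := hy.1
  have h4 := hy.2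
  rw [e] at h2 h4
  rw [abs_le]; constructor <;> linarith

theorem exists_unif (N : ℕ) (P : ℕ → ℕ → ℝ → Prop)
    (hmono : ∀ i j L L', L ≤ L' → P i j L → P i j L')
    (h : ∀ i < N, ∀ j < N, ∃ L, 0 ≤ L ∧ P i j L) :
    ∃ L, 0 ≤ L ∧ ∀ i < N, ∀ j < N, P i j L := by
  choose! L h0 h using h
  have hn : ∀ ij ∈ Finset.range N ×ˢ Finset.range N, 0 ≤ L ij.1 ij.2 := by
    intro ij hij
    simp only [Finset.mem_product, Finset.mem_range] at hij
    exact h0 _ hij.1 _ hij.2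
  refine ⟨∑ ij ∈ Finset.range N ×ˢ Finset.range N, L ij.1 ij.2, Finset.sum_nonneg hn, ?_⟩
  intro i hi j hj
  refine hmono _ _ _ _ ?_ (h i hi j hj)
  exact Finset.single_le_sum hn (a := (i, j)) (by simp [hi, hj])

theorem lip_unif (F : ℕ → ℕ → ℝ × ℝ → ℝ) (E : ℕ → ℕ → Set (ℝ × ℝ))
    (hF : ∀ i < st.N, ∀ j < st.N, IsBilinearOn (F i j) (E i j))
    (hE : ∀ i < st.N, ∀ j < st.N, E i j ⊆ sq) :
    ∃ L : ℝ, 0 ≤ L ∧ ∀ i < st.N, ∀ j < st.N, ∀ p ∈ E i j, ∀ q ∈ E i j, ∀ δ : ℝ,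
      |p.1 - q.1| ≤ δ → |p.2 - q.2| ≤ δ → |F i j p - F i j q| ≤ L * δ := by
  refine exists_unif st.N (fun i j L => ∀ p ∈ E i j, ∀ q ∈ E i j, ∀ δ : ℝ,
      |p.1 - q.1| ≤ δ → |p.2 - q.2| ≤ δ → |F i j p - F i j q| ≤ L * δ) ?_ ?_
  · intro i j L L' hL h p hp q hq δ h1 h2
    have : 0 ≤ δ := (abs_nonneg _).trans h1
    exact (h p hp q hq δ h1 h2).trans (by gcongr)
  · exact fun i hi j hj => bil_lip (hF i hi j hj) (hE i hi j hj)

theorem bil_bdd {F : ℝ × ℝ → ℝ} {E : Set (ℝ × ℝ)} (hF : IsBilinearOn F E) (hE : E ⊆ sq) :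
    ∃ L : ℝ, 0 ≤ L ∧ ∀ p ∈ E, |F p| ≤ L := by
  obtain ⟨a, b, c, d, h⟩ := hF
  refine ⟨|a| + |b| + |c| + |d|, by positivity, fun p hp => ?_⟩
  have hp1 := hE hp
  have a1 : |p.2| ≤ 1 := abs_le.2 ⟨by linarith [hp1.2.1], hp1.2.2⟩
  have a2 : |p.1| ≤ 1 := abs_le.2 ⟨by linarith [hp1.1.1], hp1.1.2⟩
  rw [h p hp]
  calc _ ≤ |a| + |b * p.1| + |c * p.2| + |d * p.1 * p.2| :=
        (abs_add_le _ _).trans (add_le_add ((abs_add_le _ _).trans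
          (add_le_add (abs_add_le _ _) le_rfl)) le_rfl)
    _ ≤ |a| + |b| * 1 + |c| * 1 + |d| * 1 * 1 := by
        simp only [abs_mul]; gcongr
    _ = _ := by ring

theorem Setup.hgbil' (st : Setup) {i j : ℕ} (hi : i < st.N) (hj : j < st.N) :
    IsBilinearOn (st.g (i + 1) (j + 1)) (st.D' i j) :=
  st.hgbil _ _ (by omega) (by omega) (by omega) (by omega)

theorem Setup.feq (st : Setup) {i j : ℕ} (hi : i < st.N) (hj : j < st.N) {p : ℝ × ℝ}
    (hp : p ∈ st.D' i j) : st.f (st.U i j p) =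
      st.S (st.U i j p) * (st.f p - st.g (i + 1) (j + 1) p) + st.h (st.U i j p) :=
  st.hfeq _ _ (by omega) (by omega) (by omega) (by omega) p hp

theorem U_surj {n a b i j : ℕ} (hi : i < st.N) (hj : j < st.N)
    (h1 : Inn st.K st.px i (a / st.K ^ n)) (h2 : Inn st.K st.py j (b / st.K ^ n)) {q : ℝ × ℝ}
    (hq : q ∈ cell st.N st.K (n + 1) (kap st.K st.px n i a) (kap st.K st.py n j b)) :
    ∃ p ∈ cell st.N st.K n a b, st.U i j p = q := by
  obtain ⟨x, hx, e1⟩ := st.Hx.usub_surj hi h1 hq.1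
  obtain ⟨y, hy, e2⟩ := st.Hy.usub_surj hj h2 hq.2
  exact ⟨(x, y), ⟨hx, hy⟩, Prod.ext e1 e2⟩

theorem U_maps {n a b i j : ℕ} (hi : i < st.N) (hj : j < st.N)
    (h1 : Inn st.K st.px i (a / st.K ^ n)) (h2 : Inn st.K st.py j (b / st.K ^ n)) {q : ℝ × ℝ}
    (hq : q ∈ cell st.N st.K n a b) :
    st.U i j q ∈ cell st.N st.K (n + 1) (kap st.K st.px n i a) (kap st.K st.py n j b) :=
  ⟨st.Hx.usub_maps hi h1 hq.1, st.Hy.usub_maps hj h2 hq.2⟩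

/-- the oscillation of one image cell -/
theorem osc_step (st : Setup) : ∃ C : ℝ, 0 ≤ C ∧ ∀ n a b i j, a < st.K ^ n * st.N →
    b < st.K ^ n * st.N → i < st.N → j < st.N →
    Inn st.K st.px i (a / st.K ^ n) → Inn st.K st.py j (b / st.K ^ n) →
    oscQ st (n + 1) (kap st.K st.px n i a) (kap st.K st.py n j b) ≤
      |st.S (st.U i j (crn st n a b))| * oscQ st n a b + C * dl st n := by
  obtain ⟨LS, hLS0, hLS⟩ := lip_unif (st := st) (fun _ _ => st.S) st.D
    (fun i hi j hj => st.hSbil' hi hj) (fun i hi j hj => st.D_sub_sq hi hj)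
  obtain ⟨Lh, hLh0, hLh⟩ := lip_unif (st := st) (fun _ _ => st.h) st.D
    (fun i hi j hj => st.hhbil' hi hj) (fun i hi j hj => st.D_sub_sq hi hj)
  obtain ⟨Lg, hLg0, hLg⟩ := lip_unif (st := st) (fun i j => st.g (i + 1) (j + 1)) st.D'
    (fun i hi j hj => st.hgbil' hi hj) (fun i hi j hj => st.D'_sub_sq hi hj)
  obtain ⟨Mg, hMg0, hMg⟩ := exists_unif st.N
    (fun i j L => ∀ p ∈ st.D' i j, |st.g (i + 1) (j + 1) p| ≤ L)
    (fun i j L L' hL h p hp => (h p hp).trans hL)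
    (fun i hi j hj => bil_bdd (st.hgbil' hi hj) (st.D'_sub_sq hi hj))
  obtain ⟨M, hM0, hM⟩ := f_bdd st
  refine ⟨LS * (2 * M) + Lg + LS * (M + Mg) + Lh, by positivity, ?_⟩
  intro n a b i j ha hb hi hj h1 h2
  refine Osc_le ⟨_, U_maps hi hj h1 h2 (crn_mem n a b)⟩ ?_
  intro p' hp' q' hq'
  obtain ⟨p, hp, rfl⟩ := U_surj hi hj h1 h2 hp'
  obtain ⟨q, hq, rfl⟩ := U_surj hi hj h1 h2 hq'
  have hsub : cell st.N st.K n a b ⊆ st.D' i j :=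
    (cell_sub_par n a b).trans (cell_sub_D' st hi hj h1 h2)
  have hsq := cell_sub_sq ha hb
  set c := crn st n a b
  have hc : c ∈ cell st.N st.K n a b := crn_mem n a b
  have hc' := U_maps hi hj h1 h2 hc
  have hd := (dl_pos (st := st) n)
  rw [st.feq hi hj (hsub hp), st.feq hi hj (hsub hq)]
  have dist : ∀ x ∈ cell st.N st.K (n + 1) (kap st.K st.px n i a) (kap st.K st.py n j b),
      ∀ y ∈ cell st.N st.K (n + 1) (kap st.K st.px n i a) (kap st.K st.py n j b),
      |x.1 - y.1| ≤ dl st n ∧ |x.2 - y.2| ≤ dl st n := fun x hx y hy =>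
    ⟨(c1_dist hx.1 hy.1).trans (dl_succ_le n), (c1_dist hx.2 hy.2).trans (dl_succ_le n)⟩
  have mU : ∀ x ∈ cell st.N st.K n a b, st.U i j x ∈ st.D i j := fun x hx =>
    st.U_mem hi hj (hsub hx)
  have b1 := hLS i hi j hj _ (mU p hp) _ (mU q hq) _ (dist _ hp' _ hq').1 (dist _ hp' _ hq').2
  have b2 := hLS i hi j hj _ (mU p hp) _ (mU c hc) _ (dist _ hp' _ hc').1 (dist _ hp' _ hc').2
  have b3 := hLh i hi j hj _ (mU p hp) _ (mU q hq) _ (dist _ hp' _ hq').1 (dist _ hp' _ hq').2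
  have b4 := hLg i hi j hj _ (hsub hp) _ (hsub hq) _ (c1_dist hp.1 hq.1) (c1_dist hp.2 hq.2)
  have b5 : |st.f p - st.f q| ≤ oscQ st n a b := abs_le_Osc hsq hp hq
  have b6 : |st.f q - st.g (i + 1) (j + 1) q| ≤ M + Mg :=
    (abs_sub _ _).trans (add_le_add (hM _ (hsq hq)) (hMg i hi j hj _ (hsub hq)))
  have b7 := (st.S_lt_one hi hj (mU p hp)).le
  have b8 : |st.f p - st.f q| ≤ 2 * M := by
    refine (abs_sub _ _).trans ?_
    linarith [hM _ (hsq hp), hM _ (hsq hq)]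
  have o0 := oscQ_nonneg ha hb
  generalize st.S (st.U i j p) = Sp at *
  generalize st.S (st.U i j q) = Sq at *
  generalize st.S (st.U i j c) = Sc at *
  generalize st.h (st.U i j p) = hp1 at *
  generalize st.h (st.U i j q) = hq1 at *
  generalize st.g (i + 1) (j + 1) p = gp at *
  generalize st.g (i + 1) (j + 1) q = gq at *
  have e : Sp * (st.f p - gp) + hp1 - (Sq * (st.f q - gq) + hq1) =
    Sc * (st.f p - st.f q) + (Sp - Sc) * (st.f p - st.f q) + Sp * -(gp - gq)
      + (Sp - Sq) * (st.f q - gq) + (hp1 - hq1) := by ring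
  rw [e]
  have t1 : Sc * (st.f p - st.f q) ≤ |Sc| * oscQ st n a b := by
    refine (le_abs_self _).trans ?_
    rw [abs_mul]; gcongr
  have t2 : (Sp - Sc) * (st.f p - st.f q) ≤ LS * dl st n * (2 * M) := by
    refine (le_abs_self _).trans ?_
    rw [abs_mul]; gcongr
  have t3 : Sp * -(gp - gq) ≤ 1 * (Lg * dl st n) := by
    refine (le_abs_self _).trans ?_
    rw [abs_mul, abs_neg]; gcongr
  have t4 : (Sp - Sq) * (st.f q - gq) ≤ LS * dl st n * (M + Mg) := by
    refine (le_abs_self _).trans ?_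
    rw [abs_mul]; gcongr
  have t5 := (le_abs_self _).trans b3
  nlinarith

theorem osc_rec (hC : Core st γ cl) : ∃ C : ℝ, 0 ≤ C ∧ ∀ n r,
    Sm st cl (oscQ st) (n + 1) r ≤
      ∑ t, γ r t * Sm st cl (oscQ st) n t + C * (st.K : ℝ) ^ n := by
  obtain ⟨C, hC0, hstep⟩ := osc_step st
  refine ⟨st.N * st.N ^ 2 * C, by positivity, fun n r => ?_⟩
  rw [Sm_succ, ← Sm_gamma]
  have hd := (dl_pos (st := st) n)
  have : ∀ a ∈ Finset.range (st.K ^ n * st.N), ∀ b ∈ Finset.range (st.K ^ n * st.N),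
      ∑ ij ∈ prs st cl r (a / st.K ^ n) (b / st.K ^ n),
        oscQ st (n + 1) (kap st.K st.px n ij.1 a) (kap st.K st.py n ij.2 b) ≤
      γ r (cl (a / st.K ^ n) (b / st.K ^ n)) * oscQ st n a b + st.N ^ 2 * (C * dl st n) := by
    intro a ha b hb
    rw [Finset.mem_range] at ha hb
    rw [← hC.key r _ (par_lt ha) _ (par_lt hb) _ (cell_sub_par n a b (crn_mem n a b)),
      Finset.sum_mul]
    calc _ ≤ ∑ ij ∈ prs st cl r (a / st.K ^ n) (b / st.K ^ n),
          (|st.S (st.U ij.1 ij.2 (crn st n a b))| * oscQ st n a b + C * dl st n) := by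
          refine Finset.sum_le_sum fun ij hij => ?_
          rw [mem_prs] at hij
          exact hstep n a b _ _ ha hb hij.1.1 hij.1.2 hij.2.2.1 hij.2.2.2
      _ ≤ _ := by
          rw [Finset.sum_add_distrib, Finset.sum_const, nsmul_eq_mul]
          gcongr
          exact_mod_cast prs_card _ _ _
  refine (Finset.sum_le_sum fun a ha => Finset.sum_le_sum fun b hb => this a ha b hb).trans ?_
  simp only [Finset.sum_add_distrib, Finset.sum_const, Finset.card_range, nsmul_eq_mul]
  have h1 := st.Hx.Npos
  have h2 := st.Hx.Kpos
  have e : ((st.K ^ n * st.N : ℕ) : ℝ) * (((st.K ^ n * st.N : ℕ) : ℝ) *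
      ((st.N : ℝ) ^ 2 * (C * dl st n))) = st.N * st.N ^ 2 * C * (st.K : ℝ) ^ n := by
    unfold dl; push_cast; field_simp
  linarith

/-! #### deviation from the bilinear interpolant -/

/-- deviation from the bilinear interpolant -/
def dv (F : ℝ × ℝ → ℝ) (x0 x1 y0 y1 s t : ℝ) : ℝ :=
  F (x0 + s * (x1 - x0), y0 + t * (y1 - y0)) - bl F x0 x1 y0 y1 s t

/-- symmetrised deviation -/
def q4 (F : ℝ × ℝ → ℝ) (s t x0 x1 y0 y1 : ℝ) : ℝ :=
  |dv F x0 x1 y0 y1 s t| + |dv F x0 x1 y0 y1 (1 - s) t| + |dv F x0 x1 y0 y1 s (1 - t)|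
    + |dv F x0 x1 y0 y1 (1 - s) (1 - t)|

theorem dv_flip1 (F : ℝ × ℝ → ℝ) (x0 x1 y0 y1 s t : ℝ) :
    dv F x1 x0 y0 y1 s t = dv F x0 x1 y0 y1 (1 - s) t := by
  unfold dv bl
  rw [show x1 + s * (x0 - x1) = x0 + (1 - s) * (x1 - x0) by ring]; ring

theorem dv_flip2 (F : ℝ × ℝ → ℝ) (x0 x1 y0 y1 s t : ℝ) :
    dv F x0 x1 y1 y0 s t = dv F x0 x1 y0 y1 s (1 - t) := by
  unfold dv bl
  rw [show y1 + t * (y0 - y1) = y0 + (1 - t) * (y1 - y0) by ring]; ring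

theorem q4_flip1 (F : ℝ × ℝ → ℝ) (x0 x1 y0 y1 s t : ℝ) :
    q4 F s t x1 x0 y0 y1 = q4 F s t x0 x1 y0 y1 := by
  unfold q4; simp only [dv_flip1 F x0 x1, sub_sub_cancel]; ring

theorem q4_flip2 (F : ℝ × ℝ → ℝ) (x0 x1 y0 y1 s t : ℝ) :
    q4 F s t x0 x1 y1 y0 = q4 F s t x0 x1 y0 y1 := by
  unfold q4; simp only [dv_flip2 F x0 x1 y0 y1, sub_sub_cancel]; ring

/-- the deviation functional on cells -/
def devQ (st : Setup) (s t : ℝ) (n a b : ℕ) : ℝ :=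
  q4 st.f s t ((a : ℝ) / ((st.K : ℝ) ^ n * st.N)) (((a : ℝ) + 1) / ((st.K : ℝ) ^ n * st.N))
    ((b : ℝ) / ((st.K : ℝ) ^ n * st.N)) (((b : ℝ) + 1) / ((st.K : ℝ) ^ n * st.N))

theorem devQ_nonneg (s t : ℝ) (n a b : ℕ) : 0 ≤ devQ st s t n a b := by
  unfold devQ q4; positivity

theorem devQ_kap {s t : ℝ} {n a b i j : ℕ} (hi : i < st.N) (hj : j < st.N)
    (h1 : Inn st.K st.px i (a / st.K ^ n)) (h2 : Inn st.K st.py j (b / st.K ^ n)) :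
    devQ st s t (n + 1) (kap st.K st.px n i a) (kap st.K st.py n j b) =
    q4 (fun p => st.f (st.U i j p)) s t
      ((a : ℝ) / ((st.K : ℝ) ^ n * st.N)) (((a : ℝ) + 1) / ((st.K : ℝ) ^ n * st.N))
      ((b : ℝ) / ((st.K : ℝ) ^ n * st.N)) (((b : ℝ) + 1) / ((st.K : ℝ) ^ n * st.N)) := by
  have hU : ∀ x0 x1 y0 y1, q4 (fun p => st.f (st.U i j p)) s t x0 x1 y0 y1 =
      q4 st.f s t (usub st.N st.px (i + 1) x0) (usub st.N st.px (i + 1) x1)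
        (usub st.N st.py (j + 1) y0) (usub st.N st.py (j + 1) y1) := by
    intro x0 x1 y0 y1
    simp only [q4, dv, bl, Setup.U, usub_lerp]
  rw [hU]
  unfold devQ
  rcases st.Hx.usub_end hi h1 with ⟨e1, e2⟩ | ⟨e1, e2⟩ <;>
  rcases st.Hy.usub_end hj h2 with ⟨e3, e4⟩ | ⟨e3, e4⟩ <;> rw [e1, e2, e3, e4]
  · rw [q4_flip2]
  · rw [q4_flip1]
  · rw [q4_flip1, q4_flip2]

theorem dv_le_Osc {E : Set (ℝ × ℝ)} (hE : E ⊆ sq) {x0 x1 y0 y1 s t : ℝ}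
    (hs : s ∈ Icc (0 : ℝ) 1) (ht : t ∈ Icc (0 : ℝ) 1)
    (h00 : (x0, y0) ∈ E) (h10 : (x1, y0) ∈ E) (h01 : (x0, y1) ∈ E) (h11 : (x1, y1) ∈ E)
    (hp : (x0 + s * (x1 - x0), y0 + t * (y1 - y0)) ∈ E) :
    |dv st.f x0 x1 y0 y1 s t| ≤ Osc st.f E := by
  have a1 := abs_le.1 (abs_le_Osc (st := st) hE hp h00)
  have a2 := abs_le.1 (abs_le_Osc (st := st) hE hp h10)
  have a3 := abs_le.1 (abs_le_Osc (st := st) hE hp h01)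
  have a4 := abs_le.1 (abs_le_Osc (st := st) hE hp h11)
  unfold dv bl
  have hs1 : 0 ≤ s := hs.1
  have hs2 : 0 ≤ 1 - s := by linarith [hs.2]
  have ht1 : 0 ≤ t := ht.1
  have ht2 : 0 ≤ 1 - t := by linarith [ht.2]
  have p1 := mul_nonneg hs2 ht2
  have p2 := mul_nonneg hs1 ht2
  have p3 := mul_nonneg hs2 ht1
  have p4 := mul_nonneg hs1 ht1
  have hsum : (1 - s) * (1 - t) + s * (1 - t) + (1 - s) * t + s * t = 1 := by ring
  generalize st.f (x0 + s * (x1 - x0), y0 + t * (y1 - y0)) = v at *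
  generalize (1 - s) * (1 - t) = w1 at *
  generalize s * (1 - t) = w2 at *
  generalize (1 - s) * t = w3 at *
  generalize s * t = w4 at *
  generalize Osc st.f E = o at *
  generalize st.f (x0, y0) = v1 at *
  generalize st.f (x1, y0) = v2 at *
  generalize st.f (x0, y1) = v3 at *
  generalize st.f (x1, y1) = v4 at *
  have e : v - (w1 * v1 + w2 * v2 + w3 * v3 + w4 * v4) =
      w1 * (v - v1) + w2 * (v - v2) + w3 * (v - v3) + w4 * (v - v4) := by
    have : v = (w1 + w2 + w3 + w4) * v := by rw [hsum, one_mul]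
    linear_combination this
  have e2 : o = w1 * o + w2 * o + w3 * o + w4 * o := by
    have : o = (w1 + w2 + w3 + w4) * o := by rw [hsum, one_mul]
    linear_combination this
  rw [e, abs_le]
  constructor
  · have := mul_le_mul_of_nonneg_left a1.1 p1
    have := mul_le_mul_of_nonneg_left a2.1 p2
    have := mul_le_mul_of_nonneg_left a3.1 p3
    have := mul_le_mul_of_nonneg_left a4.1 p4
    linarith
  · have := mul_le_mul_of_nonneg_left a1.2 p1
    have := mul_le_mul_of_nonneg_left a2.2 p2
    have := mul_le_mul_of_nonneg_left a3.2 p3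
    have := mul_le_mul_of_nonneg_left a4.2 p4
    linarith

theorem one_sub_mem {s : ℝ} (hs : s ∈ Icc (0 : ℝ) 1) : 1 - s ∈ Icc (0 : ℝ) 1 :=
  ⟨by linarith [hs.2], by linarith [hs.1]⟩

theorem devQ_le {s t : ℝ} (hs : s ∈ Icc (0 : ℝ) 1) (ht : t ∈ Icc (0 : ℝ) 1) {n a b : ℕ}
    (ha : a < st.K ^ n * st.N) (hb : b < st.K ^ n * st.N) :
    devQ st s t n a b ≤ 4 * oscQ st n a b := by
  have hx := c1_le st.Hx n a
  have hy := c1_le st.Hx n b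
  have lx := left_mem_Icc.2 hx
  have rx := right_mem_Icc.2 hx
  have ly := left_mem_Icc.2 hy
  have ry := right_mem_Icc.2 hy
  have key : ∀ s ∈ Icc (0 : ℝ) 1, ∀ t ∈ Icc (0 : ℝ) 1, |dv st.f
      ((a : ℝ) / ((st.K : ℝ) ^ n * st.N)) (((a : ℝ) + 1) / ((st.K : ℝ) ^ n * st.N))
      ((b : ℝ) / ((st.K : ℝ) ^ n * st.N)) (((b : ℝ) + 1) / ((st.K : ℝ) ^ n * st.N)) s t| ≤
      oscQ st n a b := fun s hs t ht =>
    dv_le_Osc (cell_sub_sq ha hb) hs ht ⟨lx, ly⟩ ⟨rx, ly⟩ ⟨lx, ry⟩ ⟨rx, ry⟩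
      ⟨lerp_mem_Icc hx hs, lerp_mem_Icc hy ht⟩
  unfold devQ q4
  linarith [key s hs t ht, key _ (one_sub_mem hs) t ht, key s hs _ (one_sub_mem ht),
    key _ (one_sub_mem hs) _ (one_sub_mem ht)]

theorem dv_congr {F G : ℝ × ℝ → ℝ} {x0 x1 y0 y1 s t : ℝ} (hx : x0 ≤ x1) (hy : y0 ≤ y1)
    (hs : s ∈ Icc (0 : ℝ) 1) (ht : t ∈ Icc (0 : ℝ) 1)
    (h : ∀ p ∈ Icc x0 x1 ×ˢ Icc y0 y1, F p = G p) :
    dv F x0 x1 y0 y1 s t = dv G x0 x1 y0 y1 s t := by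
  have lx := left_mem_Icc.2 hx
  have rx := right_mem_Icc.2 hx
  have ly := left_mem_Icc.2 hy
  have ry := right_mem_Icc.2 hy
  unfold dv bl
  rw [h (_, _) ⟨lerp_mem_Icc hx hs, lerp_mem_Icc hy ht⟩, h (x0, y0) ⟨lx, ly⟩,
    h (x0, y1) ⟨lx, ry⟩, h (x1, y0) ⟨rx, ly⟩, h (x1, y1) ⟨rx, ry⟩]

theorem dv_bil {F : ℝ × ℝ → ℝ} {X Y : Set ℝ} (hF : IsBilinearOn F (X ×ˢ Y))
    {x0 x1 y0 y1 s t : ℝ} (hx0 : x0 ∈ X) (hx1 : x1 ∈ X) (hy0 : y0 ∈ Y) (hy1 : y1 ∈ Y)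
    (hx : x0 + s * (x1 - x0) ∈ X) (hy : y0 + t * (y1 - y0) ∈ Y) :
    dv F x0 x1 y0 y1 s t = 0 := by
  unfold dv
  rw [bil_blend hF hx0 hx1 hy0 hy1 hx hy, sub_self]

theorem g_corner (st : Setup) {i j : ℕ} (hi : i < st.N) (hj : j < st.N) {a b : ℕ}
    (ha : a = al st.px i ∨ a = al st.px i + st.K) (hb : b = al st.py j ∨ b = al st.py j + st.K) :
    st.g (i + 1) (j + 1) (xg st.N a, xg st.N b) = st.f (xg st.N a, xg st.N b) := by
  have h1 : ∃ k ∈ ({i + 1 - 1, i + 1} : Set ℕ), st.px k = a := by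
    simp only [mem_insert_iff, mem_singleton_iff, exists_eq_or_imp, exists_eq_left,
      Nat.add_sub_cancel]
    have := st.Hx.hs i hi
    unfold al at ha; omega
  have h2 : ∃ k ∈ ({j + 1 - 1, j + 1} : Set ℕ), st.py k = b := by
    simp only [mem_insert_iff, mem_singleton_iff, exists_eq_or_imp, exists_eq_left,
      Nat.add_sub_cancel]
    have := st.Hy.hs j hj
    unfold al at hb; omega
  obtain ⟨k, hk, rfl⟩ := h1
  obtain ⟨l, hl, rfl⟩ := h2
  have := st.hgval (i + 1) (j + 1) (by omega) (by omega) (by omega) (by omega) k hk l hl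
  unfold xp at this
  rw [this, st.hfval]
  · apply st.hpx
    simp only [mem_insert_iff, mem_singleton_iff] at hk; omega
  · apply st.hpy
    simp only [mem_insert_iff, mem_singleton_iff] at hl; omega

theorem g_eq (st : Setup) {i j k l : ℕ} (hi : i < st.N) (hj : j < st.N) (hk : k < st.N)
    (hl : l < st.N) (hD : st.D' i j = st.D' k l) {p : ℝ × ℝ} (hp : p ∈ st.D' i j) :
    st.g (i + 1) (j + 1) p = st.g (k + 1) (l + 1) p := by
  have hx := st.Hx.xg_le (Nat.le_add_right (al st.px i) st.K)
  have hy := st.Hx.xg_le (Nat.le_add_right (al st.py j) st.K)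
  have hx' := st.Hx.xg_le (Nat.le_add_right (al st.px k) st.K)
  have hy' := st.Hx.xg_le (Nat.le_add_right (al st.py l) st.K)
  have g1 := st.hgbil' hi hj
  have g2 := st.hgbil' hk hl
  have hR := hD
  rw [← hD] at g2
  rw [st.D'_eq hi hj] at hR g1 g2 hp
  rw [st.D'_eq hk hl] at hR
  have lx := left_mem_Icc.2 hx
  have rx := right_mem_Icc.2 hx
  have ly := left_mem_Icc.2 hy
  have ry := right_mem_Icc.2 hy
  unfold rect at hR
  rw [Set.prod_eq_prod_iff_of_nonempty ⟨(_, _), ⟨lx, ly⟩⟩] at hR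
  have e1 : xg st.N (al st.px i) = xg st.N (al st.px k) := by
    rw [← csInf_Icc hx, hR.1, csInf_Icc hx']
  have e2 : xg st.N (al st.px i + st.K) = xg st.N (al st.px k + st.K) := by
    rw [← csSup_Icc hx, hR.1, csSup_Icc hx']
  have e3 : xg st.N (al st.py j) = xg st.N (al st.py l) := by
    rw [← csInf_Icc hy, hR.2, csInf_Icc hy']
  have e4 : xg st.N (al st.py j + st.K) = xg st.N (al st.py l + st.K) := by
    rw [← csSup_Icc hy, hR.2, csSup_Icc hy']
  obtain ⟨s, hs, c1⟩ := mem_Icc_lerp hx hp.1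
  obtain ⟨t, ht, c2⟩ := mem_Icc_lerp hy hp.2
  have c : p = (xg st.N (al st.px i) + s * (xg st.N (al st.px i + st.K) - xg st.N (al st.px i)),
        xg st.N (al st.py j) + t * (xg st.N (al st.py j + st.K) - xg st.N (al st.py j))) :=
    Prod.ext c1 c2
  rw [c, bil_blend g1 lx rx ly ry (lerp_mem_Icc hx hs) (lerp_mem_Icc hy ht),
    bil_blend g2 lx rx ly ry (lerp_mem_Icc hx hs) (lerp_mem_Icc hy ht)]
  unfold bl
  rw [g_corner st hi hj (Or.inl rfl) (Or.inl rfl), g_corner st hi hj (Or.inl rfl) (Or.inr rfl),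
    g_corner st hi hj (Or.inr rfl) (Or.inl rfl), g_corner st hi hj (Or.inr rfl) (Or.inr rfl)]
  rw [e1, e2, e3, e4]
  rw [g_corner st hk hl (Or.inl rfl) (Or.inl rfl), g_corner st hk hl (Or.inl rfl) (Or.inr rfl),
    g_corner st hk hl (Or.inr rfl) (Or.inl rfl), g_corner st hk hl (Or.inr rfl) (Or.inr rfl)]

theorem dv_sum (A : Finset (ℕ × ℕ)) (F : ℕ × ℕ → ℝ × ℝ → ℝ) (x0 x1 y0 y1 s t : ℝ) :
    ∑ ij ∈ A, dv (F ij) x0 x1 y0 y1 s t = dv (fun p => ∑ ij ∈ A, F ij p) x0 x1 y0 y1 s t := by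
  simp only [dv, bl, Finset.sum_sub_distrib, Finset.sum_add_distrib, Finset.mul_sum]

theorem dv_step (hC : Core st γ cl) (r : Fin m) {n a b : ℕ} (ha : a < st.K ^ n * st.N)
    (hb : b < st.K ^ n * st.N) {s t x0 x1 y0 y1 : ℝ} (hs : s ∈ Icc (0 : ℝ) 1)
    (ht : t ∈ Icc (0 : ℝ) 1) (hx : x0 ≤ x1) (hy : y0 ≤ y1)
    (hcell : cell st.N st.K n a b = Icc x0 x1 ×ˢ Icc y0 y1) :
    γ r (cl (a / st.K ^ n) (b / st.K ^ n)) * |dv st.f x0 x1 y0 y1 s t| ≤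
      ∑ ij ∈ prs st cl r (a / st.K ^ n) (b / st.K ^ n),
        |dv (fun p => st.f (st.U ij.1 ij.2 p)) x0 x1 y0 y1 s t| := by
  have hkey := hC.key r _ (par_lt ha) _ (par_lt hb)
  have hsubp := cell_sub_par (st := st) n a b
  rw [hcell] at hsubp
  set A := prs st cl r (a / st.K ^ n) (b / st.K ^ n) with hA
  rcases A.eq_empty_or_nonempty with he | ⟨⟨k, l⟩, hkl⟩
  · have := hkey _ (cell_sub_par n a b (crn_mem n a b))
    rw [he, Finset.sum_empty] at this
    rw [← this, he]; simp
  rw [hA, mem_prs] at hkl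
  obtain ⟨⟨hk, hl⟩, -, ik, il⟩ := hkl
  simp only at hk hl ik il
  have lx := left_mem_Icc.2 hx
  have rx := right_mem_Icc.2 hx
  have ly := left_mem_Icc.2 hy
  have ry := right_mem_Icc.2 hy
  have mx := lerp_mem_Icc hx hs
  have my := lerp_mem_Icc hy ht
  -- each term
  have term : ∀ ij ∈ A, ∃ σ : ℝ, |σ| = 1 ∧
      σ * dv (fun p => st.f (st.U ij.1 ij.2 p)) x0 x1 y0 y1 s t =
      dv (fun p => |st.S (st.U ij.1 ij.2 p)| * (st.f p - st.g (k + 1) (l + 1) p))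
        x0 x1 y0 y1 s t := by
    rintro ⟨i, j⟩ hij
    rw [hA, mem_prs] at hij
    obtain ⟨⟨hi, hj⟩, -, ii, jj⟩ := hij
    simp only at hi hj ii jj ⊢
    obtain ⟨σ, hσ1, hσ⟩ := st.sign hC.steady hi hj
    refine ⟨σ, hσ1, ?_⟩
    have hsub : Icc x0 x1 ×ˢ Icc y0 y1 ⊆ st.D' i j := hsubp.trans (cell_sub_D' st hi hj ii jj)
    have e1 : dv (fun p => st.f (st.U i j p)) x0 x1 y0 y1 s t =
        dv (fun p => st.S (st.U i j p) * (st.f p - st.g (k + 1) (l + 1) p) + st.h (st.U i j p))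
          x0 x1 y0 y1 s t := by
      refine dv_congr hx hy hs ht fun p hp => ?_
      rw [st.feq hi hj (hsub hp), g_eq st hi hj hk hl
        (Inn_D'_eq st hi hj hk hl ii jj ik il) (hsub hp)]
    have e2 : dv (fun p => |st.S (st.U i j p)| * (st.f p - st.g (k + 1) (l + 1) p))
        x0 x1 y0 y1 s t = dv (fun p => σ * (st.S (st.U i j p) *
          (st.f p - st.g (k + 1) (l + 1) p))) x0 x1 y0 y1 s t := by
      refine dv_congr hx hy hs ht fun p hp => ?_
      rw [hσ _ (st.U_mem hi hj (hsub hp))]; ring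
    have e3 : dv (fun p => st.h (st.U i j p)) x0 x1 y0 y1 s t = 0 := by
      have := dv_bil (st.hhbil' hi hj) (s := s) (t := t)
        (st.U_mem hi hj (hsub (mk_mem_prod lx ly))).1 (st.U_mem hi hj (hsub (mk_mem_prod rx ly))).1
        (st.U_mem hi hj (hsub (mk_mem_prod lx ly))).2 (st.U_mem hi hj (hsub (mk_mem_prod lx ry))).2
        (by simpa only [Setup.U, usub_lerp] using (st.U_mem hi hj (hsub (mk_mem_prod mx my))).1)
        (by simpa only [Setup.U, usub_lerp] using (st.U_mem hi hj (hsub (mk_mem_prod mx my))).2)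
      rw [← this]
      simp only [dv, bl, Setup.U, usub_lerp]
    rw [e1, e2]
    have e4 := congrArg (σ * ·) e3
    simp only [dv, bl] at e4 ⊢
    linear_combination e4
  choose! σ hσ1 hσ using term
  have hg : dv (st.g (k + 1) (l + 1)) x0 x1 y0 y1 s t = 0 := by
    have hsub : Icc x0 x1 ×ˢ Icc y0 y1 ⊆ st.D' k l := hsubp.trans (cell_sub_D' st hk hl ik il)
    exact dv_bil (st.hgbil' hk hl) (hsub (mk_mem_prod lx ly)).1 (hsub (mk_mem_prod rx ly)).1 (hsub (mk_mem_prod lx ly)).2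
      (hsub (mk_mem_prod lx ry)).2 (hsub (mk_mem_prod mx my)).1 (hsub (mk_mem_prod mx my)).2
  have hsum : ∑ ij ∈ A, σ ij * dv (fun p => st.f (st.U ij.1 ij.2 p)) x0 x1 y0 y1 s t =
      γ r (cl (a / st.K ^ n) (b / st.K ^ n)) * dv st.f x0 x1 y0 y1 s t := by
    rw [Finset.sum_congr rfl hσ, dv_sum]
    rw [dv_congr (G := fun p => γ r (cl (a / st.K ^ n) (b / st.K ^ n)) *
      (st.f p - st.g (k + 1) (l + 1) p)) hx hy hs ht]
    · have e4 := congrArg (γ r (cl (a / st.K ^ n) (b / st.K ^ n)) * ·) hg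
      simp only [dv, bl] at e4 ⊢
      linear_combination -e4
    · intro p hp
      rw [← Finset.sum_mul, hkey p (hsubp hp)]
  calc _ = |γ r (cl (a / st.K ^ n) (b / st.K ^ n)) * dv st.f x0 x1 y0 y1 s t| := by
        rw [abs_mul, abs_of_nonneg (hC.nonneg _ _)]
    _ ≤ ∑ ij ∈ A, |σ ij * dv (fun p => st.f (st.U ij.1 ij.2 p)) x0 x1 y0 y1 s t| := by
        rw [← hsum]; exact Finset.abs_sum_le_sum_abs _ _
    _ = _ := by
        refine Finset.sum_congr rfl fun ij hij => ?_
        rw [abs_mul, hσ1 ij hij, one_mul]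

theorem dev_rec (hC : Core st γ cl) {s t : ℝ} (hs : s ∈ Icc (0 : ℝ) 1) (ht : t ∈ Icc (0 : ℝ) 1)
    (n : ℕ) (r : Fin m) :
    ∑ t', γ r t' * Sm st cl (devQ st s t) n t' ≤ Sm st cl (devQ st s t) (n + 1) r := by
  rw [Sm_succ, ← Sm_gamma]
  refine Finset.sum_le_sum fun a ha => Finset.sum_le_sum fun b hb => ?_
  rw [Finset.mem_range] at ha hb
  have hx := c1_le st.Hx n a
  have hy := c1_le st.Hx n b
  have k1 := dv_step hC r ha hb hs ht hx hy rfl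
  have k2 := dv_step hC r ha hb (one_sub_mem hs) ht hx hy rfl
  have k3 := dv_step hC r ha hb hs (one_sub_mem ht) hx hy rfl
  have k4 := dv_step hC r ha hb (one_sub_mem hs) (one_sub_mem ht) hx hy rfl
  have : ∀ ij ∈ prs st cl r (a / st.K ^ n) (b / st.K ^ n),
      devQ st s t (n + 1) (kap st.K st.px n ij.1 a) (kap st.K st.py n ij.2 b) = _ :=
    fun ij hij => devQ_kap (mem_prs.1 hij).1.1 (mem_prs.1 hij).1.2 (mem_prs.1 hij).2.2.1
      (mem_prs.1 hij).2.2.2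
  rw [Finset.sum_congr rfl this]
  unfold devQ q4
  simp only [Finset.sum_add_distrib, mul_add]
  linarith
end core

/-! ### Growth of matrix powers -/

section mat
attribute [local instance] Matrix.linftyOpNormedRing Matrix.linftyOpNormedAlgebra
variable {m : ℕ}

theorem map_pow_entry (A : Matrix (Fin m) (Fin m) ℝ) (n : ℕ) (i j : Fin m) :
    ((A.map (algebraMap ℝ ℂ)) ^ n) i j = (((A ^ n) i j : ℝ) : ℂ) := by
  have : (A.map (algebraMap ℝ ℂ)) ^ n = (A ^ n).map (algebraMap ℝ ℂ) := by
    simpa using (map_pow (algebraMap ℝ ℂ).mapMatrix A n).symm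
  rw [this]; rfl

theorem entry_le_norm (M : Matrix (Fin m) (Fin m) ℂ) (i j : Fin m) : ‖M i j‖ ≤ ‖M‖ := by
  rw [Matrix.linfty_opNorm_def]
  have h1 : ‖M i j‖₊ ≤ ∑ j, ‖M i j‖₊ :=
    Finset.single_le_sum (f := fun j => ‖M i j‖₊) (fun _ _ => zero_le) (Finset.mem_univ j)
  have h2 : ∑ j, ‖M i j‖₊ ≤ Finset.univ.sup fun i => ∑ j, ‖M i j‖₊ :=
    Finset.le_sup (f := fun i => ∑ j, ‖M i j‖₊) (Finset.mem_univ i)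
  exact_mod_cast h1.trans h2

theorem norm_le_entry (M : Matrix (Fin m) (Fin m) ℂ) : ‖M‖ ≤ ∑ i, ∑ j, ‖M i j‖ := by
  rw [Matrix.linfty_opNorm_def]
  have : (Finset.univ.sup fun i => ∑ j, ‖M i j‖₊) ≤ ∑ i, ∑ j, ‖M i j‖₊ := by
    refine Finset.sup_le fun i _ => ?_
    exact Finset.single_le_sum (f := fun i => ∑ j, ‖M i j‖₊) (fun _ _ => zero_le)
      (Finset.mem_univ i)
  have h2 := NNReal.coe_le_coe.2 this
  push_cast at h2
  simpa using h2

theorem specRad_bdd (A : Matrix (Fin m) (Fin m) ℝ) :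
    BddAbove {x : ℝ | ∃ μ ∈ spectrum ℂ (A.map (algebraMap ℝ ℂ)), x = ‖μ‖} := by
  have hc : IsCompact (spectrum ℂ (A.map (algebraMap ℝ ℂ))) := spectrum.isCompact _
  have h2 := (hc.image continuous_norm).bddAbove
  have e : {x : ℝ | ∃ μ ∈ spectrum ℂ (A.map (algebraMap ℝ ℂ)), x = ‖μ‖} =
      (fun a => ‖a‖) '' spectrum ℂ (A.map (algebraMap ℝ ℂ)) := by
    ext x; simp [eq_comm]
  rw [e]; exact h2

theorem pow_upper (A : Matrix (Fin m) (Fin m) ℝ) {θ : ℝ} (hθ0 : 0 < θ) (hθ : specRad A < θ) :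
    ∃ C : ℝ, 0 ≤ C ∧ ∀ n i j, |(A ^ n) i j| ≤ C * θ ^ n := by
  set M := A.map (algebraMap ℝ ℂ) with hM
  have h1 : spectralRadius ℂ M < ENNReal.ofReal θ := by
    have : spectralRadius ℂ M ≤ ENNReal.ofReal (specRad A) := by
      refine iSup₂_le fun k hk => ?_
      rw [← ENNReal.ofReal_coe_nnreal]
      refine ENNReal.ofReal_le_ofReal ?_
      exact le_csSup (specRad_bdd A) ⟨k, hk, rfl⟩
    exact this.trans_lt ((ENNReal.ofReal_lt_ofReal_iff hθ0).2 hθ)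
  have hG := spectrum.pow_nnnorm_pow_one_div_tendsto_nhds_spectralRadius M
  have hev := hG.eventually (gt_mem_nhds h1)
  obtain ⟨n0, hn0⟩ := eventually_atTop.1 hev
  have key : ∀ n, n0 + 1 ≤ n → ‖M ^ n‖ ≤ θ ^ n := by
    intro n hn
    have h2 := (hn0 n (by omega)).le
    have hn' : (0 : ℝ) < n := by exact_mod_cast (by omega : 0 < n)
    have h3 := ENNReal.rpow_le_rpow h2 hn'.le
    rw [← ENNReal.rpow_mul, one_div, inv_mul_cancel₀ hn'.ne', ENNReal.rpow_one,
      ENNReal.rpow_natCast, ← ENNReal.ofReal_pow hθ0.le, ← ENNReal.ofReal_coe_nnreal] at h3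
    exact (ENNReal.ofReal_le_ofReal_iff (by positivity)).1 h3
  refine ⟨1 + ∑ k ∈ Finset.range (n0 + 1), ‖M ^ k‖ / θ ^ k, by positivity, fun n i j => ?_⟩
  have h4 : |(A ^ n) i j| ≤ ‖M ^ n‖ := by
    have := entry_le_norm (M ^ n) i j
    rwa [hM, map_pow_entry, Complex.norm_real, Real.norm_eq_abs] at this
  refine h4.trans ?_
  have hp : 0 < θ ^ n := by positivity
  by_cases hn : n0 + 1 ≤ n
  · refine (key n hn).trans ?_
    have : (0 : ℝ) ≤ ∑ k ∈ Finset.range (n0 + 1), ‖M ^ k‖ / θ ^ k :=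
      Finset.sum_nonneg fun k _ => by positivity
    nlinarith
  · have : ‖M ^ n‖ / θ ^ n ≤ ∑ k ∈ Finset.range (n0 + 1), ‖M ^ k‖ / θ ^ k :=
      Finset.single_le_sum (f := fun k => ‖M ^ k‖ / θ ^ k) (fun k _ => by positivity)
        (Finset.mem_range.2 (by omega))
    rw [div_le_iff₀ hp] at this
    nlinarith

theorem pow_lower (A : Matrix (Fin m) (Fin m) ℝ) (hρ : 0 < specRad A) :
    ∃ c : ℝ, 0 < c ∧ ∀ n, c * specRad A ^ n ≤ ∑ i, ∑ j, |(A ^ n) i j| := by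
  set M := A.map (algebraMap ℝ ℂ) with hM
  have hset : {x : ℝ | ∃ μ ∈ spectrum ℂ M, x = ‖μ‖} = (fun μ => ‖μ‖) '' spectrum ℂ M := by
    ext x; simp [eq_comm]
  have hne : (spectrum ℂ M).Nonempty := by
    by_contra h
    rw [not_nonempty_iff_eq_empty] at h
    simp only [specRad, ← hM, h] at hρ
    simp at hρ
  have hmem : specRad A ∈ (fun μ => ‖μ‖) '' spectrum ℂ M := by
    have hc : IsCompact (spectrum ℂ M) := spectrum.isCompact _
    have := (hc.image continuous_norm).sSup_mem (hne.image _)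
    rw [← hset] at this ⊢
    exact this
  obtain ⟨μ, hμ, e⟩ := hmem
  refine ⟨1 / (‖(1 : Matrix (Fin m) (Fin m) ℂ)‖ + 1), by positivity, fun n => ?_⟩
  have h1 : μ ^ n ∈ spectrum ℂ (M ^ n) := spectrum.pow_mem_pow M n hμ
  have h2 := spectrum.norm_le_norm_mul_of_mem h1
  rw [norm_pow] at h2
  simp only at e
  rw [e] at h2
  have h3 := norm_le_entry (M ^ n)
  have h4 : ∑ i, ∑ j, ‖(M ^ n) i j‖ = ∑ i, ∑ j, |(A ^ n) i j| := by
    refine Finset.sum_congr rfl fun i _ => Finset.sum_congr rfl fun j _ => ?_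
    rw [hM, map_pow_entry, Complex.norm_real, Real.norm_eq_abs]
  rw [h4] at h3
  rw [div_mul_eq_mul_div, one_mul, div_le_iff₀ (by positivity)]
  have : 0 ≤ ‖M ^ n‖ := norm_nonneg _
  have h5 : 0 ≤ ‖(1 : Matrix (Fin m) (Fin m) ℂ)‖ := norm_nonneg _
  refine h2.trans ?_
  refine (mul_le_mul_of_nonneg_right h3 h5).trans ?_
  nlinarith
end mat

/-! ### Growth of the oscillation sums -/

section growth
variable {st : Setup} {m : ℕ} {γ : Fin m → Fin m → ℝ} {cl : ℕ → ℕ → Fin m}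

theorem pow_entry_nonneg (hγ : ∀ r t, 0 ≤ γ r t) (n : ℕ) (r t : Fin m) :
    0 ≤ (Matrix.of γ ^ n) r t := by
  induction n generalizing r t with
  | zero =>
    rw [pow_zero, Matrix.one_apply]; split_ifs <;> norm_num
  | succ n ih =>
    rw [pow_succ, Matrix.mul_apply]
    exact Finset.sum_nonneg fun k _ => mul_nonneg (ih _ _) (hγ _ _)

theorem Sm_nonneg {Q : ℕ → ℕ → ℕ → ℝ} {n : ℕ}
    (hQ : ∀ a b, a < st.K ^ n * st.N → b < st.K ^ n * st.N → 0 ≤ Q n a b) (r : Fin m) :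
    0 ≤ Sm st cl Q n r := by
  unfold Sm
  refine Finset.sum_nonneg fun a ha => Finset.sum_nonneg fun b hb => ?_
  rw [Finset.mem_range] at ha hb
  split_ifs
  · exact hQ a b ha hb
  · exact le_rfl

theorem Tot_nonneg (n : ℕ) : 0 ≤ Tot st (oscQ st) n := by
  unfold Tot
  refine Finset.sum_nonneg fun a ha => Finset.sum_nonneg fun b hb => ?_
  rw [Finset.mem_range] at ha hb
  exact oscQ_nonneg ha hb

theorem tot_upper (hC : Core st γ cl) {θ : ℝ} (hK : (st.K : ℝ) < θ)
    (hθ : specRad (Matrix.of γ) < θ) :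
    ∃ C : ℝ, 0 ≤ C ∧ ∀ n, Tot st (oscQ st) n ≤ C * θ ^ n := by
  have hK0 := st.Hx.Kpos
  have hθ0 : 0 < θ := hK0.trans hK
  obtain ⟨C1, hC1, hpow⟩ := pow_upper (Matrix.of γ) hθ0 hθ
  obtain ⟨C, hC0, hrec⟩ := osc_rec hC
  set O := fun n r => Sm st cl (oscQ st) n r with hO
  have hO0 : ∀ n r, 0 ≤ O n r := fun n r => Sm_nonneg (fun a b ha hb => oscQ_nonneg ha hb) r
  set A := Matrix.of γ with hA
  have hA0 := pow_entry_nonneg (γ := γ) hC.nonneg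
  rw [← hA] at hA0
  have hAle : ∀ j r t, (A ^ j) r t ≤ C1 * θ ^ j := fun j r t => (le_abs_self _).trans (hpow j r t)
  set F := C * (m * C1) / (θ - st.K) with hF
  have hd : 0 < θ - st.K := by linarith
  have hFe : F * (θ - st.K) = C * (m * C1) := by rw [hF]; field_simp
  have hF0 : 0 ≤ F := by positivity
  set E0 := C1 * ∑ t, O 0 t with hE0
  have hE00 : 0 ≤ E0 := mul_nonneg hC1 (Finset.sum_nonneg fun t _ => hO0 0 t)
  have main : ∀ n j r, ∑ t, (A ^ j) r t * O n t ≤ θ ^ j * ((E0 + F) * θ ^ n - F * (st.K : ℝ) ^ n) := by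
    intro n
    induction n with
    | zero =>
      intro j r
      simp only [pow_zero, mul_one, add_sub_cancel_right]
      rw [hE0, Finset.mul_sum, Finset.mul_sum]
      refine Finset.sum_le_sum fun t _ => ?_
      have := mul_le_mul_of_nonneg_right (hAle j r t) (hO0 0 t)
      linarith
    | succ n ih =>
      intro j r
      have h1 : ∑ t, (A ^ j) r t * O (n + 1) t ≤
          ∑ t, (A ^ j) r t * (∑ u, γ t u * O n u + C * (st.K : ℝ) ^ n) :=
        Finset.sum_le_sum fun t _ => mul_le_mul_of_nonneg_left (hrec n t) (hA0 j r t)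
      have h2 : ∑ t, (A ^ j) r t * (∑ u, γ t u * O n u + C * (st.K : ℝ) ^ n) =
          ∑ u, (A ^ (j + 1)) r u * O n u + (∑ t, (A ^ j) r t) * (C * (st.K : ℝ) ^ n) := by
        simp only [mul_add, Finset.sum_add_distrib, Finset.mul_sum, Finset.sum_mul]
        congr 1
        rw [Finset.sum_comm]
        refine Finset.sum_congr rfl fun u _ => ?_
        rw [pow_succ, Matrix.mul_apply, Finset.sum_mul]
        refine Finset.sum_congr rfl fun t _ => ?_
        rw [hA, Matrix.of_apply]; ring
      have h3 : ∑ t, (A ^ j) r t ≤ m * (C1 * θ ^ j) := by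
        refine (Finset.sum_le_sum fun t _ => hAle j r t).trans ?_
        simp
      have h4 : (∑ t, (A ^ j) r t) * (C * (st.K : ℝ) ^ n) ≤
          m * (C1 * θ ^ j) * (C * (st.K : ℝ) ^ n) :=
        mul_le_mul_of_nonneg_right h3 (by positivity)
      have h5 := ih (j + 1) r
      have h6 : θ ^ (j + 1) * ((E0 + F) * θ ^ n - F * (st.K : ℝ) ^ n) +
          m * (C1 * θ ^ j) * (C * (st.K : ℝ) ^ n) =
          θ ^ j * ((E0 + F) * θ ^ (n + 1) - F * (st.K : ℝ) ^ (n + 1)) := by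
        have : m * (C1 * θ ^ j) * (C * (st.K : ℝ) ^ n) =
            F * (θ - st.K) * θ ^ j * (st.K : ℝ) ^ n := by rw [hFe]; ring
        rw [this]; ring
      linarith
  refine ⟨m * (E0 + F), by positivity, fun n => ?_⟩
  rw [← Sm_tot (cl := cl)]
  have : ∀ r, Sm st cl (oscQ st) n r ≤ (E0 + F) * θ ^ n := by
    intro r
    have h := main n 0 r
    simp only [pow_zero, Matrix.one_apply, ite_mul, one_mul, zero_mul, Finset.sum_ite_eq,
      Finset.mem_univ, if_true] at h
    have : 0 ≤ F * (st.K : ℝ) ^ n := by positivity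
    simp only [hO] at h
    linarith
  refine (Finset.sum_le_sum fun r _ => this r).trans ?_
  simp [mul_assoc]

theorem c1_sub_up (n a : ℕ) : c1 st.N st.K (n + 1) a ⊆ c1 st.N st.K n (a / st.K) := by
  have h1 := st.Hx.Npos
  have h2 := st.Hx.Kpos
  have h3 : (0 : ℝ) < (st.K : ℝ) ^ n := by positivity
  have hk : 0 < st.K := by exact_mod_cast h2
  have e1 : st.K * (a / st.K) ≤ a := Nat.mul_div_le a st.K
  have e2 : a + 1 ≤ st.K * (a / st.K + 1) := Nat.lt_mul_div_succ a hk
  have e1' : (st.K : ℝ) * ((a / st.K : ℕ) : ℝ) ≤ a := by exact_mod_cast e1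
  have e2' : (a : ℝ) + 1 ≤ st.K * (((a / st.K : ℕ) : ℝ) + 1) := by exact_mod_cast e2
  refine Icc_subset_Icc ?_ ?_
  · rw [div_le_div_iff₀ (by positivity) (by positivity), pow_succ]
    have := mul_le_mul_of_nonneg_right e1' (by positivity : 0 ≤ (st.K : ℝ) ^ n * st.N)
    linarith
  · rw [div_le_div_iff₀ (by positivity) (by positivity), pow_succ]
    have := mul_le_mul_of_nonneg_right e2' (by positivity : 0 ≤ (st.K : ℝ) ^ n * st.N)
    linarith

theorem sum_div (A K : ℕ) (hK : 0 < K) (F : ℕ → ℝ) :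
    ∑ a ∈ Finset.range (A * K), F (a / K) = K * ∑ a ∈ Finset.range A, F a := by
  rw [sum_range_mul_aux, Finset.mul_sum]
  refine Finset.sum_congr rfl fun i _ => ?_
  have : ∀ x ∈ Finset.range K, F ((i * K + x) / K) = F i := by
    intro x hx
    rw [Finset.mem_range] at hx
    congr 1
    rw [Nat.mul_comm, Nat.mul_add_div hK, Nat.div_eq_of_lt hx, add_zero]
  rw [Finset.sum_congr rfl this]; simp

theorem Tot_succ (n : ℕ) : Tot st (oscQ st) (n + 1) ≤ (st.K : ℝ) ^ 2 * Tot st (oscQ st) n := by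
  have hk : 0 < st.K := st.Hx.hK.trans' (by norm_num)
  have e : st.K ^ (n + 1) * st.N = st.K ^ n * st.N * st.K := by ring
  have step : ∀ a ∈ Finset.range (st.K ^ (n + 1) * st.N),
      ∀ b ∈ Finset.range (st.K ^ (n + 1) * st.N),
      oscQ st (n + 1) a b ≤ oscQ st n (a / st.K) (b / st.K) := by
    intro a ha b hb
    rw [Finset.mem_range, e] at ha hb
    have ha' : a / st.K < st.K ^ n * st.N := Nat.div_lt_of_lt_mul (by rwa [mul_comm])
    have hb' : b / st.K < st.K ^ n * st.N := Nat.div_lt_of_lt_mul (by rwa [mul_comm])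
    have hs : cell st.N st.K (n + 1) a b ⊆ cell st.N st.K n (a / st.K) (b / st.K) :=
      prod_mono (c1_sub_up n a) (c1_sub_up n b)
    exact Osc_le ⟨_, crn_mem _ a b⟩ fun p hp q hq =>
      le_Osc (cell_sub_sq ha' hb') (hs hp) (hs hq)
  refine (Finset.sum_le_sum fun a ha => Finset.sum_le_sum fun b hb => step a ha b hb).trans ?_
  rw [e]
  have : ∀ a, ∑ b ∈ Finset.range (st.K ^ n * st.N * st.K), oscQ st n (a / st.K) (b / st.K) =
      st.K * ∑ b ∈ Finset.range (st.K ^ n * st.N), oscQ st n (a / st.K) b := fun a =>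
    sum_div _ _ hk (fun b => oscQ st n (a / st.K) b)
  simp_rw [this]
  rw [sum_div _ _ hk (fun a => (st.K : ℝ) *
    ∑ b ∈ Finset.range (st.K ^ n * st.N), oscQ st n a b), ← Finset.mul_sum]
  unfold Tot
  apply le_of_eq; ring

theorem Tot_add (n l : ℕ) :
    Tot st (oscQ st) (n + l) ≤ ((st.K : ℝ) ^ 2) ^ l * Tot st (oscQ st) n := by
  induction l with
  | zero => simp
  | succ l ih =>
    rw [← add_assoc]
    refine (Tot_succ (n + l)).trans ?_
    rw [pow_succ _ l, mul_comm _ ((st.K : ℝ) ^ 2), mul_assoc]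
    exact mul_le_mul_of_nonneg_left ih (by positivity)

theorem dev_iter (hC : Core st γ cl) {s t : ℝ} (hs : s ∈ Icc (0 : ℝ) 1) (ht : t ∈ Icc (0 : ℝ) 1)
    (l n : ℕ) (r : Fin m) :
    ∑ u, (Matrix.of γ ^ n) r u * Sm st cl (devQ st s t) l u ≤
      Sm st cl (devQ st s t) (n + l) r := by
  induction n generalizing r with
  | zero => simp [Matrix.one_apply]
  | succ n ih =>
    have h := dev_rec hC hs ht (n + l) r
    rw [show n + 1 + l = n + l + 1 by ring]
    refine le_trans ?_ h
    have h2 := Finset.sum_le_sum fun u (_ : u ∈ Finset.univ) =>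
      mul_le_mul_of_nonneg_left (ih u) (hC.nonneg r u)
    refine le_trans (le_of_eq ?_) h2
    simp only [Finset.mul_sum]
    rw [Finset.sum_comm]
    refine Finset.sum_congr rfl fun u _ => ?_
    rw [pow_succ', Matrix.mul_apply, Finset.sum_mul]
    refine Finset.sum_congr rfl fun v _ => ?_
    rw [Matrix.of_apply]; ring

theorem tot_lower (hC : Core st γ cl) (hirr : ∀ r t : Fin m, IsPathFrom γ t r)
    (hρ : 0 < specRad (Matrix.of γ)) {s t : ℝ} (hs : s ∈ Icc (0 : ℝ) 1)
    (ht : t ∈ Icc (0 : ℝ) 1) {r0 : Fin m} (h0 : 0 < Sm st cl (devQ st s t) 0 r0) :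
    ∃ c : ℝ, 0 < c ∧ ∀ n, c * specRad (Matrix.of γ) ^ n ≤ Tot st (oscQ st) n := by
  have hW0 : ∀ n r, 0 ≤ Sm st cl (devQ st s t) n r := fun n r =>
    Sm_nonneg (fun a b _ _ => devQ_nonneg s t n a b) r
  have hpos : ∀ r, ∃ l, 0 < Sm st cl (devQ st s t) l r := by
    intro r
    obtain ⟨n, -, c, hc0, hcn, hc⟩ := hirr r r0
    refine ⟨n, ?_⟩
    have : ∀ k ≤ n, 0 < Sm st cl (devQ st s t) k (c k) := by
      intro k
      induction k with
      | zero => intro _; rwa [hc0]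
      | succ k ih =>
        intro hk
        refine lt_of_lt_of_le ?_ (dev_rec hC hs ht k (c (k + 1)))
        have h1 := hc (k + 1) (by omega) hk
        rw [Nat.add_sub_cancel] at h1
        refine lt_of_lt_of_le (mul_pos h1 (ih (by omega))) ?_
        exact Finset.single_le_sum
          (f := fun t' => γ (c (k + 1)) t' * Sm st cl (devQ st s t) k t')
          (fun u _ => mul_nonneg (hC.nonneg _ _) (hW0 _ _)) (Finset.mem_univ _)
    rw [← hcn]; exact this n le_rfl
  choose l hl using hpos
  have hle : ∀ n, Tot st (devQ st s t) n ≤ 4 * Tot st (oscQ st) n := by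
    intro n
    unfold Tot
    simp only [Finset.mul_sum]
    refine Finset.sum_le_sum fun a ha => Finset.sum_le_sum fun b hb => ?_
    rw [Finset.mem_range] at ha hb
    exact devQ_le hs ht ha hb
  have hA0 := pow_entry_nonneg (γ := γ) hC.nonneg
  have col : ∀ n u, ∑ r, (Matrix.of γ ^ n) r u ≤
      4 * ((st.K : ℝ) ^ 2) ^ (l u) / Sm st cl (devQ st s t) (l u) u * Tot st (oscQ st) n := by
    intro n u
    have h1 : ∑ r, (Matrix.of γ ^ n) r u * Sm st cl (devQ st s t) (l u) u ≤
        Tot st (devQ st s t) (n + l u) := by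
      rw [← Sm_tot (cl := cl)]
      refine Finset.sum_le_sum fun r _ => le_trans ?_ (dev_iter hC hs ht (l u) n r)
      exact Finset.single_le_sum
        (f := fun v => (Matrix.of γ ^ n) r v * Sm st cl (devQ st s t) (l u) v)
        (fun v _ => mul_nonneg (hA0 _ _ _) (hW0 _ _)) (Finset.mem_univ u)
    rw [← Finset.sum_mul] at h1
    have h2 := h1.trans ((hle _).trans (mul_le_mul_of_nonneg_left (Tot_add n (l u))
      (by norm_num : (0 : ℝ) ≤ 4)))
    rw [div_mul_eq_mul_div, le_div_iff₀ (hl u)]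
    linarith
  obtain ⟨c, hc, hlow⟩ := pow_lower (Matrix.of γ) hρ
  set D := ∑ u, 4 * ((st.K : ℝ) ^ 2) ^ (l u) / Sm st cl (devQ st s t) (l u) u with hD
  have hD0 : 0 ≤ D := Finset.sum_nonneg fun u _ => by have := (hl u).le; positivity
  refine ⟨c / (D + 1), by positivity, fun n => ?_⟩
  rw [div_mul_eq_mul_div, div_le_iff₀ (by positivity)]
  refine (hlow n).trans ?_
  have e : ∑ i, ∑ j, |(Matrix.of γ ^ n) i j| = ∑ u, ∑ r, (Matrix.of γ ^ n) r u := by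
    refine Finset.sum_comm.trans ?_
    refine Finset.sum_congr rfl fun u _ => Finset.sum_congr rfl fun r _ => ?_
    exact abs_of_nonneg (hA0 _ _ _)
  rw [e]
  refine (Finset.sum_le_sum fun u _ => col n u).trans ?_
  rw [← Finset.sum_mul]
  have := Tot_nonneg (st := st) n
  nlinarith
end growth

/-! ### Degenerate and non-degenerate cases -/

section degen
variable {st : Setup} {m : ℕ} {γ : Fin m → Fin m → ℝ} {cl : ℕ → ℕ → Fin m}

/-- the degeneracy condition for one pair (0-based indices) -/
def Zp (st : Setup) (i j : ℕ) : Prop :=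
  (st.s i j = 0 ∧ st.s i (j + 1) = 0 ∧ st.s (i + 1) j = 0 ∧ st.s (i + 1) (j + 1) = 0) ∨
    (∀ p ≤ st.N, ∀ q ≤ st.N, (xg st.N p, xg st.N q) ∈ st.D' i j →
      st.z p q = st.g (i + 1) (j + 1) (xg st.N p, xg st.N q))

theorem Zp_of_degen {i j : ℕ} (h : DegenPair st (i + 1) (j + 1)) : Zp st i j := by
  have := h (i + 1, j + 1) (Or.inl rfl)
  exact this

theorem exists_not_Zp {i j : ℕ} (hi : 1 ≤ i) (hi' : i ≤ st.N) (hj : 1 ≤ j) (hj' : j ≤ st.N)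
    (h : ¬ DegenPair st i j) : ∃ k < st.N, ∃ l < st.N, ¬ Zp st k l := by
  by_contra hcon
  push Not at hcon
  apply h
  have key : ∀ k l, 1 ≤ k → k ≤ st.N → 1 ≤ l → l ≤ st.N →
      (st.s (k - 1) (l - 1) = 0 ∧ st.s (k - 1) l = 0 ∧
        st.s k (l - 1) = 0 ∧ st.s k l = 0) ∨
      (∀ p ≤ st.N, ∀ q ≤ st.N, (xg st.N p, xg st.N q) ∈ Dij' st.N st.px st.py k l →
        st.z p q = st.g k l (xg st.N p, xg st.N q)) := by
    intro k l hk hk' hl hl'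
    have := hcon (k - 1) (by omega) (l - 1) (by omega)
    unfold Zp Setup.D' at this
    rwa [Nat.sub_add_cancel hk, Nat.sub_add_cancel hl] at this
  rintro ⟨k, l⟩ (hkl | ⟨n, hn, c, hc0, hcn, hr, -⟩)
  · obtain ⟨rfl, rfl⟩ := Prod.mk.inj hkl
    exact key _ _ hi hi' hj hj'
  · have := hr n le_rfl
    rw [hcn] at this
    exact key _ _ this.1 this.2.1 this.2.2.1 this.2.2.2

theorem usub_corner {N K : ℕ} {p : ℕ → ℕ} (H : H1 N K p) {i : ℕ} (hi : i < N) :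
    (usub N p (i + 1) (xg N (al p i)) = xg N i ∧
      usub N p (i + 1) (xg N (al p i + K)) = xg N (i + 1)) ∨
    (usub N p (i + 1) (xg N (al p i)) = xg N (i + 1) ∧
      usub N p (i + 1) (xg N (al p i + K)) = xg N i) := by
  have h1 := H.Npos
  have h2 := H.Kpos
  rw [H.usub_eq hi, H.usub_eq hi]
  unfold xg
  push_cast
  split_ifs
  · left; constructor <;> field_simp <;> ring
  · right; constructor <;> field_simp <;> ring

theorem cover1 {N : ℕ} {x : ℝ} (a n : ℕ) (hx : x ∈ Icc (xg N a) (xg N (a + n + 1))) :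
    ∃ c, a ≤ c ∧ c < a + n + 1 ∧ x ∈ Icc (xg N c) (xg N (c + 1)) := by
  induction n with
  | zero => exact ⟨a, le_rfl, by omega, hx⟩
  | succ n ih =>
    rcases le_total x (xg N (a + n + 1)) with h | h
    · obtain ⟨c, h1, h2, h3⟩ := ih ⟨hx.1, h⟩
      exact ⟨c, h1, by omega, h3⟩
    · exact ⟨a + n + 1, by omega, by omega, h, hx.2⟩

theorem bl_pos_zero {a b c d s t : ℝ} (hs : s ∈ Ioo (0 : ℝ) 1) (ht : t ∈ Ioo (0 : ℝ) 1)
    (ha : 0 ≤ a) (hb : 0 ≤ b) (hc : 0 ≤ c) (hd : 0 ≤ d)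
    (h : (1 - s) * (1 - t) * a + s * (1 - t) * b + (1 - s) * t * c + s * t * d = 0) :
    a = 0 ∧ b = 0 ∧ c = 0 ∧ d = 0 := by
  have hs1 : 0 < s := hs.1
  have hs2 : 0 < 1 - s := by linarith [hs.2]
  have ht1 : 0 < t := ht.1
  have ht2 : 0 < 1 - t := by linarith [ht.2]
  have p1 := mul_pos hs2 ht2
  have p2 := mul_pos hs1 ht2
  have p3 := mul_pos hs2 ht1
  have p4 := mul_pos hs1 ht1
  have q1 := mul_nonneg p1.le ha
  have q2 := mul_nonneg p2.le hb
  have q3 := mul_nonneg p3.le hc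
  have q4 := mul_nonneg p4.le hd
  refine ⟨?_, ?_, ?_, ?_⟩
  · exact (mul_eq_zero.1 (by linarith : (1 - s) * (1 - t) * a = 0)).resolve_left p1.ne'
  · exact (mul_eq_zero.1 (by linarith : s * (1 - t) * b = 0)).resolve_left p2.ne'
  · exact (mul_eq_zero.1 (by linarith : (1 - s) * t * c = 0)).resolve_left p3.ne'
  · exact (mul_eq_zero.1 (by linarith : s * t * d = 0)).resolve_left p4.ne'

theorem Ioo_lerp {x y q : ℝ} (hq : q ∈ Ioo x y) :
    ∃ s ∈ Ioo (0 : ℝ) 1, q = x + s * (y - x) := by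
  have h : 0 < y - x := by linarith [hq.1, hq.2]
  refine ⟨(q - x) / (y - x), ⟨div_pos (by linarith [hq.1]) h, ?_⟩, ?_⟩
  · rw [div_lt_one h]; linarith [hq.2]
  · field_simp; ring

theorem bil_cont {F : ℝ × ℝ → ℝ} {E : Set (ℝ × ℝ)} (hF : IsBilinearOn F E) : ContinuousOn F E := by
  obtain ⟨a, b, c, d, h⟩ := hF
  refine ContinuousOn.congr ?_ h
  fun_prop

theorem exists_dv (hst : Steady st) {k l : ℕ} (hk : k < st.N) (hl : l < st.N)
    (hZ : ¬ Zp st k l) : ∃ s ∈ Icc (0 : ℝ) 1, ∃ t ∈ Icc (0 : ℝ) 1,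
      dv st.f (xg st.N k) (xg st.N (k + 1)) (xg st.N l) (xg st.N (l + 1)) s t ≠ 0 := by
  by_contra hcon
  push Not at hcon
  unfold Zp at hZ
  push Not at hZ
  obtain ⟨hS, P, hP, Q, hQ, hPQ, hne⟩ := hZ
  have hfh : ∀ q ∈ st.D k l, st.f q = st.h q := by
    intro q hq
    obtain ⟨s, hs, t, ht, e1, e2⟩ := st.D_blend (st.hhbil' hk hl) hq
    have := hcon s hs t ht
    unfold dv at this
    rw [← e1] at this
    rw [e2, sub_eq_zero.1 this]
    unfold bl
    rw [st.hfval, st.hfval, st.hfval, st.hfval, st.hhval, st.hhval, st.hhval, st.hhval] <;> omega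
  have hx := st.Hx.xg_lt (Nat.lt_add_of_pos_right (n := al st.px k)
    (by have := st.hK; omega : 0 < st.K))
  have hy := st.Hx.xg_lt (Nat.lt_add_of_pos_right (n := al st.py l)
    (by have := st.hK; omega : 0 < st.K))
  have lx := left_mem_Icc.2 hx.le
  have rx := right_mem_Icc.2 hx.le
  have ly := left_mem_Icc.2 hy.le
  have ry := right_mem_Icc.2 hy.le
  have hD' := st.D'_eq hk hl
  unfold rect at hD'
  obtain ⟨σ, hσ1, hσ⟩ := st.sign hst hk hl
  have hSne : ∀ p ∈ Ioo (xg st.N (al st.px k)) (xg st.N (al st.px k + st.K)) ×ˢ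
      Ioo (xg st.N (al st.py l)) (xg st.N (al st.py l + st.K)), st.S (st.U k l p) ≠ 0 := by
    intro p hp h0
    obtain ⟨s, hs, es⟩ := Ioo_lerp hp.1
    obtain ⟨t, ht, et⟩ := Ioo_lerp hp.2
    have mem : ∀ q ∈ Icc (xg st.N (al st.px k)) (xg st.N (al st.px k + st.K)) ×ˢ
      Icc (xg st.N (al st.py l)) (xg st.N (al st.py l + st.K)), st.U k l q ∈ st.D k l :=
      fun q hq => st.U_mem hk hl (by rw [hD']; exact hq)
    have m00 := mem (_, _) (mk_mem_prod lx ly)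
    have m10 := mem (_, _) (mk_mem_prod rx ly)
    have m01 := mem (_, _) (mk_mem_prod lx ry)
    have m11 := mem (_, _) (mk_mem_prod rx ry)
    have mm := mem p ⟨Ioo_subset_Icc_self hp.1, Ioo_subset_Icc_self hp.2⟩
    have e : st.U k l p = (usub st.N st.px (k + 1) (xg st.N (al st.px k)) + s *
          (usub st.N st.px (k + 1) (xg st.N (al st.px k + st.K)) -
            usub st.N st.px (k + 1) (xg st.N (al st.px k))),
        usub st.N st.py (l + 1) (xg st.N (al st.py l)) + t *
          (usub st.N st.py (l + 1) (xg st.N (al st.py l + st.K)) -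
            usub st.N st.py (l + 1) (xg st.N (al st.py l)))) := by
      unfold Setup.U
      rw [es, et, usub_lerp, usub_lerp]
    rw [e] at mm h0
    have hb := bil_blend (st.hSbil' hk hl) m00.1 m10.1 m00.2 m01.2 mm.1 mm.2
    simp only [Setup.U] at hb
    rw [hb] at h0
    have h1 := congrArg (σ * ·) h0
    simp only [bl, mul_zero] at h1
    have s00 := hσ _ m00
    have s10 := hσ _ m10
    have s01 := hσ _ m01
    have s11 := hσ _ m11
    simp only [Setup.U] at s00 s10 s01 s11
    have h2 := bl_pos_zero hs ht (le_of_le_of_eq (abs_nonneg _) s00)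
      (le_of_le_of_eq (abs_nonneg _) s10) (le_of_le_of_eq (abs_nonneg _) s01)
      (le_of_le_of_eq (abs_nonneg _) s11) (by rw [← h1]; ring)
    have hσ0 : σ ≠ 0 := by
      rintro rfl
      simp at hσ1
    simp only [mul_eq_zero, hσ0, false_or] at h2
    rcases usub_corner st.Hx hk with ⟨a1, a2⟩ | ⟨a1, a2⟩ <;>
    rcases usub_corner st.Hy hl with ⟨a3, a4⟩ | ⟨a3, a4⟩ <;>
    rw [a1, a2, a3, a4, st.hSval _ (by omega) _ (by omega), st.hSval _ (by omega) _ (by omega),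
      st.hSval _ (by omega) _ (by omega), st.hSval _ (by omega) _ (by omega)] at h2 <;>
    tauto
  have hEq : EqOn st.f (st.g (k + 1) (l + 1))
      (Ioo (xg st.N (al st.px k)) (xg st.N (al st.px k + st.K)) ×ˢ
      Ioo (xg st.N (al st.py l)) (xg st.N (al st.py l + st.K))) := by
    intro p hp
    have hp' : p ∈ st.D' k l := by
      rw [hD']; exact ⟨Ioo_subset_Icc_self hp.1, Ioo_subset_Icc_self hp.2⟩
    have h1 := st.feq hk hl hp'
    rw [hfh _ (st.U_mem hk hl hp')] at h1
    have h2 : st.S (st.U k l p) * (st.f p - st.g (k + 1) (l + 1) p) = 0 := by linarith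
    exact sub_eq_zero.1 ((mul_eq_zero.1 h2).resolve_left (hSne p hp))
  have hEq2 : EqOn st.f (st.g (k + 1) (l + 1)) (st.D' k l) := by
    refine hEq.of_subset_closure (st.hfcont.mono (st.D'_sub_sq hk hl))
      (bil_cont (st.hgbil' hk hl)) ?_ ?_
    · rw [hD']; exact prod_mono Ioo_subset_Icc_self Ioo_subset_Icc_self
    · rw [closure_prod_eq, closure_Ioo hx.ne, closure_Ioo hy.ne, hD']
  apply hne
  rw [← hEq2 hPQ, st.hfval P hP Q hQ]

theorem W0_pos (hst : Steady st) (cl : ℕ → ℕ → Fin m) {k l : ℕ} (hk : k < st.N) (hl : l < st.N)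
    (hZ : ¬ Zp st k l) : ∃ s ∈ Icc (0 : ℝ) 1, ∃ t ∈ Icc (0 : ℝ) 1,
      0 < Sm st cl (devQ st s t) 0 (cl k l) := by
  obtain ⟨s, hs, t, ht, hd⟩ := exists_dv hst hk hl hZ
  refine ⟨s, hs, t, ht, ?_⟩
  have h1 : 0 < devQ st s t 0 k l := by
    have e : dv st.f ((k : ℝ) / ((st.K : ℝ) ^ 0 * st.N)) (((k : ℝ) + 1) / ((st.K : ℝ) ^ 0 * st.N))
      ((l : ℝ) / ((st.K : ℝ) ^ 0 * st.N)) (((l : ℝ) + 1) / ((st.K : ℝ) ^ 0 * st.N)) s t ≠ 0 := by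
      simpa [xg] using hd
    unfold devQ q4
    have := abs_pos.2 e
    positivity
  refine lt_of_lt_of_le h1 ?_
  have nn : ∀ a b, 0 ≤ (if cl (a / st.K ^ 0) (b / st.K ^ 0) = cl k l then devQ st s t 0 a b
      else 0) := by
    intro a b
    split_ifs
    · exact devQ_nonneg _ _ _ _ _
    · exact le_rfl
  have h2 : devQ st s t 0 k l = (if cl (k / st.K ^ 0) (l / st.K ^ 0) = cl k l then
    devQ st s t 0 k l else 0) := by simp
  rw [h2]
  unfold Sm
  refine le_trans ?_ (Finset.single_le_sum (f := fun a => ∑ b ∈ Finset.range (st.K ^ 0 * st.N),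
    if cl (a / st.K ^ 0) (b / st.K ^ 0) = cl k l then devQ st s t 0 a b else 0)
    (fun a _ => Finset.sum_nonneg fun b _ => nn a b) (Finset.mem_range.2 (by simpa using hk)))
  exact Finset.single_le_sum (f := fun b =>
    if cl (k / st.K ^ 0) (b / st.K ^ 0) = cl k l then devQ st s t 0 k b else 0)
    (fun b _ => nn k b) (Finset.mem_range.2 (by simpa using hl))

theorem usub_onto {N K : ℕ} {p : ℕ → ℕ} (H : H1 N K p) {i : ℕ} (hi : i < N) {q : ℝ}
    (hq : q ∈ Icc (xg N i) (xg N (i + 1))) :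
    ∃ x ∈ Icc (xg N (al p i)) (xg N (al p i + K)), usub N p (i + 1) x = q := by
  obtain ⟨s, hs, e⟩ := mem_Icc_lerp (H.xg_le (Nat.le_succ i)) hq
  have hx := H.xg_le (Nat.le_add_right (al p i) K)
  rcases usub_corner H hi with ⟨a1, a2⟩ | ⟨a1, a2⟩
  · refine ⟨_, lerp_mem_Icc hx hs, ?_⟩
    rw [usub_lerp, a1, a2, e]
  · refine ⟨_, lerp_mem_Icc hx (one_sub_mem hs), ?_⟩
    rw [usub_lerp, a1, a2, e]; ring

theorem Setup.cover (st : Setup) {q : ℝ × ℝ} (hq : q ∈ sq) :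
    ∃ i < st.N, ∃ j < st.N, q ∈ st.D i j := by
  have hN := st.hN
  have h1 := st.Hx.Npos
  have e0 : xg st.N 0 = 0 := by simp [xg]
  have e1 : xg st.N (0 + (st.N - 1) + 1) = 1 := by
    rw [show 0 + (st.N - 1) + 1 = st.N by omega]; unfold xg; field_simp
  obtain ⟨i, -, hi, hi'⟩ := cover1 (N := st.N) (x := q.1) 0 (st.N - 1) (by rw [e0, e1]; exact hq.1)
  obtain ⟨j, -, hj, hj'⟩ := cover1 (N := st.N) (x := q.2) 0 (st.N - 1) (by rw [e0, e1]; exact hq.2)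
  exact ⟨i, by omega, j, by omega, hi', hj'⟩

theorem f_eq_h (hZ : ∀ i < st.N, ∀ j < st.N, Zp st i j) : ∀ q ∈ sq, st.f q = st.h q := by
  have hc : IsCompact sq := isCompact_Icc.prod isCompact_Icc
  have hne : sq.Nonempty := ⟨(0, 0), by simp [sq]⟩
  obtain ⟨q, hq, hmax⟩ := hc.exists_isMaxOn hne (st.hfcont.sub st.hhcont).abs
  have hmax' : ∀ p ∈ sq, |st.f p - st.h p| ≤ |st.f q - st.h q| := fun p hp => hmax hp
  suffices h0 : |st.f q - st.h q| = 0 by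
    intro p hp
    have := hmax' p hp
    rw [h0] at this
    exact sub_eq_zero.1 (abs_eq_zero.1 (le_antisymm this (abs_nonneg _)))
  obtain ⟨i, hi, j, hj, hD⟩ := st.cover hq
  obtain ⟨x, hx, ex⟩ := usub_onto st.Hx hi hD.1
  obtain ⟨y, hy, ey⟩ := usub_onto st.Hy hj hD.2
  have hp : (x, y) ∈ st.D' i j := by rw [st.D'_eq hi hj]; exact ⟨hx, hy⟩
  have eU : st.U i j (x, y) = q := Prod.ext ex ey
  have hf := st.feq hi hj hp
  rw [eU] at hf
  rcases hZ i hi j hj with ⟨a, b, c, d⟩ | hz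
  · obtain ⟨s, hs, t, ht, e1, e2⟩ := st.D_blend (st.hSbil' hi hj) hD
    unfold bl at e2
    rw [st.hSval _ (by omega) _ (by omega), st.hSval _ (by omega) _ (by omega),
      st.hSval _ (by omega) _ (by omega), st.hSval _ (by omega) _ (by omega), a, b, c, d] at e2
    rw [hf, e2]; simp
  · have hgh : st.g (i + 1) (j + 1) (x, y) = st.h (x, y) := by
      have hK := st.hK
      obtain ⟨c, c1, c2, c3⟩ := cover1 (N := st.N) (x := x) (al st.px i) (st.K - 1)
        (by rwa [show al st.px i + (st.K - 1) + 1 = al st.px i + st.K by omega])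
      obtain ⟨d, d1, d2, d3⟩ := cover1 (N := st.N) (x := y) (al st.py j) (st.K - 1)
        (by rwa [show al st.py j + (st.K - 1) + 1 = al st.py j + st.K by omega])
      have ax := st.Hx.alK hi
      have ay := st.Hy.alK hj
      have hcN : c < st.N := by omega
      have hdN : d < st.N := by omega
      have hsub : st.D c d ⊆ st.D' i j := by
        rw [st.D_eq]
        exact cell_sub_D' st hi hj ⟨c1, by omega⟩ ⟨d1, by omega⟩
      have hg : IsBilinearOn (st.g (i + 1) (j + 1)) (st.D c d) := by
        obtain ⟨a, b, c, d, h⟩ := st.hgbil' hi hj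
        exact ⟨a, b, c, d, fun p hp => h p (hsub hp)⟩
      have hcx := st.Hx.xg_le (Nat.le_succ c)
      have hdx := st.Hx.xg_le (Nat.le_succ d)
      obtain ⟨s, hs, es⟩ := mem_Icc_lerp hcx c3
      obtain ⟨t, ht, et⟩ := mem_Icc_lerp hdx d3
      have lx := left_mem_Icc.2 hcx
      have rx := right_mem_Icc.2 hcx
      have ly := left_mem_Icc.2 hdx
      have ry := right_mem_Icc.2 hdx
      have mx := lerp_mem_Icc hcx hs
      have my := lerp_mem_Icc hdx ht
      have corner : ∀ p q, p ≤ st.N → q ≤ st.N → (xg st.N p, xg st.N q) ∈ st.D c d →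
          st.g (i + 1) (j + 1) (xg st.N p, xg st.N q) = st.h (xg st.N p, xg st.N q) := by
        intro p q hp hq hm
        rw [← hz p hp q hq (hsub hm), st.hhval p hp q hq]
      rw [es, et]
      have b1 := bil_blend hg lx rx ly ry mx my
      have b2 := bil_blend (st.hhbil' hcN hdN) lx rx ly ry mx my
      refine b1.trans (Eq.trans ?_ b2.symm)
      unfold bl
      simp only [Nat.succ_eq_add_one]
      rw [corner c d (by omega) (by omega) (mk_mem_prod lx ly),
        corner (c + 1) d (by omega) (by omega) (mk_mem_prod rx ly),
        corner c (d + 1) (by omega) (by omega) (mk_mem_prod lx ry),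
        corner (c + 1) (d + 1) (by omega) (by omega) (mk_mem_prod rx ry)]
    rw [hgh] at hf
    have h1 : |st.f q - st.h q| = |st.S q| * |st.f (x, y) - st.h (x, y)| := by
      rw [← abs_mul]; congr 1; linarith
    have h2 := hmax' _ (st.D'_sub_sq hi hj hp)
    have h3 := st.S_lt_one hi hj hD
    have h4 : |st.f q - st.h q| ≤ |st.S q| * |st.f q - st.h q| := by
      nth_rewrite 1 [h1]
      exact mul_le_mul_of_nonneg_left h2 (abs_nonneg _)
    have h5 := abs_nonneg (st.f q - st.h q)
    nlinarith

theorem tot_degen (hZ : ∀ i < st.N, ∀ j < st.N, Zp st i j) :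
    ∃ C : ℝ, 0 ≤ C ∧ ∀ n, Tot st (oscQ st) n ≤ C * (st.K : ℝ) ^ n := by
  have hfh := f_eq_h hZ
  obtain ⟨L, hL0, hL⟩ := lip_unif (st := st) (fun _ _ => st.h) st.D
    (fun i hi j hj => st.hhbil' hi hj) (fun i hi j hj => st.D_sub_sq hi hj)
  refine ⟨L * st.N, by positivity, fun n => ?_⟩
  have : ∀ a ∈ Finset.range (st.K ^ n * st.N), ∀ b ∈ Finset.range (st.K ^ n * st.N),
      oscQ st n a b ≤ L * dl st n := by
    intro a ha b hb
    rw [Finset.mem_range] at ha hb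
    refine Osc_le ⟨_, crn_mem n a b⟩ fun p hp q hq => ?_
    rw [hfh p (cell_sub_sq ha hb hp), hfh q (cell_sub_sq ha hb hq)]
    refine (le_abs_self _).trans ?_
    exact hL _ (par_lt ha) _ (par_lt hb) p (cell_sub_D n a b hp) q (cell_sub_D n a b hq) _
      (c1_dist hp.1 hq.1) (c1_dist hp.2 hq.2)
  refine (Finset.sum_le_sum fun a ha => Finset.sum_le_sum fun b hb => this a ha b hb).trans ?_
  simp only [Finset.sum_const, Finset.card_range, nsmul_eq_mul]
  have h1 := st.Hx.Npos
  have h2 := st.Hx.Kpos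
  apply le_of_eq
  unfold dl; push_cast; field_simp
end degen

/-! ### Box counting -/

section boxes
variable {st : Setup}

/-- `p` lies in the base of the cube with index `k` and `f p` in its height range -/
def Hit (st : Setup) (ε : ℝ) (p : ℝ × ℝ) (k : ℤ × ℤ × ℤ) : Prop :=
  ((k.1 : ℝ) * ε ≤ p.1 ∧ p.1 ≤ ((k.1 : ℝ) + 1) * ε) ∧
  ((k.2.1 : ℝ) * ε ≤ p.2 ∧ p.2 ≤ ((k.2.1 : ℝ) + 1) * ε) ∧
  ((k.2.2 : ℝ) * ε ≤ st.f p ∧ st.f p ≤ ((k.2.2 : ℝ) + 1) * ε)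

/-- the set of cube indices -/
def IS (st : Setup) (ε : ℝ) : Set (ℤ × ℤ × ℤ) :=
  {k : ℤ × ℤ × ℤ | (cube ε k ∩ graphOn st.f sq).Nonempty}

theorem mem_IS {ε : ℝ} {k : ℤ × ℤ × ℤ} : k ∈ IS st ε ↔ ∃ p ∈ sq, Hit st ε p k := by
  unfold IS cube graphOn Hit
  constructor
  · rintro ⟨x, h1, p, hp, rfl⟩
    exact ⟨p, hp, h1.1, h1.2.1, h1.2.2⟩
  · rintro ⟨p, hp, h1, h2, h3⟩
    exact ⟨(p.1, p.2, st.f p), ⟨h1, h2, h3⟩, p, hp, rfl⟩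

theorem floor_hit {ε x : ℝ} (hε : 0 < ε) :
    ((⌊x / ε⌋ : ℤ) : ℝ) * ε ≤ x ∧ x ≤ (((⌊x / ε⌋ : ℤ) : ℝ) + 1) * ε := by
  constructor
  · rw [← le_div_iff₀ hε]; exact Int.floor_le _
  · rw [← div_le_iff₀ hε]; exact (Int.lt_floor_add_one _).le

theorem card_Icc_le {a b : ℤ} {C : ℝ} (hC : 0 ≤ C) (h : (b : ℝ) + 1 - a ≤ C) :
    ((Finset.Icc a b).card : ℝ) ≤ C := by
  rw [Int.card_Icc]
  rcases le_total 0 (b + 1 - a) with h0 | h0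
  · have : (((b + 1 - a).toNat : ℤ) : ℝ) = ((b + 1 - a : ℤ) : ℝ) := by rw [Int.toNat_of_nonneg h0]
    push_cast at this
    rw [this]; exact h
  · rw [Int.toNat_of_nonpos h0]; simpa using hC

theorem exists_c1 (n : ℕ) {x : ℝ} (hx : x ∈ Icc (0 : ℝ) 1) :
    ∃ a < st.K ^ n * st.N, x ∈ c1 st.N st.K n a := by
  have hD := st.Hx.Dpos n
  have hM : 0 < st.K ^ n * st.N := by exact_mod_cast hD
  set M := (st.K : ℝ) ^ n * st.N with hMdef
  have hc : ((st.K ^ n * st.N : ℕ) : ℝ) = M := by push_cast; rfl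
  rcases eq_or_lt_of_le hx.2 with h1 | h1
  · refine ⟨st.K ^ n * st.N - 1, by omega, ?_⟩
    have : ((st.K ^ n * st.N - 1 : ℕ) : ℝ) = M - 1 := by
      rw [Nat.cast_sub hM, hc]; simp
    unfold c1
    rw [this, h1]
    constructor
    · rw [div_le_one hD]; linarith
    · rw [le_div_iff₀ hD]; linarith
  · refine ⟨⌊x * M⌋₊, ?_, ?_⟩
    · rw [Nat.floor_lt (mul_nonneg hx.1 hD.le), hc]
      nlinarith
    · constructor
      · rw [div_le_iff₀ hD]; exact Nat.floor_le (mul_nonneg hx.1 hD.le)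
      · rw [le_div_iff₀ hD]; exact (Nat.lt_floor_add_one _).le

/-- column indices possibly meeting the level-`n` interval -/
def colI (st : Setup) (ε : ℝ) (n a : ℕ) : Finset ℤ :=
  Finset.Icc (⌊((a : ℝ) * dl st n) / ε⌋ - 1) (⌊((a : ℝ) * dl st n) / ε⌋ + 1)

theorem colI_card (ε : ℝ) (n a : ℕ) : (colI st ε n a).card = 3 := by
  unfold colI
  rw [Int.card_Icc]
  omega

theorem mem_colI {ε : ℝ} (hε : 0 < ε) {n a : ℕ} (hδ : dl st n ≤ ε) {x : ℝ}
    (hx : x ∈ c1 st.N st.K n a) {k : ℤ} (h1 : (k : ℝ) * ε ≤ x) (h2 : x ≤ ((k : ℝ) + 1) * ε) :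
    k ∈ colI st ε n a := by
  have hx1 : (a : ℝ) * dl st n ≤ x := by
    have := hx.1; unfold dl; rw [mul_one_div]; exact this
  have hx2 : x ≤ (a : ℝ) * dl st n + dl st n := by
    have := hx.2; unfold dl; rw [mul_one_div, ← add_div]; exact this
  unfold colI
  rw [Finset.mem_Icc]
  constructor
  · have : ((a : ℝ) * dl st n) / ε ≤ ((k + 1 : ℤ) : ℝ) := by
      rw [div_le_iff₀ hε]; push_cast; linarith
    have h3 := (Int.floor_le_floor this).trans_eq (Int.floor_intCast _)
    omega
  · have : ((k - 1 : ℤ) : ℝ) ≤ ((a : ℝ) * dl st n) / ε := by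
      rw [le_div_iff₀ hε]; push_cast; linarith
    have := Int.le_floor.2 this
    omega

/-- height indices -/
def htI (st : Setup) (ε : ℝ) (n a b : ℕ) : Finset ℤ :=
  Finset.Icc (⌈(st.f (crn st n a b) - oscQ st n a b) / ε⌉ - 1)
    ⌊(st.f (crn st n a b) + oscQ st n a b) / ε⌋

theorem htI_card {ε : ℝ} (hε : 0 < ε) {n a b : ℕ} (ha : a < st.K ^ n * st.N)
    (hb : b < st.K ^ n * st.N) : ((htI st ε n a b).card : ℝ) ≤ 2 * oscQ st n a b / ε + 2 := by
  have h0 := oscQ_nonneg ha hb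
  unfold htI
  apply card_Icc_le (by positivity)
  have h1 := Int.floor_le ((st.f (crn st n a b) + oscQ st n a b) / ε)
  have h2 := Int.le_ceil ((st.f (crn st n a b) - oscQ st n a b) / ε)
  have e : 2 * oscQ st n a b / ε = (st.f (crn st n a b) + oscQ st n a b) / ε -
    (st.f (crn st n a b) - oscQ st n a b) / ε := by ring
  push_cast
  linarith

theorem mem_htI {ε : ℝ} (hε : 0 < ε) {n a b : ℕ} (ha : a < st.K ^ n * st.N)
    (hb : b < st.K ^ n * st.N) {p : ℝ × ℝ} (hp : p ∈ cell st.N st.K n a b) {k : ℤ}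
    (h1 : (k : ℝ) * ε ≤ st.f p) (h2 : st.f p ≤ ((k : ℝ) + 1) * ε) : k ∈ htI st ε n a b := by
  have h := abs_le.1 (abs_le_Osc (st := st) (cell_sub_sq ha hb) hp (crn_mem n a b))
  change -(oscQ st n a b) ≤ _ ∧ _ ≤ oscQ st n a b at h
  unfold htI
  rw [Finset.mem_Icc]
  constructor
  · have : ⌈(st.f (crn st n a b) - oscQ st n a b) / ε⌉ ≤ k + 1 := by
      rw [Int.ceil_le, div_le_iff₀ hε]; push_cast; linarith
    omega
  · rw [Int.le_floor, le_div_iff₀ hε]; linarith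

/-- the finite set of candidate cubes -/
def bigF (st : Setup) (ε : ℝ) (n : ℕ) : Finset (ℤ × ℤ × ℤ) :=
  (Finset.range (st.K ^ n * st.N)).biUnion fun a => (Finset.range (st.K ^ n * st.N)).biUnion fun b =>
    colI st ε n a ×ˢ colI st ε n b ×ˢ htI st ε n a b

theorem IS_sub {ε : ℝ} (hε : 0 < ε) {n : ℕ} (hδ : dl st n ≤ ε) :
    IS st ε ⊆ (bigF st ε n : Set (ℤ × ℤ × ℤ)) := by
  intro k hk
  obtain ⟨p, hp, h1, h2, h3⟩ := mem_IS.1 hk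
  obtain ⟨a, ha, hxa⟩ := exists_c1 (st := st) n hp.1
  obtain ⟨b, hb, hyb⟩ := exists_c1 (st := st) n hp.2
  rw [Finset.mem_coe]
  unfold bigF
  simp only [Finset.mem_biUnion, Finset.mem_range, Finset.mem_product]
  exact ⟨a, ha, b, hb, mem_colI hε hδ hxa h1.1 h1.2, mem_colI hε hδ hyb h2.1 h2.2,
    mem_htI hε ha hb (mk_mem_prod hxa hyb) h3.1 h3.2⟩

theorem bigF_card {ε : ℝ} (hε : 0 < ε) (n : ℕ) :
    ((bigF st ε n).card : ℝ) ≤ 18 * Tot st (oscQ st) n / ε + 18 * ((st.K : ℝ) ^ n * st.N) ^ 2 := by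
  have h1 : ((bigF st ε n).card : ℝ) ≤ ∑ a ∈ Finset.range (st.K ^ n * st.N),
      ∑ b ∈ Finset.range (st.K ^ n * st.N), (18 * oscQ st n a b / ε + 18) := by
    unfold bigF
    refine (Nat.cast_le.2 Finset.card_biUnion_le).trans ?_
    rw [Nat.cast_sum]
    refine Finset.sum_le_sum fun a ha => ?_
    refine (Nat.cast_le.2 Finset.card_biUnion_le).trans ?_
    rw [Nat.cast_sum]
    refine Finset.sum_le_sum fun b hb => ?_
    rw [Finset.card_product, Finset.card_product, colI_card, colI_card]
    have := htI_card (st := st) hε (Finset.mem_range.1 ha) (Finset.mem_range.1 hb)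
    push_cast
    have e : 18 * oscQ st n a b / ε + 18 = 9 * (2 * oscQ st n a b / ε + 2) := by ring
    rw [e]; linarith
  refine h1.trans (le_of_eq ?_)
  simp only [Finset.sum_add_distrib, Finset.sum_const, Finset.card_range, nsmul_eq_mul]
  unfold Tot
  simp only [Finset.mul_sum, Finset.sum_div]
  push_cast
  ring

theorem exists_dl_le {ε : ℝ} (hε : 0 < ε) : ∃ n, dl st n ≤ ε := by
  have hK : (1 : ℝ) < st.K := by exact_mod_cast (by have := st.hK; omega)
  have hN := st.Hx.Npos
  obtain ⟨n, hn⟩ := pow_unbounded_of_one_lt (1 / (ε * st.N)) hK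
  refine ⟨n, ?_⟩
  unfold dl
  rw [div_le_iff₀ (st.Hx.Dpos n)]
  rw [div_lt_iff₀ (by positivity)] at hn
  linarith

theorem IS_finite {ε : ℝ} (hε : 0 < ε) : (IS st ε).Finite := by
  obtain ⟨n, hn⟩ := exists_dl_le (st := st) hε
  exact (Finset.finite_toSet _).subset (IS_sub hε hn)

theorem Ncubes_upper {ε : ℝ} (hε : 0 < ε) {n : ℕ} (hδ : dl st n ≤ ε) :
    (Ncubes (graphOn st.f sq) ε : ℝ) ≤
      18 * Tot st (oscQ st) n / ε + 18 * ((st.K : ℝ) ^ n * st.N) ^ 2 := by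
  refine le_trans ?_ (bigF_card hε n)
  have := Set.ncard_le_ncard (IS_sub (st := st) hε hδ) (Finset.finite_toSet _)
  rw [Set.ncard_coe_finset] at this
  exact Nat.cast_le.2 this

theorem Ncubes_lower_two {ε : ℝ} (hε : 0 < ε) :
    ε ^ (-2 : ℝ) ≤ (Ncubes (graphOn st.f sq) ε : ℝ) := by
  set L := ⌊1 / ε⌋₊ + 1 with hL
  have hL1 : 1 / ε ≤ L := by rw [hL]; push_cast; exact (Nat.lt_floor_add_one _).le
  have hpt : ∀ i < L, (i : ℝ) * ε ∈ Icc (0 : ℝ) 1 := by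
    intro i hi
    refine ⟨by positivity, ?_⟩
    rw [← le_div_iff₀ hε]
    have : i ≤ ⌊1 / ε⌋₊ := by omega
    exact (Nat.cast_le.2 this).trans (Nat.floor_le (by positivity))
  have h1 : (Finset.range L ×ˢ Finset.range L).card ≤ (IS_finite (st := st) hε).toFinset.card := by
    refine Finset.card_le_card_of_injOn
      (fun ij => ((ij.1 : ℤ), (ij.2 : ℤ), ⌊st.f ((ij.1 : ℝ) * ε, (ij.2 : ℝ) * ε) / ε⌋)) ?_ ?_
    · intro ij hij
      simp only [Finset.coe_product, Set.mem_prod, Finset.mem_coe, Finset.mem_range] at hij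
      simp only [Finset.mem_coe, Set.Finite.mem_toFinset]
      rw [mem_IS]
      refine ⟨((ij.1 : ℝ) * ε, (ij.2 : ℝ) * ε), ⟨hpt _ hij.1, hpt _ hij.2⟩, ?_, ?_, floor_hit hε⟩
      · push_cast; constructor <;> nlinarith
      · push_cast; constructor <;> nlinarith
    · intro x _ y _ hxy
      simp only [Prod.mk.injEq, Nat.cast_inj] at hxy
      exact Prod.ext hxy.1 hxy.2.1
  rw [Finset.card_product, Finset.card_range, ← Set.ncard_eq_toFinset_card _ (IS_finite (st := st) hε)] at h1
  have h2 : ((L * L : ℕ) : ℝ) ≤ (Ncubes (graphOn st.f sq) ε : ℝ) := Nat.cast_le.2 h1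
  refine le_trans ?_ h2
  have e : ε ^ (-2 : ℝ) = (1 / ε) * (1 / ε) := by
    rw [show (-2 : ℝ) = -((2 : ℕ) : ℝ) by norm_num, Real.rpow_neg hε.le, Real.rpow_natCast]
    field_simp
  rw [e]
  push_cast
  have : 0 < 1 / ε := by positivity
  nlinarith

open Classical in
/-- cubes hit over a given cell -/
def TI (st : Setup) (ε : ℝ) (hε : 0 < ε) (n a b : ℕ) : Finset (ℤ × ℤ × ℤ) :=
  (IS_finite (st := st) hε).toFinset.filter fun k => ∃ p ∈ cell st.N st.K n a b, Hit st ε p k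

theorem TI_card {ε : ℝ} (hε : 0 < ε) {n a b : ℕ} (ha : a < st.K ^ n * st.N)
    (hb : b < st.K ^ n * st.N) : oscQ st n a b ≤ ε * (TI st ε hε n a b).card := by
  classical
  have hsub := cell_sub_sq (st := st) (n := n) ha hb
  refine Osc_le ⟨_, crn_mem n a b⟩ fun p hp q hq => ?_
  rcases le_or_gt (st.f p) (st.f q) with hpq | hpq
  · have : (0 : ℝ) ≤ ε * (TI st ε hε n a b).card := by positivity
    linarith
  have hpre : IsPreconnected (cell st.N st.K n a b) := isPreconnected_Icc.prod isPreconnected_Icc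
  have hivt := hpre.intermediate_value hq hp (st.hfcont.mono hsub)
  have hex : ∀ j : ℤ, ∃ r, j ∈ Finset.Icc ⌊st.f q / ε⌋ ⌊st.f p / ε⌋ →
      r ∈ cell st.N st.K n a b ∧ (j : ℝ) * ε ≤ st.f r ∧ st.f r ≤ ((j : ℝ) + 1) * ε := by
    intro j
    by_cases hj : j ∈ Finset.Icc ⌊st.f q / ε⌋ ⌊st.f p / ε⌋
    · rw [Finset.mem_Icc] at hj
      have j1 : (j : ℝ) * ε ≤ st.f p := by
        rw [← le_div_iff₀ hε]; exact Int.le_floor.1 hj.2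
      have j2 : st.f q ≤ ((j : ℝ) + 1) * ε := by
        rw [← div_le_iff₀ hε]
        have : ((⌊st.f q / ε⌋ : ℤ) : ℝ) ≤ j := by exact_mod_cast hj.1
        linarith [Int.lt_floor_add_one (st.f q / ε)]
      obtain ⟨r, hr, e⟩ := hivt (show max (st.f q) ((j : ℝ) * ε) ∈ Icc (st.f q) (st.f p) from
        ⟨le_max_left _ _, max_le hpq.le j1⟩)
      refine ⟨r, fun _ => ⟨hr, ?_, ?_⟩⟩
      · rw [e]; exact le_max_right _ _
      · rw [e]; exact max_le j2 (by nlinarith)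
    · exact ⟨q, fun h => absurd h hj⟩
  choose r hr using hex
  have h1 : (Finset.Icc ⌊st.f q / ε⌋ ⌊st.f p / ε⌋).card ≤ (TI st ε hε n a b).card := by
    refine Finset.card_le_card_of_injOn (fun j => (⌊(r j).1 / ε⌋, ⌊(r j).2 / ε⌋, j)) ?_ ?_
    · intro j hj
      obtain ⟨c1, c2⟩ := hr j hj
      have hh : Hit st ε (r j) (⌊(r j).1 / ε⌋, ⌊(r j).2 / ε⌋, j) :=
        ⟨floor_hit hε, floor_hit hε, c2⟩
      simp only [TI, Finset.coe_filter, Set.Finite.mem_toFinset]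
      exact ⟨mem_IS.2 ⟨_, hsub c1, hh⟩, _, c1, hh⟩
    · intro x _ y _ hxy
      simp only [Prod.mk.injEq] at hxy
      exact hxy.2.2
  have h2 : (st.f p - st.f q) / ε ≤ ((Finset.Icc ⌊st.f q / ε⌋ ⌊st.f p / ε⌋).card : ℝ) := by
    rw [Int.card_Icc]
    have h3 : ⌊st.f q / ε⌋ ≤ ⌊st.f p / ε⌋ := Int.floor_le_floor (by gcongr)
    have : (((⌊st.f p / ε⌋ + 1 - ⌊st.f q / ε⌋).toNat : ℤ) : ℝ) =
        ((⌊st.f p / ε⌋ + 1 - ⌊st.f q / ε⌋ : ℤ) : ℝ) := by rw [Int.toNat_of_nonneg (by omega)]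
    push_cast at this
    rw [this, sub_div]
    linarith [Int.lt_floor_add_one (st.f p / ε), Int.floor_le (st.f q / ε)]
  rw [div_le_iff₀ hε] at h2
  have : ((Finset.Icc ⌊st.f q / ε⌋ ⌊st.f p / ε⌋).card : ℝ) ≤ (TI st ε hε n a b).card := by
    exact_mod_cast h1
  nlinarith

open Classical in
/-- level-`n` columns met by a grid interval -/
def colN (st : Setup) (ε : ℝ) (n : ℕ) (k : ℤ) : Finset ℕ :=
  (Finset.range (st.K ^ n * st.N)).filter fun a =>
    ∃ x ∈ c1 st.N st.K n a, (k : ℝ) * ε ≤ x ∧ x ≤ ((k : ℝ) + 1) * ε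

theorem colN_card {ε : ℝ} {n : ℕ} (hδ : ε ≤ st.K * dl st n) (hε : 0 < ε) (k : ℤ) :
    (colN st ε n k).card ≤ st.K + 3 := by
  have hd := dl_pos (st := st) n
  have h1 : (colN st ε n k).card ≤
      (Finset.Icc (⌈(k : ℝ) * ε / dl st n⌉ - 1) ⌊((k : ℝ) + 1) * ε / dl st n⌋).card := by
    refine Finset.card_le_card_of_injOn (fun a => (a : ℤ)) ?_ (fun x _ y _ h => by simpa using h)
    intro a ha
    simp only [colN, Finset.coe_filter] at ha
    obtain ⟨-, x, hx, h1, h2⟩ := ha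
    have hx1 : (a : ℝ) * dl st n ≤ x := by
      have := hx.1; unfold dl; rw [mul_one_div]; exact this
    have hx2 : x ≤ (a : ℝ) * dl st n + dl st n := by
      have := hx.2; unfold dl; rw [mul_one_div, ← add_div]; exact this
    rw [Finset.mem_coe, Finset.mem_Icc]
    beta_reduce
    constructor
    · have : ⌈(k : ℝ) * ε / dl st n⌉ ≤ (a : ℤ) + 1 := by
        rw [Int.ceil_le, div_le_iff₀ hd]; push_cast; linarith
      omega
    · rw [Int.le_floor, le_div_iff₀ hd]; push_cast; linarith
  have h2 : ((Finset.Icc (⌈(k : ℝ) * ε / dl st n⌉ - 1) ⌊((k : ℝ) + 1) * ε / dl st n⌋).card : ℝ) ≤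
      st.K + 3 := by
    apply card_Icc_le (by positivity)
    have a1 := Int.floor_le (((k : ℝ) + 1) * ε / dl st n)
    have a2 := Int.le_ceil ((k : ℝ) * ε / dl st n)
    have a3 : ε / dl st n ≤ st.K := by rw [div_le_iff₀ hd]; exact hδ
    have e : ((k : ℝ) + 1) * ε / dl st n = (k : ℝ) * ε / dl st n + ε / dl st n := by ring
    push_cast
    linarith
  have h3 : (Finset.Icc (⌈(k : ℝ) * ε / dl st n⌉ - 1) ⌊((k : ℝ) + 1) * ε / dl st n⌋).card ≤
      st.K + 3 := by exact_mod_cast h2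
  omega

theorem Ncubes_lower {ε : ℝ} (hε : 0 < ε) {n : ℕ} (hδ : ε ≤ st.K * dl st n) :
    Tot st (oscQ st) n ≤ ε * (((st.K : ℝ) + 3) ^ 2 * (Ncubes (graphOn st.f sq) ε : ℝ)) := by
  classical
  set R := Finset.range (st.K ^ n * st.N) with hR
  set I := (IS_finite (st := st) hε).toFinset with hI
  have hN : Ncubes (graphOn st.f sq) ε = I.card := Set.ncard_eq_toFinset_card _ _
  have h1 : Tot st (oscQ st) n ≤ ∑ ab ∈ R ×ˢ R, ε * ((TI st ε hε n ab.1 ab.2).card : ℝ) := by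
    rw [Finset.sum_product]
    exact Finset.sum_le_sum fun a ha => Finset.sum_le_sum fun b hb =>
      TI_card hε (Finset.mem_range.1 ha) (Finset.mem_range.1 hb)
  have h2 := Finset.sum_card_bipartiteAbove_eq_sum_card_bipartiteBelow
    (fun (ab : ℕ × ℕ) k => ∃ p ∈ cell st.N st.K n ab.1 ab.2, Hit st ε p k) (s := R ×ˢ R) (t := I)
  have h3 : ∑ ab ∈ R ×ˢ R, (TI st ε hε n ab.1 ab.2).card ≤ I.card * (st.K + 3) ^ 2 := by
    have e : ∀ ab : ℕ × ℕ, TI st ε hε n ab.1 ab.2 = Finset.bipartiteAbove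
      (fun (ab : ℕ × ℕ) k => ∃ p ∈ cell st.N st.K n ab.1 ab.2, Hit st ε p k) I ab := by
      intro ab
      unfold TI Finset.bipartiteAbove
      congr
    rw [Finset.sum_congr rfl fun ab _ => congrArg Finset.card (e ab), h2]
    refine (Finset.sum_le_card_nsmul _ _ ((st.K + 3) ^ 2) fun k _ => ?_).trans (by simp)
    refine (Finset.card_le_card (t := colN st ε n k.1 ×ˢ colN st ε n k.2.1) ?_).trans ?_
    · intro ab hab
      simp only [Finset.bipartiteBelow, Finset.mem_filter, Finset.mem_product] at hab
      obtain ⟨⟨ha, hb⟩, p, hp, g1, g2, g3⟩ := hab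
      simp only [Finset.mem_product, colN, Finset.mem_filter]
      exact ⟨⟨ha, p.1, hp.1, g1⟩, ⟨hb, p.2, hp.2, g2⟩⟩
    · rw [Finset.card_product, pow_two]
      exact Nat.mul_le_mul (colN_card hδ hε _) (colN_card hδ hε _)
  rw [hN]
  refine h1.trans ?_
  rw [← Finset.mul_sum]
  have h4 : ((∑ ab ∈ R ×ˢ R, (TI st ε hε n ab.1 ab.2).card : ℕ) : ℝ) ≤
    ((I.card * (st.K + 3) ^ 2 : ℕ) : ℝ) := Nat.cast_le.2 h3
  push_cast at h4
  refine mul_le_mul_of_nonneg_left ?_ hε.le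
  linarith

end boxes

/-! ### The final limit -/

section final
variable {st : Setup}

theorem dim_lim {E : Set (ℝ × ℝ × ℝ)} {d : ℝ}
    (hup : ∀ d' > d, ∃ C > 0, ∀ᶠ ε in nhdsWithin (0 : ℝ) (Ioi 0), (Ncubes E ε : ℝ) ≤ C * ε ^ (-d'))
    (hlow : ∃ c > 0, ∀ᶠ ε in nhdsWithin (0 : ℝ) (Ioi 0), c * ε ^ (-d) ≤ (Ncubes E ε : ℝ)) :
    HasBoxDim E d := by
  have hL : Tendsto (fun ε : ℝ => Real.log (1 / ε)) (nhdsWithin (0 : ℝ) (Ioi 0)) atTop := by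
    simp only [one_div]
    exact Real.tendsto_log_atTop.comp tendsto_inv_nhdsGT_zero
  have hdiv : ∀ x y : ℝ, Tendsto (fun ε : ℝ => x / Real.log (1 / ε) + y)
      (nhdsWithin (0 : ℝ) (Ioi 0)) (nhds y) := by
    intro x y
    simpa using (hL.const_div_atTop x).add_const y
  have hlogp : ∀ {c ε e : ℝ}, 0 < c → 0 < ε →
      Real.log (c * ε ^ (-e)) = Real.log c + e * Real.log (1 / ε) := by
    intro c ε e hc hε
    rw [Real.log_mul hc.ne' (Real.rpow_pos_of_pos hε _).ne', Real.log_rpow hε, one_div, Real.log_inv]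
    ring
  obtain ⟨c, hc, hlow⟩ := hlow
  have hpos : ∀ᶠ ε in nhdsWithin (0 : ℝ) (Ioi 0), 0 < ε := self_mem_nhdsWithin
  unfold HasBoxDim
  rw [tendsto_order]
  constructor
  · intro a ha
    filter_upwards [hlow, hpos, hL.eventually_gt_atTop 0, (hdiv (Real.log c) d).eventually_const_lt ha]
      with ε h1 h2 h3 h4
    refine h4.trans_le ?_
    have hp : 0 < c * ε ^ (-d) := mul_pos hc (Real.rpow_pos_of_pos h2 _)
    have := Real.log_le_log hp h1
    rw [hlogp hc h2] at this
    unfold boxRatio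
    rw [le_div_iff₀ h3, add_mul, div_mul_cancel₀ _ h3.ne']
    exact this
  · intro b hb
    obtain ⟨C, hC, hup⟩ := hup ((d + b) / 2) (by linarith)
    filter_upwards [hup, hlow, hpos, hL.eventually_gt_atTop 0,
      (hdiv (Real.log C) ((d + b) / 2)).eventually_lt_const (by linarith : (d + b) / 2 < b)]
      with ε h0 h1 h2 h3 h4
    refine lt_of_le_of_lt ?_ h4
    have hp : 0 < c * ε ^ (-d) := mul_pos hc (Real.rpow_pos_of_pos h2 _)
    have := Real.log_le_log (hp.trans_le h1) h0
    rw [hlogp hC h2] at this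
    unfold boxRatio
    rw [div_le_iff₀ h3, add_mul, div_mul_cancel₀ _ h3.ne']
    exact this

theorem Kgt (st : Setup) : (1 : ℝ) < st.K := by exact_mod_cast (by have := st.hK; omega)

theorem exists_lvl {ε : ℝ} (hε : 0 < ε) (h1 : ε ≤ 1 / st.N) :
    ∃ n : ℕ, (st.K : ℝ) ^ n ≤ 1 / (ε * st.N) ∧ 1 / (ε * st.N) < (st.K : ℝ) ^ (n + 1) ∧
      dl st (n + 1) ≤ ε ∧ ε ≤ st.K * dl st (n + 1) := by
  have hN := st.Hx.Npos
  have hK := Kgt st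
  have hx : 1 ≤ 1 / (ε * st.N) := by
    rw [le_div_iff₀ (by positivity)]
    rw [le_div_iff₀ hN] at h1
    linarith
  obtain ⟨n, a1, a2⟩ := exists_nat_pow_near hx hK
  refine ⟨n, a1, a2, ?_, ?_⟩
  · unfold dl
    rw [div_le_iff₀ (st.Hx.Dpos _)]
    rw [div_lt_iff₀ (by positivity)] at a2
    linarith
  · unfold dl
    rw [le_div_iff₀ (by positivity)] at a1
    rw [mul_one_div, le_div_iff₀ (st.Hx.Dpos _), pow_succ]
    nlinarith

theorem small_ev (st : Setup) : ∀ᶠ ε in nhdsWithin (0 : ℝ) (Ioi 0), 0 < ε ∧ ε ≤ 1 / (st.N : ℝ) ∧ ε ≤ 1 := by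
  have hN := st.Hx.Npos
  have h1 : ∀ᶠ ε in nhdsWithin (0 : ℝ) (Ioi 0), ε ∈ Ioo (0 : ℝ) (min (1 / (st.N : ℝ)) 1) :=
    Ioo_mem_nhdsGT (lt_min (by positivity) one_pos)
  filter_upwards [h1] with ε h
  exact ⟨h.1, h.2.le.trans (min_le_left _ _), h.2.le.trans (min_le_right _ _)⟩

theorem upper_ev {Θ : ℝ} (hΘ : (st.K : ℝ) ≤ Θ)
    (hT : ∀ θ > Θ, ∃ C, 0 ≤ C ∧ ∀ n, Tot st (oscQ st) n ≤ C * θ ^ n) :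
    ∀ d' > 1 + Real.log Θ / Real.log st.K, ∃ C > 0, ∀ᶠ ε in nhdsWithin (0 : ℝ) (Ioi 0),
      (Ncubes (graphOn st.f sq) ε : ℝ) ≤ C * ε ^ (-d') := by
  intro d' hd'
  have hK := Kgt st
  have hN := st.Hx.Npos
  have hN1 : (1 : ℝ) ≤ st.N := by exact_mod_cast (by have := st.hN; omega)
  have hK0 : (0 : ℝ) < st.K := by linarith
  have hΘ0 : 0 < Θ := by linarith
  have hlK : 0 < Real.log st.K := Real.log_pos hK
  have hlog1 : 1 ≤ Real.log Θ / Real.log st.K := by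
    rw [le_div_iff₀ hlK, one_mul]; exact Real.log_le_log hK0 hΘ
  set θ : ℝ := (st.K : ℝ) ^ (d' - 1) with hθ
  have hθΘ : Θ < θ := by
    have : Real.log Θ < Real.log θ := by
      rw [hθ, Real.log_rpow hK0, ← div_lt_iff₀ hlK]; linarith
    exact (Real.log_lt_log_iff hΘ0 (Real.rpow_pos_of_pos hK0 _)).1 this
  obtain ⟨C, hC, hT⟩ := hT θ hθΘ
  have hθ0 : 0 < θ := hΘ0.trans hθΘ
  refine ⟨18 * (C * θ) + 18 * (st.K : ℝ) ^ 2, by positivity, ?_⟩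
  filter_upwards [small_ev st] with ε ⟨hε, hεN, hε1⟩
  obtain ⟨n, a1, a2, a3, a4⟩ := exists_lvl hε hεN
  refine (Ncubes_upper hε a3).trans ?_
  have b1 : θ ^ n ≤ ε ^ (-(d' - 1)) := by
    have e : θ ^ n = ((st.K : ℝ) ^ n) ^ (d' - 1) := by
      rw [hθ, ← Real.rpow_mul_natCast hK0.le, ← Real.rpow_natCast_mul hK0.le, mul_comm]
    rw [e, Real.rpow_neg hε.le, ← Real.inv_rpow hε.le]
    apply Real.rpow_le_rpow (by positivity) _ (by linarith)
    refine a1.trans ?_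
    rw [← one_div]
    apply one_div_le_one_div_of_le hε
    nlinarith
  have b2 : ε ^ (-d') = ε ^ (-(d' - 1)) / ε := by
    rw [← Real.rpow_sub_one hε.ne']; congr 1; ring
  have b3 : 18 * Tot st (oscQ st) (n + 1) / ε ≤ 18 * (C * θ) * ε ^ (-d') := by
    rw [b2, ← mul_div_assoc]
    apply div_le_div_of_nonneg_right _ hε.le
    have h1 := hT (n + 1)
    have h2 : C * θ ^ (n + 1) ≤ C * θ * ε ^ (-(d' - 1)) := by
      rw [pow_succ, mul_assoc, mul_comm (θ ^ n)]
      gcongr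
    linarith
  have b4 : ((st.K : ℝ) ^ (n + 1) * st.N) ^ 2 ≤ (st.K : ℝ) ^ 2 * ε ^ (-d') := by
    have h1 : (st.K : ℝ) ^ (n + 1) * st.N ≤ st.K * ε⁻¹ := by
      rw [le_div_iff₀ (by positivity)] at a1
      rw [← div_eq_mul_inv, le_div_iff₀ hε, pow_succ]
      nlinarith
    have h2 : ε⁻¹ ^ 2 ≤ ε ^ (-d') := by
      rw [Real.rpow_neg hε.le, ← Real.inv_rpow hε.le, ← Real.rpow_natCast]
      apply Real.rpow_le_rpow_of_exponent_le (one_le_inv₀ hε |>.2 hε1)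
      push_cast; linarith
    calc ((st.K : ℝ) ^ (n + 1) * st.N) ^ 2 ≤ (st.K * ε⁻¹) ^ 2 := by gcongr
      _ = (st.K : ℝ) ^ 2 * ε⁻¹ ^ 2 := by ring
      _ ≤ _ := by gcongr
  linarith

theorem lower_ev {ρ : ℝ} (hρ : (st.K : ℝ) < ρ)
    (hT : ∃ c > 0, ∀ n, c * ρ ^ n ≤ Tot st (oscQ st) n) :
    ∃ c > 0, ∀ᶠ ε in nhdsWithin (0 : ℝ) (Ioi 0),
      c * ε ^ (-(1 + Real.log ρ / Real.log st.K)) ≤ (Ncubes (graphOn st.f sq) ε : ℝ) := by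
  obtain ⟨c, hc, hT⟩ := hT
  have hK := Kgt st
  have hN := st.Hx.Npos
  have hK0 : (0 : ℝ) < st.K := by linarith
  have hρ0 : 0 < ρ := by linarith
  have hlK : 0 < Real.log st.K := Real.log_pos hK
  set e := Real.log ρ / Real.log st.K with he
  have he0 : 0 ≤ e := div_nonneg (Real.log_nonneg (by linarith)) hlK.le
  have hKe : (st.K : ℝ) ^ e = ρ := by
    rw [Real.rpow_def_of_pos hK0, he, mul_div_cancel₀ _ hlK.ne', Real.exp_log hρ0]
  have hNe : 0 < (1 / (st.N : ℝ)) ^ e := Real.rpow_pos_of_pos (by positivity) _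
  refine ⟨c * (1 / (st.N : ℝ)) ^ e / ((st.K : ℝ) + 3) ^ 2, by positivity, ?_⟩
  filter_upwards [small_ev st] with ε ⟨hε, hεN, hε1⟩
  obtain ⟨n, a1, a2, a3, a4⟩ := exists_lvl hε hεN
  have h1 := (hT (n + 1)).trans (Ncubes_lower hε a4)
  have h2 : (1 / (st.N : ℝ)) ^ e * ε ^ (-e) ≤ ρ ^ (n + 1) := by
    have e1 : ρ ^ (n + 1) = ((st.K : ℝ) ^ (n + 1)) ^ e := by
      rw [← hKe, ← Real.rpow_mul_natCast hK0.le, ← Real.rpow_natCast_mul hK0.le, mul_comm]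
    rw [e1, Real.rpow_neg hε.le, ← Real.inv_rpow hε.le,
      ← Real.mul_rpow (by positivity) (by positivity)]
    apply Real.rpow_le_rpow (by positivity) _ he0
    refine le_trans (le_of_eq ?_) a2.le
    field_simp
  have b2 : ε ^ (-(1 + e)) = ε ^ (-e) / ε := by
    rw [← Real.rpow_sub_one hε.ne']; congr 1; ring
  rw [b2, div_mul_div_comm, div_le_iff₀ (by positivity)]
  calc c * (1 / (st.N : ℝ)) ^ e * ε ^ (-e) = c * ((1 / (st.N : ℝ)) ^ e * ε ^ (-e)) := by ring
    _ ≤ c * ρ ^ (n + 1) := by gcongr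
    _ ≤ _ := h1
    _ = _ := by ring

theorem core_of {m : ℕ} {B : Fin m → Set (ℝ × ℝ)}
    {γ : Fin m → Fin m → ℝ} (hpart : IsPartition m B) (hcomp : IsCompatible st B)
    (hsteady : Steady st) (hus : HasUniformSums st B γ) (hγ0 : GammaZero st B γ) :
    ∃ cl, Core st γ cl := by
  obtain ⟨cl, hcl⟩ := exists_cl st hpart hcomp
  refine ⟨cl, hsteady, ?_, fun r t => gamma_nonneg st hus hγ0 r t⟩
  intro r c hc d hd p hp
  have := key_sum st hcomp hsteady hus hγ0 hcl r hc hd hp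
  convert this using 2
  ext ij
  simp [prs]

theorem final_thm (st : Setup) (m : ℕ) (B : Fin m → Set (ℝ × ℝ))
    (γ : Fin m → Fin m → ℝ) (hpart : IsPartition m B) (hcomp : IsCompatible st B)
    (hsteady : Steady st) (hus : HasUniformSums st B γ) (hγ0 : GammaZero st B γ)
    (hirr : ∀ r t : Fin m, IsPathFrom γ t r) :
    (((∃ i j, 1 ≤ i ∧ i ≤ st.N ∧ 1 ≤ j ∧ j ≤ st.N ∧ ¬ DegenPair st i j) ∧
        (st.K : ℝ) < specRad (Matrix.of γ)) →
      HasBoxDim (graphOn st.f sq)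
        (1 + Real.log (specRad (Matrix.of γ)) / Real.log (st.K : ℝ))) ∧
    (¬ ((∃ i j, 1 ≤ i ∧ i ≤ st.N ∧ 1 ≤ j ∧ j ≤ st.N ∧ ¬ DegenPair st i j) ∧
        (st.K : ℝ) < specRad (Matrix.of γ)) →
      HasBoxDim (graphOn st.f sq) 2) := by
  obtain ⟨cl, hC⟩ := core_of hpart hcomp hsteady hus hγ0
  have hK := Kgt st
  constructor
  · rintro ⟨⟨i, j, hi, hi', hj, hj', hnd⟩, hρ⟩
    refine dim_lim (upper_ev hρ.le fun θ hθ => tot_upper hC (hρ.trans hθ) hθ) (lower_ev hρ ?_)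
    obtain ⟨k, hk, l, hl, hZ⟩ := exists_not_Zp hi hi' hj hj' hnd
    obtain ⟨s, hs, t, ht, h0⟩ := W0_pos hsteady cl hk hl hZ
    exact tot_lower hC hirr (by linarith) hs ht h0
  · intro hneg
    have hlK : Real.log (st.K : ℝ) ≠ 0 := (Real.log_pos hK).ne'
    have e2 : (2 : ℝ) = 1 + Real.log (st.K : ℝ) / Real.log (st.K : ℝ) := by
      rw [div_self hlK]; norm_num
    refine dim_lim ?_ ⟨1, one_pos, ?_⟩
    · rw [e2]
      refine upper_ev le_rfl fun θ hθ => ?_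
      by_cases hd : ∃ i j, 1 ≤ i ∧ i ≤ st.N ∧ 1 ≤ j ∧ j ≤ st.N ∧ ¬ DegenPair st i j
      · have hρ : ¬ (st.K : ℝ) < specRad (Matrix.of γ) := fun h => hneg ⟨hd, h⟩
        exact tot_upper hC hθ (lt_of_le_of_lt (not_lt.1 hρ) hθ)
      · push Not at hd
        obtain ⟨C, hC0, hT⟩ := tot_degen (st := st) fun i hi j hj =>
          Zp_of_degen (hd (i + 1) (j + 1) (by omega) (by omega) (by omega) (by omega))
        refine ⟨C, hC0, fun n => (hT n).trans ?_⟩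
        have : (st.K : ℝ) ^ n ≤ θ ^ n := pow_le_pow_left₀ (by linarith) hθ.le n
        gcongr
    · filter_upwards [small_ev st] with ε hε
      rw [one_mul]
      exact Ncubes_lower_two hε.1

end final

end RFIS

open RFIS in
/-- **Corollary 4.11.**  Assume steadiness and uniform sums `γ_{rt}` under a compatible
partition (`γ_{rt} = 0` when `Λ_r ∩ Λ'_t = ∅`), and that the matrix `G = (γ_{rt})` is
irreducible (equivalently, `{1,…,m}` is connected: there is a path between any two
indices).  Then (1) if `{1,…,m}` is non-degenerate and `ρ(G) > K`, the box dimension of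
`Γ f` exists and equals `1 + log ρ(G) / log K`; (2) otherwise it exists and equals `2`. -/
theorem boxDim_bilinear_RFIS_irreducible (st : Setup) (m : ℕ) (B : Fin m → Set (ℝ × ℝ))
    (γ : Fin m → Fin m → ℝ) (hpart : IsPartition m B) (hcomp : IsCompatible st B)
    (hsteady : Steady st) (hus : HasUniformSums st B γ) (hγ0 : GammaZero st B γ)
    (hirr : ∀ r t : Fin m, IsPathFrom γ t r) :
    (((∃ i j, 1 ≤ i ∧ i ≤ st.N ∧ 1 ≤ j ∧ j ≤ st.N ∧ ¬ DegenPair st i j) ∧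
        (st.K : ℝ) < specRad (Matrix.of γ)) →
      HasBoxDim (graphOn st.f sq)
        (1 + Real.log (specRad (Matrix.of γ)) / Real.log (st.K : ℝ))) ∧
    (¬ ((∃ i j, 1 ≤ i ∧ i ≤ st.N ∧ 1 ≤ j ∧ j ≤ st.N ∧ ¬ DegenPair st i j) ∧
        (st.K : ℝ) < specRad (Matrix.of γ)) →
      HasBoxDim (graphOn st.f sq) 2) := by
  exact final_thm st m B γ hpart hcomp hsteady hus hγ0 hirr
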